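/- arXiv:2506.04187 — 7 statements merged into one kernel-verified Lean document; each statement's English description precedes it below -/
import Mathlib

section
/- Let γ∈ℝ and 0 < δ ≤ 1/4. There is an absolute constant C > 0 with the following property. Let q∈ℕ and let A, B be positive integers with gcd(A,B)=1, 1 ≤ B ≤ q^{1/2}, and |γ − A/B| < 1/(q^{1/2}·B); set S(q) = {a ∈ {0,1,…,q−1} : gcd(aB+A, q) = 1}. For r∈ℕ put N_δ(q,r) = #{(a,b) ∈ S(q) × {0,…,r−1} : |(a+γ)r − (b+γ)q| < gcd(q,r)^δ}. Then for every divisor d of q, ∑_{r<q, gcd(q,r)=d} N_δ(q,r) ≤ C·(q·d^{−1/4} + d). -/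
/-- naturals in one residue class mod `B` with bounded spread -/
lemma card_class_le (K : Finset ℕ) (B : ℕ) (hB : 0 < B) (L : ℝ) (hL : 0 ≤ L)
    (hc : ∀ x ∈ K, ∀ y ∈ K, x ≡ y [MOD B])
    (hd : ∀ x ∈ K, ∀ y ∈ K, (x : ℝ) - y ≤ L) : (K.card : ℝ) ≤ L / B + 1 := by
  have hB' : (0 : ℝ) < B := by exact_mod_cast hB
  rcases K.eq_empty_or_nonempty with rfl | hne
  · simp; positivity
  set m := K.min' hne with hm
  have hmK : m ∈ K := K.min'_mem hne
  have hle : ∀ x ∈ K, m ≤ x := fun x hx => K.min'_le x hx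
  have hdvd : ∀ x ∈ K, B ∣ x - m := fun x hx =>
    (Nat.modEq_iff_dvd' (hle x hx)).1 (hc m hmK x hx)
  have hcard : K.card ≤ (Finset.range (⌊L / B⌋₊ + 1)).card := by
    refine Finset.card_le_card_of_injOn (fun x => (x - m) / B) ?_ ?_
    · intro x hx
      have hx' : x ∈ K := hx
      simp only [Finset.coe_range, Set.mem_Iio]
      refine Nat.lt_succ_of_le (Nat.le_floor ?_)
      rw [le_div_iff₀ hB']
      have h1 : (x - m) / B * B = x - m := Nat.div_mul_cancel (hdvd x hx')
      have h2 : (((x - m) / B : ℕ) : ℝ) * B = ((x - m : ℕ) : ℝ) := by exact_mod_cast h1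
      rw [h2, Nat.cast_sub (hle x hx')]
      exact hd x hx' m hmK
    · intro x hx y hy hxy
      have hx' : x ∈ K := hx
      have hy' : y ∈ K := hy
      have hxy' : (x - m) / B = (y - m) / B := hxy
      have h1 : (x - m) / B * B = x - m := Nat.div_mul_cancel (hdvd x hx')
      have h2 : (y - m) / B * B = y - m := Nat.div_mul_cancel (hdvd y hy')
      rw [hxy', h2] at h1
      have := hle x hx'
      have := hle y hy'
      omega
  rw [Finset.card_range] at hcard
  have h3 : (⌊L / B⌋₊ : ℝ) ≤ L / B := Nat.floor_le (by positivity)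
  have h4 : (K.card : ℝ) ≤ (⌊L / B⌋₊ : ℝ) + 1 := by exact_mod_cast hcard
  linarith

open Classical in
noncomputable def kset (Q A B : ℕ) (θ ε : ℝ) (n : ℤ) : Finset ℕ :=
  (Finset.range Q).filter fun k => (B : ℤ) ∣ n + A * k ∧ |(n : ℝ) - k * θ| < B * ε

lemma kset_class (Q A B : ℕ) (hAB : Nat.gcd A B = 1) (θ ε : ℝ) (n : ℤ) :
    ∀ x ∈ kset Q A B θ ε n, ∀ y ∈ kset Q A B θ ε n, x ≡ y [MOD B] := by
  intro x hx y hy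
  simp only [kset, Finset.mem_filter] at hx hy
  have h := dvd_sub hy.2.1 hx.2.1
  have h1 : (B : ℤ) ∣ A * ((y : ℤ) - x) := by
    have e : (A : ℤ) * ((y : ℤ) - x) = (n + A * y) - (n + A * x) := by ring
    rw [e]; exact h
  have hco : IsCoprime (B : ℤ) (A : ℤ) := by
    rw [Nat.isCoprime_iff_coprime]; exact (Nat.coprime_iff_gcd_eq_one.2 hAB).symm
  exact (Nat.modEq_iff_dvd).2 (hco.dvd_of_dvd_mul_left h1)

noncomputable def nset (N : ℝ) : Finset ℤ := (Finset.Icc (-⌊N⌋) ⌊N⌋).erase 0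

lemma nset_card (N : ℝ) (hN : 0 ≤ N) : ((nset N).card : ℝ) ≤ 2 * N := by
  have h0 : 0 ≤ ⌊N⌋ := Int.floor_nonneg.2 hN
  have h1 : (nset N).card = (2 * ⌊N⌋).toNat := by
    rw [nset, Finset.card_erase_of_mem (by simp only [Finset.mem_Icc]; omega), Int.card_Icc]
    omega
  rw [h1]
  have h2 : (((2 * ⌊N⌋).toNat : ℤ) : ℝ) = ((2 * ⌊N⌋ : ℤ) : ℝ) := by
    rw [Int.toNat_of_nonneg (by omega)]
  have h3 := Int.floor_le N
  rw [Int.cast_natCast] at h2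
  rw [h2]; push_cast; linarith

lemma pair_count (Q A B : ℕ) (hB : 0 < B) (hAB : Nat.gcd A B = 1) (θ ε : ℝ) (hε : 0 < ε) :
    (((nset (B * ε + |θ| * Q)).sigma fun n => kset Q A B θ ε n).card : ℝ)
      ≤ 6 * (Q * ε) + 2 * (B * ε) + 2 * (|θ| * Q) := by
  have hB' : (0 : ℝ) < B := by exact_mod_cast hB
  set N := B * ε + |θ| * Q with hN
  have hN0 : 0 ≤ N := by positivity
  have hQ : (0 : ℝ) ≤ Q := Nat.cast_nonneg Q
  have hT := nset_card N hN0
  have key1 : ∀ n, ((kset Q A B θ ε n).card : ℝ) ≤ Q / B + 1 := by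
    intro n
    refine card_class_le _ B hB _ hQ (kset_class Q A B hAB θ ε n) ?_
    intro x hx y hy
    simp only [kset, Finset.mem_filter, Finset.mem_range] at hx hy
    have : (x : ℝ) ≤ Q := by exact_mod_cast hx.1.le
    have : (0 : ℝ) ≤ y := Nat.cast_nonneg y
    linarith
  have key2 : ∀ n, |θ| * ((kset Q A B θ ε n).card : ℝ) ≤ 2 * ε + |θ| := by
    intro n
    rcases eq_or_ne θ 0 with h0 | h0
    · simp [h0]; positivity
    have hθ : 0 < |θ| := abs_pos.2 h0
    have := card_class_le (kset Q A B θ ε n) B hB (2 * B * ε / |θ|) (by positivity)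
      (kset_class Q A B hAB θ ε n) ?_
    · calc |θ| * ((kset Q A B θ ε n).card : ℝ) ≤ |θ| * (2 * B * ε / |θ| / B + 1) := by gcongr
        _ = 2 * ε + |θ| := by field_simp
    · intro x hx y hy
      simp only [kset, Finset.mem_filter, Finset.mem_range] at hx hy
      rw [le_div_iff₀ hθ]
      calc ((x : ℝ) - y) * |θ| ≤ |(x : ℝ) - y| * |θ| := by gcongr; exact le_abs_self _
        _ = |((n : ℝ) - y * θ) - (n - x * θ)| := by rw [← abs_mul]; congr 1; ring
        _ ≤ |(n : ℝ) - y * θ| + |n - x * θ| := abs_sub _ _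
        _ ≤ 2 * B * ε := by linarith [hx.2.2, hy.2.2]
  have key : ∀ n, N * ((kset Q A B θ ε n).card : ℝ) ≤
      B * ε * (Q / B + 1) + Q * (2 * ε + |θ|) := by
    intro n
    have h1 := mul_le_mul_of_nonneg_left (key1 n) (by positivity : 0 ≤ B * ε)
    have h2 := mul_le_mul_of_nonneg_left (key2 n) hQ
    rw [hN]; linarith
  have hsimp : B * ε * (Q / B + 1) + Q * (2 * ε + |θ|) = 3 * (Q * ε) + B * ε + |θ| * Q := by
    field_simp; ring
  have hNpos : 0 < N := by positivity
  rw [Finset.card_sigma]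
  push_cast
  calc ∑ n ∈ nset N, ((kset Q A B θ ε n).card : ℝ)
      ≤ ∑ n ∈ nset N, (3 * (Q * ε) + B * ε + |θ| * Q) / N := by
        refine Finset.sum_le_sum fun n _ => ?_
        rw [le_div_iff₀ hNpos, ← hsimp, mul_comm]; exact key n
    _ = (nset N).card * ((3 * (Q * ε) + B * ε + |θ| * Q) / N) := by simp
    _ ≤ (2 * N) * ((3 * (Q * ε) + B * ε + |θ| * Q) / N) := by gcongr
    _ = _ := by field_simp; ring

lemma final_ineq (q Q d B θ x s : ℝ) (hq : q = s * s) (hs : 1 ≤ s) (hqd : q = d * Q) (hQ : 1 ≤ Q)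
    (hx : 0 < x) (hx1 : x ≤ 1) (hdx : d * x ^ 4 = 1) (hB : B ≤ s) (hB0 : 0 ≤ B) (hd : 0 < d)
    (hθ : |θ| * s ≤ 1) :
    d * (6 * (Q * x ^ 3) + 2 * (B * x ^ 3) + 2 * (|θ| * Q)) ≤ 10 * (q * x) := by
  have h1 : 1 ≤ s * x ^ 2 := by
    have : 1 ≤ (s * x ^ 2) ^ 2 := by
      calc 1 ≤ Q := hQ
        _ = (d * x ^ 4) * Q := by rw [hdx, one_mul]
        _ = (s * x ^ 2) ^ 2 := by
          have : (d * x ^ 4) * Q = (d * Q) * x ^ 4 := by ring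
          rw [this, ← hqd, hq]; ring
    by_contra h
    push Not at h
    have h0 : 0 ≤ s * x ^ 2 := by positivity
    nlinarith
  have hx2 : x ^ 2 ≤ x := by nlinarith
  have h2 : 1 ≤ s * x := h1.trans (by gcongr)
  have hq0 : 0 < q := by rw [hq]; positivity
  have e1 : d * (Q * x ^ 3) ≤ q * x := by
    have : d * (Q * x ^ 3) = q * x ^ 3 := by rw [hqd]; ring
    rw [this]; gcongr
    nlinarith
  have e2 : d * (B * x ^ 3) ≤ q * x := by
    have e : d * (B * x ^ 3) * x = B := by
      calc _ = B * (d * x ^ 4) := by ring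
        _ = B := by rw [hdx, mul_one]
    have : d * (B * x ^ 3) * x ≤ (q * x) * x := by
      rw [e, hq]
      calc B ≤ s * 1 := by linarith
        _ ≤ s * (s * x ^ 2) := by gcongr
        _ = _ := by ring
    exact le_of_mul_le_mul_right this hx
  have e3 : d * (|θ| * Q) ≤ q * x := by
    calc d * (|θ| * Q) = |θ| * q := by rw [hqd]; ring
      _ = (|θ| * s) * s := by rw [hq]; ring
      _ ≤ 1 * s := by gcongr
      _ ≤ s * (s * x) := by nlinarith
      _ = q * x := by rw [hq]; ring
  linarith

open Classical in
noncomputable def fset (γ δ : ℝ) (q A B r : ℕ) : Finset (ℕ × ℕ) :=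
  (Finset.range q ×ˢ Finset.range r).filter fun p => Nat.gcd (p.1 * B + A) q = 1 ∧
    |((p.1 : ℝ) + γ) * r - ((p.2 : ℝ) + γ) * q| < (Nat.gcd q r : ℝ) ^ δ

lemma ncard_eq (γ δ : ℝ) (q A B r : ℕ) :
    Set.ncard {p : ℕ × ℕ | p.1 < q ∧ Nat.gcd (p.1 * B + A) q = 1 ∧ p.2 < r ∧
            |((p.1 : ℝ) + γ) * r - ((p.2 : ℝ) + γ) * q| < (Nat.gcd q r : ℝ) ^ δ}
      = (fset γ δ q A B r).card := by
  rw [← Set.ncard_coe_finset]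
  congr 1
  ext p
  simp only [fset, Finset.coe_filter, Finset.mem_product, Finset.mem_range, Set.mem_setOf_eq]
  tauto

lemma inj_count (γ δ : ℝ) (q A B d Q : ℕ) (hq : 1 ≤ q) (hB : 0 < B) (hqd : q = d * Q) (ε : ℝ)
    (hε : (d : ℝ) ^ δ ≤ d * ε) :
    (((Finset.Ico 1 q).filter (fun r => Nat.gcd q r = d)).sigma (fset γ δ q A B)).card ≤
     (((nset (B * ε + |B * γ - A| * Q)).sigma fun n => kset Q A B (B * γ - A) ε n)
        ×ˢ Finset.range d).card := by
  have hd0 : 0 < d := Nat.pos_of_ne_zero (by rintro rfl; omega)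
  have hQ0 : 0 < Q := Nat.pos_of_ne_zero (by rintro rfl; omega)
  have hB' : (0 : ℝ) < B := by exact_mod_cast hB
  have hd' : (0 : ℝ) < d := by exact_mod_cast hd0
  have hr : ∀ r, 1 ≤ r → r < q → Nat.gcd q r = d →
      r = d * (r / d) ∧ 1 ≤ r / d ∧ r / d < Q ∧ Nat.Coprime Q (r / d) := by
    intro r h1 h2 h3
    have hdr : d ∣ r := h3 ▸ Nat.gcd_dvd_right q r
    obtain ⟨R, rfl⟩ := hdr
    rw [Nat.mul_div_cancel_left _ hd0]
    refine ⟨rfl, Nat.pos_of_ne_zero (by rintro rfl; omega), ?_, ?_⟩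
    · rw [hqd] at h2; exact lt_of_mul_lt_mul_left h2 (Nat.zero_le d)
    · rw [hqd, Nat.gcd_mul_left] at h3
      exact Nat.eq_of_mul_eq_mul_left hd0 (by rw [h3, mul_one])
  refine Finset.card_le_card_of_injOn
    (fun z => (⟨((z.2.1 * B + A : ℕ) : ℤ) * ((z.1 / d : ℕ) : ℤ) - ((z.2.2 * B + A : ℕ) : ℤ) * Q,
      Q - z.1 / d⟩, z.2.1 / Q)) ?_ ?_
  · rintro ⟨r, a, b⟩ hz
    simp only [Finset.coe_sigma, Set.mem_sigma_iff, Finset.mem_coe, Finset.mem_filter, fset,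
      Finset.mem_Ico, Finset.mem_product, Finset.mem_range] at hz
    obtain ⟨⟨⟨hr1, hrq⟩, hgcd⟩, ⟨ha, hb⟩, hS, hlt⟩ := hz
    obtain ⟨hrR, hR1, hRQ, hco⟩ := hr r hr1 hrq hgcd
    rw [hgcd] at hlt
    simp only [Finset.coe_product, Set.mem_prod, Finset.mem_coe, Finset.mem_sigma, Finset.mem_range]
    generalize r / d = R at *
    set n : ℤ := ((a * B + A : ℕ) : ℤ) * (R : ℤ) - ((b * B + A : ℕ) : ℤ) * Q with hn
    have hkc : ((Q - R : ℕ) : ℝ) = (Q : ℝ) - R := Nat.cast_sub hRQ.le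
    have hclose : |(n : ℝ) - ((Q - R : ℕ) : ℝ) * (B * γ - A)| < B * ε := by
      have e : (n : ℝ) - ((Q - R : ℕ) : ℝ) * (B * γ - A)
          = B * (((a : ℝ) + γ) * R - ((b : ℝ) + γ) * Q) := by
        rw [hkc, hn]; push_cast; ring
      rw [e, abs_mul, abs_of_pos hB']
      have e2 : ((a : ℝ) + γ) * r - ((b : ℝ) + γ) * q
          = d * (((a : ℝ) + γ) * R - ((b : ℝ) + γ) * Q) := by
        rw [hrR, hqd]; push_cast; ring
      rw [e2, abs_mul, abs_of_pos hd'] at hlt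
      have := lt_of_mul_lt_mul_left (hlt.trans_le hε) hd'.le
      gcongr
    have hn0 : n ≠ 0 := by
      intro h0
      have h1 : (a * B + A) * R = (b * B + A) * Q := by
        rw [hn] at h0; have := sub_eq_zero.1 h0; exact_mod_cast this
      have h2 : Q ∣ (a * B + A) * R := h1 ▸ Dvd.intro_left _ rfl
      have h3 : Q ∣ a * B + A := hco.dvd_of_dvd_mul_right h2
      have h4 : Q ∣ 1 := hS ▸ Nat.dvd_gcd h3 (hqd ▸ Dvd.intro_left _ rfl)
      have := Nat.le_of_dvd one_pos h4
      omega
    have hkQ : ((Q - R : ℕ) : ℝ) ≤ Q := by exact_mod_cast Nat.sub_le Q R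
    have hnN : |(n : ℝ)| ≤ B * ε + |B * γ - A| * Q := by
      calc |(n : ℝ)| = |((n : ℝ) - ((Q - R : ℕ) : ℝ) * (B * γ - A)) +
            ((Q - R : ℕ) : ℝ) * (B * γ - A)| := by congr 1; ring
        _ ≤ _ := abs_add_le _ _
        _ ≤ B * ε + |B * γ - A| * Q := by
          rw [abs_mul (((Q - R : ℕ) : ℝ)), abs_of_nonneg (Nat.cast_nonneg (Q - R) : (0 : ℝ) ≤ ((Q - R : ℕ) : ℝ)), mul_comm (((Q - R : ℕ) : ℝ)) |B * γ - A|]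
          gcongr
    refine ⟨⟨?_, ?_⟩, ?_⟩
    · rw [nset, Finset.mem_erase, Finset.mem_Icc]
      rw [abs_le] at hnN
      refine ⟨hn0, ?_, Int.le_floor.2 hnN.2⟩
      have : -n ≤ ⌊B * ε + |B * γ - A| * Q⌋ := by
        apply Int.le_floor.2; push_cast; linarith [hnN.1]
      linarith
    · simp only [kset, Finset.mem_filter, Finset.mem_range]
      refine ⟨by omega, ?_, hclose⟩
      refine ⟨(a : ℤ) * R - b * Q, ?_⟩
      rw [hn, Nat.cast_sub hRQ.le]; push_cast; ring
    · exact Nat.div_lt_of_lt_mul (by rw [mul_comm, ← hqd]; exact ha)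
  · rintro ⟨r, a, b⟩ hz ⟨r2, a2, b2⟩ hz2 heq
    simp only [Finset.coe_sigma, Set.mem_sigma_iff, Finset.mem_coe, Finset.mem_filter, fset,
      Finset.mem_Ico, Finset.mem_product, Finset.mem_range] at hz hz2
    obtain ⟨⟨⟨hr1, hrq⟩, hgcd⟩, ⟨ha, hb⟩, hS, hlt⟩ := hz
    obtain ⟨⟨⟨hr1', hrq'⟩, hgcd'⟩, ⟨ha', hb'⟩, hS', hlt'⟩ := hz2
    obtain ⟨hrR, hR1, hRQ, hco⟩ := hr r hr1 hrq hgcd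
    obtain ⟨hrR', hR1', hRQ', hco'⟩ := hr r2 hr1' hrq' hgcd'
    simp only [Prod.mk.injEq, Sigma.mk.injEq, heq_eq_eq] at heq
    obtain ⟨⟨h1, h2⟩, h3⟩ := heq
    have hRR : r / d = r2 / d := by omega
    have hrr : r = r2 := by rw [hrR, hrR', hRR]
    subst hrr
    clear hrR' hR1' hRQ' hco' hRR h2 hr
    generalize r / d = R at *
    have hBz : (B : ℤ) ≠ 0 := by exact_mod_cast hB.ne'
    have h4 : ((a : ℤ) - a2) * R = ((b : ℤ) - b2) * Q := by
      apply mul_left_cancel₀ hBz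
      push_cast at h1
      linarith
    have hcoz : IsCoprime (Q : ℤ) (R : ℤ) := Nat.isCoprime_iff_coprime.2 hco
    have h5 : (Q : ℤ) ∣ (a : ℤ) - a2 := hcoz.dvd_of_dvd_mul_right (h4 ▸ Dvd.intro_left _ rfl)
    have h6 : a % Q = a2 % Q := ((Nat.modEq_iff_dvd).2 h5).symm
    have haa : a = a2 := by rw [← Nat.div_add_mod a Q, ← Nat.div_add_mod a2 Q, h3, h6]
    subst haa
    have hQz : (Q : ℤ) ≠ 0 := by exact_mod_cast hQ0.ne'
    have h7 : (b : ℤ) - b2 = 0 := by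
      rw [sub_self, zero_mul] at h4
      exact (mul_eq_zero.1 h4.symm).resolve_right hQz
    have : b = b2 := by omega
    rw [this]

theorem stmt13 (γ : ℝ) (δ : ℝ) (hδ0 : 0 < δ) (hδ4 : δ ≤ 1/4) :
    ∃ C > (0:ℝ), ∀ q A B : ℕ, 1 ≤ q → 0 < A → 0 < B → Nat.gcd A B = 1 →
      (B : ℝ) ≤ Real.sqrt q → |γ - (A : ℝ) / B| < 1 / (Real.sqrt q * B) →
      ∀ d : ℕ, d ∣ q →
        (∑ r ∈ (Finset.Ico 1 q).filter (fun r => Nat.gcd q r = d),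
          (Set.ncard {p : ℕ × ℕ | p.1 < q ∧ Nat.gcd (p.1 * B + A) q = 1 ∧ p.2 < r ∧
            |((p.1 : ℝ) + γ) * r - ((p.2 : ℝ) + γ) * q| < (Nat.gcd q r : ℝ) ^ δ} : ℝ))
        ≤ C * ((q : ℝ) * (d : ℝ) ^ (-(1/4) : ℝ) + (d : ℝ)) := by
  refine ⟨10, by norm_num, ?_⟩
  intro q A B hq hA hB hAB hBs hγ d hdq
  obtain ⟨Q, hqd⟩ := hdq
  have hd0 : 0 < d := Nat.pos_of_ne_zero (by rintro rfl; omega)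
  have hQ0 : 0 < Q := Nat.pos_of_ne_zero (by rintro rfl; omega)
  have hB' : (0 : ℝ) < B := by exact_mod_cast hB
  have hd' : (0 : ℝ) < d := by exact_mod_cast hd0
  have hd1 : (1 : ℝ) ≤ d := by exact_mod_cast hd0
  have hq1 : (1 : ℝ) ≤ q := by exact_mod_cast hq
  set x : ℝ := (d : ℝ) ^ (-(1/4) : ℝ) with hx
  have hx0 : 0 < x := Real.rpow_pos_of_pos hd' _
  have hx1 : x ≤ 1 := Real.rpow_le_one_of_one_le_of_nonpos hd1 (by norm_num)
  have hdx : (d : ℝ) * x ^ 4 = 1 := by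
    rw [hx, ← Real.rpow_natCast, ← Real.rpow_mul hd'.le]
    norm_num [Real.rpow_neg_one, hd'.ne']
  have hε : (d : ℝ) ^ δ ≤ d * x ^ 3 := by
    have : (d : ℝ) * x ^ 3 = (d : ℝ) ^ (1 / 4 : ℝ) := by
      have e : (d : ℝ) ^ (1 / 4 : ℝ) * x = 1 := by
        rw [hx, ← Real.rpow_add hd']; norm_num
      apply mul_right_cancel₀ hx0.ne'
      rw [e, ← hdx]; ring
    rw [this]
    exact Real.rpow_le_rpow_of_exponent_le hd1 hδ4
  have hs1 : 1 ≤ Real.sqrt q := Real.one_le_sqrt.2 hq1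
  have hs0 : 0 < Real.sqrt q := by linarith
  have hθ : |B * γ - A| * Real.sqrt q ≤ 1 := by
    have e : B * γ - A = B * (γ - (A : ℝ) / B) := by field_simp
    rw [e, abs_mul, abs_of_pos hB']
    rw [lt_div_iff₀ (by positivity)] at hγ
    linarith
  have hfin := final_ineq q Q d B (B * γ - A) x (Real.sqrt q)
    (Real.mul_self_sqrt (by linarith)).symm hs1 (by rw [hqd]; push_cast; ring)
    (by exact_mod_cast hQ0) hx0 hx1 hdx hBs hB'.le hd' hθ
  have hinj := inj_count γ δ q A B d Q hq hB hqd (x ^ 3) hε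
  have hpc := pair_count Q A B hB hAB (B * γ - A) (x ^ 3) (by positivity)
  simp only [ncard_eq]
  rw [Finset.card_product, Finset.card_range] at hinj
  rw [Finset.card_sigma] at hinj
  have hinj' := (Nat.cast_le (α := ℝ)).2 hinj
  rw [Nat.cast_mul, Nat.cast_sum] at hinj'
  calc _ ≤ _ := hinj'
    _ ≤ (6 * (Q * x ^ 3) + 2 * (B * x ^ 3) + 2 * (|B * γ - A| * Q)) * d := by gcongr
    _ ≤ 10 * (q * x) := by linarith
    _ ≤ _ := by linarith
end

section
/- Let γ∈ℝ, and let ψ:ℕ→ℝ≥0 be decreasing with ψ(q) ≤ 1/q for all q and ∑_{q=1}^∞ ψ(q) = ∞. For each q∈ℕ, with S(q) as in the context, define A_q'(ψ,γ) = ⋃_{a∈S(q)} ( (a+γ−ψ(q))/q , (a+γ+ψ(q))/q ) ∩ [0,1]. Then there is a constant C > 0 (depending on γ and the choices A(q),B(q)) such that for all Q, ∑_{q,r=1}^Q meas(A_q'(ψ,γ) ∩ A_r'(ψ,γ)) ≤ C·Ψ(Q)², where Ψ(Q) = ∑_{q=1}^Q ψ(q). -/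
open MeasureTheory

lemma aux_card_Icc (x y : ℝ) (h : x ≤ y) : ((Finset.Icc ⌊x⌋ ⌊y⌋).card : ℝ) ≤ y - x + 2 := by
  have h1 : ⌊x⌋ ≤ ⌊y⌋ := Int.floor_le_floor h
  rw [Int.card_Icc]
  have h2 : (((⌊y⌋ + 1 - ⌊x⌋).toNat : ℤ)) = ⌊y⌋ + 1 - ⌊x⌋ := Int.toNat_of_nonneg (by omega)
  have h3 : (((⌊y⌋ + 1 - ⌊x⌋).toNat : ℝ)) = ⌊y⌋ + 1 - ⌊x⌋ := by exact_mod_cast h2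
  rw [h3]
  have := Int.floor_le y
  have := Int.lt_floor_add_one x
  linarith

lemma floor_eq_abs_lt {x y K : ℝ} (hK : 0 < K) (h : ⌊x / K⌋ = ⌊y / K⌋) : |x - y| < K := by
  have h1 := Int.abs_sub_lt_one_of_floor_eq_floor h
  rw [← sub_div, abs_div, abs_of_pos hK, div_lt_one hK] at h1
  exact h1

lemma aux_count (γ K δ ε : ℝ) (hK : 0 < K) (hδ : 0 < δ) (hε : 0 ≤ ε)
    (sep : ∀ k : ℕ, 1 ≤ k → (k : ℝ) ≤ K → ∀ n : ℤ, δ ≤ |k * γ - n|)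
    (R : ℝ) (hR : 0 ≤ R) (s : ℝ) (T : Finset ℕ)
    (hT : ∀ t ∈ T, R ≤ t ∧ (t : ℝ) < 2 * R ∧ ∃ n : ℤ, |n + (t - s) * γ| < ε) :
    (T.card : ℝ) ≤ (R / K + 2) * (2 * ε / δ + 2) := by
  classical
  have hT3 : ∀ t : ℕ, ∃ n : ℤ, t ∈ T → |n + (t - s) * γ| < ε := by
    intro t
    by_cases h : t ∈ T
    · obtain ⟨n, hn⟩ := (hT t h).2.2
      exact ⟨n, fun _ => hn⟩
    · exact ⟨0, fun h' => absurd h' h⟩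
  choose n hn using hT3
  let e : ℕ → ℝ := fun t => n t + (t - s) * γ
  let S := Finset.Icc ⌊R / K⌋ ⌊2 * R / K⌋ ×ˢ Finset.Icc ⌊-ε / δ⌋ ⌊ε / δ⌋
  have hcard : T.card ≤ S.card := by
    apply Finset.card_le_card_of_injOn (fun t : ℕ => (⌊(t : ℝ) / K⌋, ⌊e t / δ⌋))
    · intro t ht
      have ht' : t ∈ T := ht
      obtain ⟨h1, h2, -⟩ := hT t ht'
      have h3 := abs_lt.1 (hn t ht')
      simp only [S, Finset.coe_product, Finset.coe_Icc, Set.mem_prod, Set.mem_Icc]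
      refine ⟨⟨?_, ?_⟩, ?_, ?_⟩ <;> apply Int.floor_le_floor <;> gcongr
      · exact h3.1.le
      · exact h3.2.le
    · have key : ∀ t ∈ T, ∀ u ∈ T, ⌊(t : ℝ) / K⌋ = ⌊(u : ℝ) / K⌋ → ⌊e t / δ⌋ = ⌊e u / δ⌋ → ¬ u < t := by
        intro t ht u hu h1 h2 hlt
        have h3 := floor_eq_abs_lt hK h1
        have h4 := floor_eq_abs_lt hδ h2
        have h5 := sep (t - u) (by omega) (by
          rw [Nat.cast_sub hlt.le]; exact (le_abs_self _).trans h3.le) (n u - n t)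
        rw [Nat.cast_sub hlt.le] at h5
        have : e t - e u = ((t : ℝ) - u) * γ - ((n u - n t : ℤ) : ℝ) := by
          simp only [e]; push_cast; ring
        rw [this] at h4
        linarith
      intro t ht u hu htu
      simp only [Prod.mk.injEq] at htu
      rcases lt_trichotomy t u with h | h | h
      · exact absurd h (key u hu t ht htu.1.symm htu.2.symm)
      · exact h
      · exact absurd h (key t ht u hu htu.1 htu.2)
  have h1 : (T.card : ℝ) ≤ S.card := by exact_mod_cast hcard
  refine h1.trans ?_
  simp only [S, Finset.card_product, Nat.cast_mul]
  have a1 := aux_card_Icc (R / K) (2 * R / K) (by gcongr; linarith)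
  have a2 := aux_card_Icc (-ε / δ) (ε / δ) (by gcongr; linarith)
  have a3 : 2 * R / K - R / K + 2 = R / K + 2 := by ring
  have a4 : ε / δ - -ε / δ + 2 = 2 * ε / δ + 2 := by ring
  rw [a3] at a1
  rw [a4] at a2
  gcongr

lemma aux_sep_base (γ : ℝ) (A B k : ℕ) (hB : 0 < B) (hAB : Nat.gcd A B = 1) (n : ℤ) (hk : ¬ B ∣ k) :
    1 / (B : ℝ) - k * |B * γ - A| / B ≤ |k * γ - n| := by
  have hB' : (0 : ℝ) < B := by exact_mod_cast hB
  have h0 : (k : ℤ) * A - n * B ≠ 0 := by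
    intro h
    apply hk
    have : (B : ℤ) ∣ (k * A : ℕ) := ⟨n, by push_cast; linarith⟩
    have h2 : B ∣ k * A := by exact_mod_cast this
    exact (Nat.Coprime.symm hAB).dvd_of_dvd_mul_right h2
  have h1 : (1 : ℝ) ≤ |(k : ℝ) * A - n * B| := by
    have := Int.one_le_abs h0
    exact_mod_cast this
  have h2 : (k : ℝ) * A - n * B = B * (k * γ - n) - k * (B * γ - A) := by ring
  have h3 : |(k : ℝ) * A - n * B| ≤ B * |k * γ - n| + k * |B * γ - A| := by
    rw [h2]
    refine (abs_sub _ _).trans ?_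
    rw [abs_mul, abs_mul, Nat.abs_cast, Nat.abs_cast]
  rw [← sub_div, div_le_iff₀ hB']
  linarith

set_option maxHeartbeats 1000000 in
lemma aux_near (γ : ℝ) (A B q : ℕ) (hq : 1 ≤ q) (hB : 0 < B) (hAB : Nat.gcd A B = 1)
    (hBq : (B : ℝ) ≤ Real.sqrt q) (hη : |B * γ - A| < 1 / Real.sqrt q)
    (p : ℝ) (hp0 : 0 ≤ p) (hp : p ≤ 1 / q) (s R : ℝ) (hR : 1 ≤ R) (T : Finset ℕ)
    (hT : ∀ t ∈ T, R ≤ t ∧ (t : ℝ) < 2 * R ∧ (∃ n : ℤ, |n + (t - s) * γ| < 2 * t * p) ∧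
      (1 < 4 * B * t * p ∨ 1 < 2 * t * |B * γ - A|)) :
    (T.card : ℝ) ≤ 736 * R ^ 2 * p + 20 * R / Real.sqrt q := by
  classical
  set η := |B * γ - A| with hηdef
  have hη0 : 0 ≤ η := abs_nonneg _
  have hB' : (1 : ℝ) ≤ B := by exact_mod_cast hB
  have hq' : (1 : ℝ) ≤ q := by exact_mod_cast hq
  have hs : (1 : ℝ) ≤ Real.sqrt q := Real.one_le_sqrt.2 hq'
  have hss : Real.sqrt q * Real.sqrt q = q := Real.mul_self_sqrt (by linarith)
  have hηB : η < 1 / B := lt_of_lt_of_le hη (by gcongr)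
  have hη1 : η < 1 := lt_of_lt_of_le hηB (by rw [div_le_one (by linarith)]; exact hB')
  let T1 := T.filter (fun t : ℕ => 1 < 4 * B * t * p)
  let T2 := T.filter (fun t : ℕ => 1 < 2 * t * η)
  have hsub : T ⊆ T1 ∪ T2 := by
    intro t ht
    rcases (hT t ht).2.2.2 with h | h
    · exact Finset.mem_union_left _ (Finset.mem_filter.2 ⟨ht, h⟩)
    · exact Finset.mem_union_right _ (Finset.mem_filter.2 ⟨ht, h⟩)
  have hc : (T.card : ℝ) ≤ T1.card + T2.card := by
    exact_mod_cast (Finset.card_le_card hsub).trans (Finset.card_union_le _ _)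
  have hnear : ∀ t ∈ T, R ≤ t ∧ (t : ℝ) < 2 * R ∧ ∃ n : ℤ, |n + (t - s) * γ| < 4 * R * p := by
    intro t ht
    obtain ⟨h1, h2, ⟨n, hn⟩, -⟩ := hT t ht
    refine ⟨h1, h2, n, hn.trans_le ?_⟩
    nlinarith
  have c1 : (T1.card : ℝ) ≤ 576 * R ^ 2 * p := by
    rcases T1.eq_empty_or_nonempty with h | ⟨t, ht⟩
    · rw [h]; simp; positivity
    · have ht1 := (Finset.mem_filter.1 ht)
      have ht2 := hnear t ht1.1
      have hp' : 0 < p := by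
        rcases hp0.lt_or_eq with h | h
        · exact h
        · have := ht1.2; rw [← h] at this; norm_num at this
      have k1 : 1 < 8 * B * R * p := by
        have : 4 * (B : ℝ) * t * p ≤ 4 * B * (2 * R) * p := by gcongr; exact ht2.2.1.le
        linarith [ht1.2]
      have k2 : (B : ℝ) ≤ 8 * R := by
        have e1 : (B : ℝ) * B ≤ q := by rw [← hss]; gcongr
        have e2 : p * q ≤ 1 := by rw [le_div_iff₀ (by linarith)] at hp; exact hp
        by_contra hcon
        push Not at hcon
        have e3 : 8 * B * R * p ≤ B * B * p := by
          have : 0 ≤ B * p := by positivity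
          nlinarith
        have e4 : B * B * p ≤ q * p := by gcongr
        nlinarith
      have := aux_count γ (B / 2) (1 / (2 * B)) (4 * R * p) (by positivity) (by positivity)
        (by positivity) (by
          intro k hk1 hk2 n
          have hnd : ¬ B ∣ k := by
            intro h
            have := Nat.le_of_dvd (by omega) h
            have : (B : ℝ) ≤ k := by exact_mod_cast this
            linarith
          refine le_trans ?_ (aux_sep_base γ A B k hB hAB n hnd)
          have : (k : ℝ) * η / B ≤ 1 / (2 * B) := by
            have : (k : ℝ) * η ≤ (B / 2) * (1 / B) := by gcongr
            have h2 : ((B : ℝ) / 2) * (1 / B) = 1 / 2 := by field_simp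
            rw [h2] at this
            rw [div_le_iff₀ (by positivity)]
            have h3 : 1 / (2 * (B : ℝ)) * B = 1 / 2 := by field_simp
            rw [h3]; exact this
          have h4 : 1 / (B : ℝ) = 1 / (2 * B) + 1 / (2 * B) := by field_simp; norm_num
          linarith)
        R (by linarith) s T1 (fun t ht => hnear t (Finset.mem_filter.1 ht).1)
      refine this.trans ?_
      have f1 : R / (B / 2 : ℝ) + 2 ≤ 18 * R / B := by
        rw [div_add' _ _ _ (by positivity), div_le_div_iff₀ (by positivity) (by positivity)]
        nlinarith
      have f2 : 2 * (4 * R * p) / (1 / (2 * (B : ℝ))) + 2 ≤ 32 * R * p * B := by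
        have : 2 * (4 * R * p) / (1 / (2 * (B : ℝ))) = 16 * R * p * B := by field_simp; norm_num
        rw [this]; nlinarith
      calc _ ≤ (18 * R / B) * (32 * R * p * B) := by gcongr
        _ = 576 * R ^ 2 * p := by field_simp; norm_num
  have c2 : (T2.card : ℝ) ≤ 160 * R ^ 2 * p + 20 * R / Real.sqrt q := by
    rcases T2.eq_empty_or_nonempty with h | ⟨t, ht⟩
    · rw [h]; simp; positivity
    · have ht1 := (Finset.mem_filter.1 ht)
      have ht2 := hnear t ht1.1
      have hηp : 0 < η := by
        rcases hη0.lt_or_eq with h | h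
        · exact h
        · have := ht1.2; rw [← h] at this; norm_num at this
      have k1 : 1 < 4 * R * η := by nlinarith [ht1.2, ht2.2.1]
      have := aux_count γ (1 / (2 * η)) (η / 2) (4 * R * p) (by positivity) (by positivity)
        (by positivity) (by
          intro k hk1 hk2 n
          have hkη : (k : ℝ) * η ≤ 1 / 2 := by
            calc (k : ℝ) * η ≤ 1 / (2 * η) * η := by gcongr
              _ = 1 / 2 := by field_simp
          by_cases hnd : B ∣ k
          · obtain ⟨i, rfl⟩ := hnd
            have hi : 1 ≤ i := by
              rcases Nat.eq_zero_or_pos i with h | h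
              · subst h; simp at hk1
              · exact h
            have hi' : (1 : ℝ) ≤ i := by exact_mod_cast hi
            push_cast at hkη ⊢
            have e0 : (B : ℝ) * i * γ - n = i * (B * γ - A) + ((i * A - n : ℤ) : ℝ) := by
              push_cast; ring
            have e1 : |(i : ℝ) * (B * γ - A)| = i * η := by rw [abs_mul, Nat.abs_cast]
            rw [e0]
            by_cases hz : (i * A - n : ℤ) = 0
            · rw [hz]; simp only [Int.cast_zero, add_zero]; rw [e1]; nlinarith
            · have e2 : (1 : ℝ) ≤ |((i * A - n : ℤ) : ℝ)| := by
                have := Int.one_le_abs hz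
                exact_mod_cast this
              have e3 := abs_sub_abs_le_abs_sub ((i * A - n : ℤ) : ℝ) (-((i : ℝ) * (B * γ - A)))
              rw [abs_neg, e1, sub_neg_eq_add] at e3
              have e4 : (i : ℝ) * η ≤ B * i * η := by
                have h0 : 0 ≤ (i : ℝ) * η := by positivity
                have h1 := mul_le_mul_of_nonneg_right hB' h0
                linarith
              rw [add_comm ((i : ℝ) * (B * γ - A))]
              linarith
          · refine le_trans ?_ (aux_sep_base γ A B k hB hAB n hnd)
            have : (k : ℝ) * η / B ≤ (1 / 2) / B := by gcongr
            have h4 : 1 / (B : ℝ) = (1 / 2) / B + (1 / 2) / B := by field_simp; norm_num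
            linarith)
        R (by linarith) s T2 (fun t ht => hnear t (Finset.mem_filter.1 ht).1)
      refine this.trans ?_
      have f1 : R / (1 / (2 * η)) + 2 ≤ 10 * R * η := by
        have : R / (1 / (2 * η)) = 2 * R * η := by field_simp
        rw [this]; linarith
      have f2 : 2 * (4 * R * p) / (η / 2) + 2 = 16 * R * p / η + 2 := by field_simp; ring
      rw [f2]
      calc _ ≤ (10 * R * η) * (16 * R * p / η + 2) := by gcongr
        _ = 160 * R ^ 2 * p + 20 * R * η := by field_simp; ring
        _ ≤ 160 * R ^ 2 * p + 20 * R * (1 / Real.sqrt q) := by gcongr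
        _ = _ := by ring
  linarith

lemma aux_meas (γ : ℝ) (d u v : ℕ) (hd : 1 ≤ d) (hu : 1 ≤ u) (huv : u < v) (hcop : Nat.Coprime u v)
    (p p2 : ℝ) (hp2 : 0 ≤ p2) (hpp : p2 ≤ p) (Sq Sr : Set ℕ) (hSq : ∀ a ∈ Sq, a < d * u)
    (hSr : ∀ b ∈ Sr, b < d * v) (U V : Set ℝ)
    (hU : U ⊆ ⋃ a ∈ Sq, Set.Ioo (((a : ℝ) + γ - p) / (d * u : ℕ)) (((a : ℝ) + γ + p) / (d * u : ℕ)))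
    (hV : V ⊆ ⋃ a ∈ Sr, Set.Ioo (((a : ℝ) + γ - p2) / (d * v : ℕ)) (((a : ℝ) + γ + p2) / (d * v : ℕ)))
    (P : Prop) [Decidable P]
    (hP : ∀ a ∈ Sq, ∀ b : ℕ, |(v : ℝ) * (a + γ) - u * (b + γ)| < 2 * v * p → P) :
    (volume (U ∩ V)).toReal ≤ 8 * (p * p2) + (if P then 6 * (p2 / v) else 0) := by
  classical
  have hd' : (1 : ℝ) ≤ d := by exact_mod_cast hd
  have hu' : (1 : ℝ) ≤ u := by exact_mod_cast hu
  have huv' : (u : ℝ) < v := by exact_mod_cast huv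
  have hv' : (1 : ℝ) < v := by linarith
  have hp : 0 ≤ p := hp2.trans hpp
  let W : Finset (ℕ × ℕ) := (Finset.range (d * u) ×ˢ Finset.range (d * v)).filter
    (fun x => x.1 ∈ Sq ∧ |(v : ℝ) * (x.1 + γ) - u * (x.2 + γ)| < 2 * v * p)
  let I : ℕ × ℕ → Set ℝ := fun x => Set.Ioo (((x.2 : ℝ) + γ - p2) / (d * v : ℕ)) (((x.2 : ℝ) + γ + p2) / (d * v : ℕ))
  have hsub : U ∩ V ⊆ ⋃ x ∈ W, I x := by
    rintro x ⟨hxU, hxV⟩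
    have h1 := hU hxU
    have h2 := hV hxV
    simp only [Set.mem_iUnion] at h1 h2
    obtain ⟨a, ha, ha2⟩ := h1
    obtain ⟨b, hb, hb2⟩ := h2
    simp only [Set.mem_iUnion]
    refine ⟨(a, b), ?_, hb2⟩
    simp only [W, Finset.mem_filter, Finset.mem_product, Finset.mem_range]
    refine ⟨⟨hSq a ha, hSr b hb⟩, ha, ?_⟩
    obtain ⟨a1, a2⟩ := ha2
    obtain ⟨b1, b2⟩ := hb2
    have hdu : (0 : ℝ) < (d * u : ℕ) := by push_cast; positivity
    have hdv : (0 : ℝ) < (d * v : ℕ) := by push_cast; positivity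
    rw [div_lt_iff₀ hdu] at a1
    rw [lt_div_iff₀ hdu] at a2
    rw [div_lt_iff₀ hdv] at b1
    rw [lt_div_iff₀ hdv] at b2
    push_cast at a1 a2 b1 b2
    have e1 : |(a : ℝ) + γ - x * (d * u)| < p := abs_lt.2 ⟨by linarith, by linarith⟩
    have e2 : |(b : ℝ) + γ - x * (d * v)| < p2 := abs_lt.2 ⟨by linarith, by linarith⟩
    have e3 : (v : ℝ) * (a + γ) - u * (b + γ) = v * ((a : ℝ) + γ - x * (d * u)) - u * ((b : ℝ) + γ - x * (d * v)) := by ring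
    rw [e3]
    refine (abs_sub _ _).trans_lt ?_
    rw [abs_mul, abs_mul, Nat.abs_cast, Nat.abs_cast]
    have f1 : (v : ℝ) * |(a : ℝ) + γ - x * (d * u)| < v * p := by gcongr
    have f2 : (u : ℝ) * |(b : ℝ) + γ - x * (d * v)| ≤ v * p := by gcongr; linarith
    linarith
  have hvol : (volume (U ∩ V)).toReal ≤ W.card * (2 * p2 / (d * v)) := by
    have hI : ∀ x, volume.real (I x) = 2 * p2 / (d * v) := by
      intro x
      simp only [I]
      rw [Real.volume_real_Ioo_of_le (by gcongr; linarith)]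
      push_cast; ring
    have h1 : volume.real (U ∩ V) ≤ volume.real (⋃ x ∈ W, I x) := by
      refine measureReal_mono hsub ?_
      apply ne_of_lt
      refine (measure_biUnion_finset_le _ _).trans_lt ?_
      apply ENNReal.sum_lt_top.2
      intro x _
      simp [I]
    have h2 := measureReal_biUnion_finset_le (μ := volume) W I
    simp only [hI, Finset.sum_const, nsmul_eq_mul] at h2
    exact h1.trans h2
  refine hvol.trans ?_
  by_cases hPP : P
  · rw [if_pos hPP]
    let y : ℝ := ((u : ℝ) - v) * γ
    let Z := Finset.Icc ⌊y - 2 * v * p⌋ ⌊y + 2 * v * p⌋ ×ˢ Finset.range d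
    have hcard : W.card ≤ Z.card := by
      apply Finset.card_le_card_of_injOn (fun x : ℕ × ℕ => (((v : ℤ) * x.1 - u * x.2 : ℤ), x.1 / u))
      · rintro ⟨a, b⟩ hx
        have hx' : (a, b) ∈ W := hx
        simp only [W, Finset.mem_filter, Finset.mem_product, Finset.mem_range] at hx'
        obtain ⟨⟨ha, hb⟩, -, hab⟩ := hx'
        have h3 := abs_lt.1 hab
        simp only [Z, Finset.coe_product, Finset.coe_Icc, Set.mem_prod, Set.mem_Icc, Finset.coe_range, Set.mem_Iio]
        refine ⟨⟨?_, ?_⟩, ?_⟩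
        · have : ⌊y - 2 * v * p⌋ ≤ ⌊(((v : ℤ) * a - u * b : ℤ) : ℝ)⌋ := by
            apply Int.floor_le_floor; push_cast; simp only [y]; linarith
          rwa [Int.floor_intCast] at this
        · rw [Int.le_floor]; push_cast; simp only [y]; linarith
        · rw [Nat.div_lt_iff_lt_mul hu]; exact ha
      · rintro ⟨a, b⟩ hx ⟨a2, b2⟩ hx2 heq
        simp only [Prod.mk.injEq] at heq
        obtain ⟨h1, h2⟩ := heq
        have h3 : (v : ℤ) * (a - a2) = u * (b - b2) := by linarith
        have h4 : (u : ℤ) ∣ v * (a - a2) := ⟨_, h3⟩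
        have hc : IsCoprime (u : ℤ) v := Nat.isCoprime_iff_coprime.2 hcop
        have h5 : (u : ℤ) ∣ a - a2 := hc.dvd_of_dvd_mul_left h4
        have h6 : a2 % u = a % u := (Nat.modEq_iff_dvd.2 h5)
        have h7 : a = a2 := by
          rw [← Nat.div_add_mod a u, ← Nat.div_add_mod a2 u, h2, h6]
        subst h7
        have h8 : (u : ℤ) * (b - b2) = 0 := by rw [← h3]; ring
        have h9 : (b : ℤ) - b2 = 0 := by
          rcases mul_eq_zero.1 h8 with h | h
          · exfalso; omega
          · exact h
        have : b = b2 := by omega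
        rw [this]
    have h1 : (W.card : ℝ) ≤ Z.card := by exact_mod_cast hcard
    have h2 : (Z.card : ℝ) ≤ (4 * v * p + 3) * d := by
      simp only [Z, Finset.card_product, Nat.cast_mul, Finset.card_range]
      have := aux_card_Icc (y - 2 * v * p) (y + 2 * v * p) (by
        have : 0 ≤ 2 * v * p := by positivity
        linarith)
      gcongr
      linarith
    calc (W.card : ℝ) * (2 * p2 / (d * v)) ≤ ((4 * v * p + 3) * d) * (2 * p2 / (d * v)) := by
          gcongr; exact h1.trans h2
      _ = _ := by field_simp; ring
  · rw [if_neg hPP]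
    have : W = ∅ := by
      apply Finset.filter_eq_empty_iff.2
      rintro ⟨a, b⟩ - ⟨h1, h2⟩
      exact hPP (hP a h1 b h2)
    rw [this]
    simp
    positivity

lemma aux_cop (γ : ℝ) (A B d u v a b : ℕ) (huv : u < v) (hcop : Nat.Coprime u v) (hB : 0 < B)
    (p : ℝ) (hg : Nat.gcd (a * B + A) (d * u) = 1)
    (h : |(v : ℝ) * (a + γ) - u * (b + γ)| < 2 * v * p) :
    (∃ n : ℤ, |n + ((v : ℝ) - u) * γ| < 2 * v * p) ∧
    (u = 1 ∨ 1 < 4 * B * v * p ∨ 1 < 2 * v * |B * γ - A|) := by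
  have hB' : (0 : ℝ) < B := by exact_mod_cast hB
  have huv' : (u : ℝ) < v := by exact_mod_cast huv
  refine ⟨⟨v * a - u * b, ?_⟩, ?_⟩
  · push_cast
    convert h using 2; ring
  · by_contra hcon
    push Not at hcon
    obtain ⟨h1, h2, h3⟩ := hcon
    apply h1
    have e0 : (((v : ℤ) * (a * B + A) - u * (b * B + A) : ℤ) : ℝ) =
        B * ((v : ℝ) * (a + γ) - u * (b + γ)) - (v - u) * (B * γ - A) := by push_cast; ring
    have e1 : |(((v : ℤ) * (a * B + A) - u * (b * B + A) : ℤ) : ℝ)| < 1 := by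
      rw [e0]
      refine (abs_sub _ _).trans_lt ?_
      rw [abs_mul, abs_mul, Nat.abs_cast, abs_of_pos (by linarith : (0 : ℝ) < v - u)]
      have f1 : (B : ℝ) * |(v : ℝ) * (a + γ) - u * (b + γ)| < B * (2 * v * p) := by gcongr
      have f2 : ((v : ℝ) - u) * |B * γ - A| ≤ v * |B * γ - A| := by
        gcongr; have : (0 : ℝ) ≤ u := by positivity
        linarith
      nlinarith
    have e2 : (v : ℤ) * (a * B + A) - u * (b * B + A) = 0 := by
      have : |(v : ℤ) * (a * B + A) - u * (b * B + A)| < 1 := by exact_mod_cast e1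
      exact Int.abs_lt_one_iff.1 this
    have e3 : v * (a * B + A) = u * (b * B + A) := by
      have : (v : ℤ) * (a * B + A) = u * (b * B + A) := by linarith
      exact_mod_cast this
    have e4 : u ∣ a * B + A := hcop.dvd_of_dvd_mul_left ⟨_, e3⟩
    have e5 : u ∣ Nat.gcd (a * B + A) (d * u) := Nat.dvd_gcd e4 (Dvd.intro_left _ rfl)
    rw [hg] at e5
    exact Nat.dvd_one.1 e5

lemma sum_Icc_range (f : ℕ → ℝ) (N : ℕ) :
    ∑ n ∈ Finset.Icc 1 N, f n = ∑ i ∈ Finset.range N, f (i + 1) := by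
  induction N with
  | zero => simp
  | succ k ih => rw [Finset.sum_Icc_succ_top (by omega), Finset.sum_range_succ, ih]

lemma sum_mult (ψ : ℕ → ℝ) (hψdec : ∀ q r : ℕ, 1 ≤ q → q ≤ r → ψ r ≤ ψ q) (d : ℕ) (N : ℕ) :
    (d : ℝ) * ∑ n ∈ Finset.Icc 1 N, ψ (d * n) ≤ ∑ m ∈ Finset.Icc 1 (d * N), ψ m := by
  induction N with
  | zero => simp
  | succ k ih =>
    rw [Finset.sum_Icc_succ_top (by omega), mul_add]
    rw [sum_Icc_range ψ (d * k)] at ih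
    rw [sum_Icc_range ψ (d * (k + 1)), Nat.mul_succ, Finset.sum_range_add]
    refine add_le_add ih ?_
    calc (d : ℝ) * ψ (d * k + d) = ∑ i ∈ Finset.range d, ψ (d * k + d) := by simp
      _ ≤ _ := by
        apply Finset.sum_le_sum
        intro i hi
        have := Finset.mem_range.1 hi
        apply hψdec <;> omega

lemma sum_mult_le (ψ : ℕ → ℝ) (hψ0 : ∀ q, 0 ≤ ψ q)
    (hψdec : ∀ q r : ℕ, 1 ≤ q → q ≤ r → ψ r ≤ ψ q) (d : ℕ) (hd : 1 ≤ d) (Q : ℕ) :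
    ∑ n ∈ Finset.Icc 1 (Q / d), ψ (d * n) ≤ (∑ m ∈ Finset.Icc 1 Q, ψ m) / d := by
  have hd' : (0 : ℝ) < d := by exact_mod_cast hd
  rw [le_div_iff₀ hd', mul_comm]
  refine (sum_mult ψ hψdec d _).trans ?_
  apply Finset.sum_le_sum_of_subset_of_nonneg
  · apply Finset.Icc_subset_Icc le_rfl (Nat.mul_div_le Q d)
  · intros; exact hψ0 _

lemma sum_mult_ite_le (ψ : ℕ → ℝ) (hψ0 : ∀ q, 0 ≤ ψ q)
    (hψdec : ∀ q r : ℕ, 1 ≤ q → q ≤ r → ψ r ≤ ψ q) (d : ℕ) (hd : 1 ≤ d) (Q : ℕ) :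
    ∑ n ∈ Finset.Icc 1 Q, (if d * n ≤ Q then ψ (d * n) else 0) ≤ (∑ m ∈ Finset.Icc 1 Q, ψ m) / d := by
  refine le_trans (le_of_eq ?_) (sum_mult_le ψ hψ0 hψdec d hd Q)
  rw [← Finset.sum_filter]
  apply Finset.sum_congr _ (fun _ _ => rfl)
  ext n
  simp only [Finset.mem_filter, Finset.mem_Icc, Nat.le_div_iff_mul_le hd]
  constructor
  · rintro ⟨⟨h1, h2⟩, h3⟩; exact ⟨h1, by rwa [mul_comm]⟩
  · rintro ⟨h1, h3⟩
    refine ⟨⟨h1, ?_⟩, by rwa [mul_comm]⟩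
    nlinarith

lemma sum_dyadic (φ : ℕ → ℝ) (h0 : ∀ q, 0 ≤ φ q) (hdec : ∀ q r : ℕ, 1 ≤ q → q ≤ r → φ r ≤ φ q) (J : ℕ) :
    ∑ j ∈ Finset.range (J + 1), (2 : ℝ) ^ j * φ (2 ^ j) ≤ 2 * ∑ n ∈ Finset.Icc 1 (2 ^ J), φ n := by
  have h := Finset.sum_condensed_le (f := φ) (fun m n hm hmn => hdec m n (by omega) hmn) J
  simp only [nsmul_eq_mul, Nat.cast_pow, Nat.cast_ofNat] at h
  refine h.trans ?_
  have : Finset.Icc 1 (2 ^ J) = insert 1 (Finset.Ico 2 (2 ^ J + 1)) := by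
    ext x; simp only [Finset.mem_Icc, Finset.mem_insert, Finset.mem_Ico]
    have := Nat.one_le_two_pow (n := J)
    omega
  rw [this, Finset.sum_insert (by simp)]
  have := h0 1
  linarith

lemma sum_geom (a b : ℕ) : ∑ j ∈ Finset.Ico a b, 1 / (2 : ℝ) ^ j ≤ 2 / 2 ^ a := by
  rcases le_total a b with hab | hab
  · have : ∑ j ∈ Finset.Ico a b, 1 / (2 : ℝ) ^ j = 2 / 2 ^ a - 2 / 2 ^ b := by
      induction b, hab using Nat.le_induction with
      | base => simp
      | succ n hn ih => rw [Finset.sum_Ico_succ_top hn, ih]; field_simp; ring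
    rw [this]
    have : (0 : ℝ) ≤ 2 / 2 ^ b := by positivity
    linarith
  · rw [Finset.Ico_eq_empty_of_le hab, Finset.sum_empty]; positivity

def NearP (γ : ℝ) (A B : ℕ → ℕ) (ψ : ℕ → ℝ) (d u v : ℕ) : Prop :=
  (∃ n : ℤ, |n + ((v : ℝ) - u) * γ| < 2 * v * ψ (d * u)) ∧
    (1 < 4 * (B (d * u) : ℝ) * v * ψ (d * u) ∨ 1 < 2 * v * |(B (d * u) : ℝ) * γ - A (d * u)|)

lemma aux_eta (γ : ℝ) (A B q : ℕ) (hB : 0 < B) (h : |γ - (A : ℝ) / B| < 1 / (Real.sqrt q * B)) :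
    |B * γ - A| < 1 / Real.sqrt q := by
  have hB' : (0 : ℝ) < B := by exact_mod_cast hB
  have e : (B : ℝ) * γ - A = B * (γ - A / B) := by field_simp
  rw [e, abs_mul, Nat.abs_cast]
  calc (B : ℝ) * |γ - (A : ℝ) / B| < B * (1 / (Real.sqrt q * B)) := by gcongr
    _ = 1 / Real.sqrt q := by rw [mul_comm (Real.sqrt q)]; field_simp

open Classical in
lemma aux_inner (γ : ℝ) (A B : ℕ → ℕ)
    (hAB : ∀ q : ℕ, 1 ≤ q → 0 < A q ∧ 0 < B q ∧ Nat.gcd (A q) (B q) = 1 ∧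
      (B q : ℝ) ≤ Real.sqrt q ∧ |γ - (A q : ℝ) / B q| < 1 / (Real.sqrt q * B q))
    (ψ : ℕ → ℝ) (hψ0 : ∀ q, 0 ≤ ψ q)
    (hψle : ∀ q : ℕ, 1 ≤ q → ψ q ≤ 1 / q)
    (hψdec : ∀ q r : ℕ, 1 ≤ q → q ≤ r → ψ r ≤ ψ q) (Q d u : ℕ) (hd : 1 ≤ d) (hu : 1 ≤ u) :
    ∑ v ∈ Finset.Icc 1 Q, (if u < v ∧ d * v ≤ Q ∧ NearP γ A B ψ d u v then ψ (d * v) / v else 0) ≤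
      1472 * ψ (d * u) * ((∑ m ∈ Finset.Icc 1 Q, ψ m) / d) +
        80 * ((1 / ((d : ℝ) * Real.sqrt d)) * (1 / ((u : ℝ) * Real.sqrt u))) := by
  have hq : 1 ≤ d * u := Nat.mul_pos hd hu
  obtain ⟨-, hB, hg, hBq, hη0⟩ := hAB (d * u) hq
  have hη := aux_eta γ _ _ _ hB hη0
  have hd' : (1 : ℝ) ≤ d := by exact_mod_cast hd
  have hu' : (1 : ℝ) ≤ u := by exact_mod_cast hu
  set p := ψ (d * u) with hpdef
  have hp0 : 0 ≤ p := hψ0 _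
  rw [← Finset.sum_filter]
  set T := (Finset.Icc 1 Q).filter (fun v => u < v ∧ d * v ≤ Q ∧ NearP γ A B ψ d u v) with hT
  set N := Q / d with hN
  have hmem : ∀ v ∈ T, u < v ∧ v ≤ N ∧ NearP γ A B ψ d u v := by
    intro v hv
    obtain ⟨h1, h2, h3, h4⟩ := Finset.mem_filter.1 hv
    exact ⟨h2, (Nat.le_div_iff_mul_le hd).2 (by rwa [mul_comm]), h4⟩
  rcases T.eq_empty_or_nonempty with hTe | ⟨v0, hv0⟩
  · rw [hTe, Finset.sum_empty]
    have : 0 ≤ ∑ m ∈ Finset.Icc 1 Q, ψ m := Finset.sum_nonneg (fun _ _ => hψ0 _)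
    positivity
  have hNpos : N ≠ 0 := by have := hmem v0 hv0; omega
  have hmaps : ∀ v ∈ T, Nat.log 2 v ∈ Finset.Ico (Nat.log 2 u) (Nat.log 2 N + 1) := by
    intro v hv
    obtain ⟨h1, h2, -⟩ := hmem v hv
    rw [Finset.mem_Ico]
    exact ⟨Nat.log_mono_right h1.le, Nat.lt_succ_of_le (Nat.log_mono_right h2)⟩
  rw [← Finset.sum_fiberwise_of_maps_to hmaps]
  have step : ∀ j ∈ Finset.Ico (Nat.log 2 u) (Nat.log 2 N + 1),
      ∑ v ∈ T with Nat.log 2 v = j, ψ (d * v) / v ≤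
        736 * p * (2 ^ j * ψ (d * 2 ^ j)) + 20 / (Real.sqrt (d * u : ℕ) * d) * (1 / 2 ^ j) := by
    intro j hj
    have hblock : ∀ v ∈ T.filter (fun v => Nat.log 2 v = j), 2 ^ j ≤ v ∧ v < 2 ^ (j + 1) := by
      intro v hv
      obtain ⟨h1, h2⟩ := Finset.mem_filter.1 hv
      have hv0 : v ≠ 0 := by have := hmem v h1; omega
      subst h2
      exact ⟨Nat.pow_log_le_self 2 hv0, Nat.lt_pow_succ_log_self (by norm_num) v⟩
    have hcard := aux_near γ (A (d * u)) (B (d * u)) (d * u) hq hB hg hBq hη p hp0 (hψle _ hq) u (2 ^ j)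
      (one_le_pow₀ (by norm_num)) (T.filter (fun v => Nat.log 2 v = j)) (by
        intro v hv
        obtain ⟨h1, h2⟩ := hblock v hv
        obtain ⟨-, -, h3, h4⟩ := hmem v (Finset.mem_filter.1 hv).1
        refine ⟨by exact_mod_cast h1, ?_, h3, h4⟩
        rw [pow_succ] at h2
        have : v < 2 * 2 ^ j := by omega
        exact_mod_cast this)
    have hpsi : ψ (d * 2 ^ j) ≤ 1 / ((d : ℝ) * 2 ^ j) := by
      have := hψle (d * 2 ^ j) (Nat.mul_pos hd (by positivity))
      push_cast at this
      exact this
    have hsum : ∑ v ∈ T with Nat.log 2 v = j, ψ (d * v) / v ≤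
        ((T.filter (fun v => Nat.log 2 v = j)).card : ℝ) * (ψ (d * 2 ^ j) / 2 ^ j) := by
      rw [← nsmul_eq_mul]
      apply Finset.sum_le_card_nsmul
      intro v hv
      obtain ⟨h1, h2⟩ := hblock v hv
      have a1 : ψ (d * v) ≤ ψ (d * 2 ^ j) :=
        hψdec _ _ (Nat.mul_pos hd (by positivity)) (Nat.mul_le_mul_left d h1)
      have a2 : (2 : ℝ) ^ j ≤ v := by exact_mod_cast h1
      have := hψ0 (d * 2 ^ j)
      gcongr
    have hpn := hψ0 (d * 2 ^ j)
    have hsq : 0 < Real.sqrt (d * u : ℕ) := by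
      apply Real.sqrt_pos.2; exact_mod_cast hq
    calc _ ≤ _ := hsum
      _ ≤ (736 * (2 ^ j) ^ 2 * p + 20 * 2 ^ j / Real.sqrt (d * u : ℕ)) * (ψ (d * 2 ^ j) / 2 ^ j) := by gcongr
      _ = 736 * p * (2 ^ j * ψ (d * 2 ^ j)) + 20 / Real.sqrt (d * u : ℕ) * ψ (d * 2 ^ j) := by
        field_simp
      _ ≤ 736 * p * (2 ^ j * ψ (d * 2 ^ j)) + 20 / Real.sqrt (d * u : ℕ) * (1 / ((d : ℝ) * 2 ^ j)) := by
        gcongr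
      _ = _ := by field_simp
  refine (Finset.sum_le_sum step).trans ?_
  rw [Finset.sum_add_distrib, ← Finset.mul_sum, ← Finset.mul_sum]
  apply add_le_add
  · have h1 : ∑ j ∈ Finset.Ico (Nat.log 2 u) (Nat.log 2 N + 1), (2 : ℝ) ^ j * ψ (d * 2 ^ j) ≤
        ∑ j ∈ Finset.range (Nat.log 2 N + 1), (2 : ℝ) ^ j * ψ (d * 2 ^ j) := by
      apply Finset.sum_le_sum_of_subset_of_nonneg
      · intro x hx; rw [Finset.mem_range]; exact (Finset.mem_Ico.1 hx).2
      · intro i _ _; have := hψ0 (d * 2 ^ i); positivity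
    have h2 := sum_dyadic (fun n => ψ (d * n)) (fun n => hψ0 _)
      (fun q r hq hr => hψdec _ _ (Nat.mul_pos hd hq) (Nat.mul_le_mul_left d hr)) (Nat.log 2 N)
    have h3 : ∑ n ∈ Finset.Icc 1 (2 ^ Nat.log 2 N), ψ (d * n) ≤ ∑ n ∈ Finset.Icc 1 N, ψ (d * n) := by
      apply Finset.sum_le_sum_of_subset_of_nonneg
      · exact Finset.Icc_subset_Icc le_rfl (Nat.pow_log_le_self 2 hNpos)
      · intro i _ _; exact hψ0 _
    have h4 := sum_mult_le ψ hψ0 hψdec d hd Q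
    calc _ ≤ 736 * p * (2 * ((∑ m ∈ Finset.Icc 1 Q, ψ m) / d)) := by
          gcongr
          linarith
      _ = _ := by ring
  · have h1 := sum_geom (Nat.log 2 u) (Nat.log 2 N + 1)
    have h2 : (u : ℝ) ≤ 2 * 2 ^ Nat.log 2 u := by
      have := (Nat.lt_pow_succ_log_self (b := 2) (by norm_num) u).le
      rw [pow_succ, mul_comm] at this
      exact_mod_cast this
    have h3 : (2 : ℝ) / 2 ^ Nat.log 2 u ≤ 4 / u := by
      rw [div_le_div_iff₀ (by positivity) (by positivity)]; linarith
    have hs : Real.sqrt (d * u : ℕ) = Real.sqrt d * Real.sqrt u := by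
      push_cast; exact Real.sqrt_mul (by positivity) _
    have hsd : 0 < Real.sqrt d := Real.sqrt_pos.2 (by positivity)
    have hsu : 0 < Real.sqrt u := Real.sqrt_pos.2 (by positivity)
    calc _ ≤ 20 / (Real.sqrt (d * u : ℕ) * d) * (4 / u) := by
          gcongr; exact h1.trans h3
      _ = _ := by rw [hs]; field_simp; norm_num

lemma aux_summable : Summable (fun n : ℕ => 1 / ((n : ℝ) * Real.sqrt n)) := by
  have h := Real.summable_one_div_nat_rpow (p := 3 / 2) |>.2 (by norm_num)
  refine h.congr ?_
  intro n
  rcases Nat.eq_zero_or_pos n with rfl | hn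
  · simp
  · have hn' : (0 : ℝ) < n := by exact_mod_cast hn
    rw [Real.sqrt_eq_rpow]
    congr 1
    rw [show (3 / 2 : ℝ) = 1 + 1 / 2 by norm_num, Real.rpow_add hn', Real.rpow_one]

open Classical in
lemma aux_total (γ : ℝ) (A B : ℕ → ℕ)
    (hAB : ∀ q : ℕ, 1 ≤ q → 0 < A q ∧ 0 < B q ∧ Nat.gcd (A q) (B q) = 1 ∧
      (B q : ℝ) ≤ Real.sqrt q ∧ |γ - (A q : ℝ) / B q| < 1 / (Real.sqrt q * B q))
    (ψ : ℕ → ℝ) (hψ0 : ∀ q, 0 ≤ ψ q)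
    (hψle : ∀ q : ℕ, 1 ≤ q → ψ q ≤ 1 / q)
    (hψdec : ∀ q r : ℕ, 1 ≤ q → q ≤ r → ψ r ≤ ψ q) :
    ∃ C : ℝ, 0 ≤ C ∧ ∀ Q : ℕ,
    ∑ d ∈ Finset.Icc 1 Q, ∑ u ∈ Finset.Icc 1 Q, ∑ v ∈ Finset.Icc 1 Q,
      (if d * u ≤ Q ∧ u < v ∧ d * v ≤ Q ∧ (u = 1 ∨ NearP γ A B ψ d u v) then ψ (d * v) / v else 0) ≤
      C * ((∑ m ∈ Finset.Icc 1 Q, ψ m) + (∑ m ∈ Finset.Icc 1 Q, ψ m) ^ 2 + 1) := by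
  have hs2 : Summable (fun n : ℕ => 1 / (n : ℝ) ^ 2) := Real.summable_one_div_nat_pow.2 (by norm_num)
  have hs3 := aux_summable
  set Z2 := ∑' n : ℕ, 1 / (n : ℝ) ^ 2 with hZ2
  set Z3 := ∑' n : ℕ, 1 / ((n : ℝ) * Real.sqrt n) with hZ3
  have hZ2n : 0 ≤ Z2 := tsum_nonneg (fun n => by positivity)
  have hZ3n : 0 ≤ Z3 := tsum_nonneg (fun n => by positivity)
  refine ⟨1472 * Z2 + 80 * Z3 ^ 2, by positivity, ?_⟩
  intro Q
  set Ψ := ∑ m ∈ Finset.Icc 1 Q, ψ m with hΨ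
  have hΨ0 : 0 ≤ Ψ := Finset.sum_nonneg (fun _ _ => hψ0 _)
  have hb2 : ∑ n ∈ Finset.Icc 1 Q, 1 / (n : ℝ) ^ 2 ≤ Z2 :=
    hs2.sum_le_tsum _ (fun n _ => by positivity)
  have hb3 : ∑ n ∈ Finset.Icc 1 Q, 1 / ((n : ℝ) * Real.sqrt n) ≤ Z3 :=
    hs3.sum_le_tsum _ (fun n _ => by positivity)
  have split : ∀ d u v : ℕ,
      (if d * u ≤ Q ∧ u < v ∧ d * v ≤ Q ∧ (u = 1 ∨ NearP γ A B ψ d u v) then ψ (d * v) / v else 0) ≤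
      (if u = 1 then (if v * d ≤ Q then ψ (v * d) else 0) / (v : ℝ) else 0) +
      (if d * u ≤ Q then (if u < v ∧ d * v ≤ Q ∧ NearP γ A B ψ d u v then ψ (d * v) / v else 0) else 0) := by
    intro d u v
    have h0 : 0 ≤ ψ (d * v) / (v : ℝ) := div_nonneg (hψ0 _) (Nat.cast_nonneg _)
    rw [mul_comm v d]
    by_cases hc : d * u ≤ Q ∧ u < v ∧ d * v ≤ Q ∧ (u = 1 ∨ NearP γ A B ψ d u v)
    · rw [if_pos hc]
      obtain ⟨h1, h2, h3, h4⟩ := hc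
      have hx : 0 ≤ (if d * u ≤ Q then (if u < v ∧ d * v ≤ Q ∧ NearP γ A B ψ d u v then ψ (d * v) / (v : ℝ) else 0) else 0) := by
        split_ifs <;> first | exact h0 | exact le_rfl
      have hy : 0 ≤ (if u = 1 then (if d * v ≤ Q then ψ (d * v) else 0) / (v : ℝ) else 0) := by
        split_ifs <;> first | exact h0 | simp
      rcases h4 with h4 | h4
      · rw [if_pos h4, if_pos h3]; linarith
      · rw [if_pos h1, if_pos (show u < v ∧ d * v ≤ Q ∧ NearP γ A B ψ d u v from ⟨h2, h3, h4⟩)]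
        linarith
    · rw [if_neg hc]
      apply add_nonneg
      · split_ifs <;> first | exact h0 | simp
      · split_ifs <;> first | exact h0 | exact le_rfl
  have part1 : ∑ d ∈ Finset.Icc 1 Q, ∑ u ∈ Finset.Icc 1 Q, ∑ v ∈ Finset.Icc 1 Q,
      (if u = 1 then (if v * d ≤ Q then ψ (v * d) else 0) / (v : ℝ) else 0) ≤ Ψ * Z2 := by
    calc _ ≤ ∑ d ∈ Finset.Icc 1 Q, ∑ v ∈ Finset.Icc 1 Q, (if v * d ≤ Q then ψ (v * d) else 0) / (v : ℝ) := by
          apply Finset.sum_le_sum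
          intro d hd
          rw [Finset.sum_comm]
          apply Finset.sum_le_sum
          intro v hv
          rw [Finset.sum_ite_eq']
          have : 0 ≤ (if v * d ≤ Q then ψ (v * d) else 0) / (v : ℝ) := by
            split_ifs
            · exact div_nonneg (hψ0 _) (Nat.cast_nonneg _)
            · simp
          split_ifs at * <;> first | exact le_rfl | exact this
      _ = ∑ v ∈ Finset.Icc 1 Q, (∑ d ∈ Finset.Icc 1 Q, (if v * d ≤ Q then ψ (v * d) else 0)) / (v : ℝ) := by
          rw [Finset.sum_comm]
          simp only [Finset.sum_div]
      _ ≤ ∑ v ∈ Finset.Icc 1 Q, Ψ * (1 / (v : ℝ) ^ 2) := by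
          apply Finset.sum_le_sum
          intro v hv
          have hv1 := (Finset.mem_Icc.1 hv).1
          have := sum_mult_ite_le ψ hψ0 hψdec v hv1 Q
          calc _ ≤ (Ψ / v) / (v : ℝ) := by gcongr
            _ = _ := by rw [div_div, ← sq]; ring
      _ ≤ Ψ * Z2 := by rw [← Finset.mul_sum]; gcongr
  have part2 : ∑ d ∈ Finset.Icc 1 Q, ∑ u ∈ Finset.Icc 1 Q, ∑ v ∈ Finset.Icc 1 Q,
      (if d * u ≤ Q then (if u < v ∧ d * v ≤ Q ∧ NearP γ A B ψ d u v then ψ (d * v) / (v : ℝ) else 0) else 0)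
      ≤ 1472 * Ψ ^ 2 * Z2 + 80 * Z3 ^ 2 := by
    calc _ ≤ ∑ d ∈ Finset.Icc 1 Q, ∑ u ∈ Finset.Icc 1 Q,
          (1472 * (Ψ / d) * (if d * u ≤ Q then ψ (d * u) else 0) +
            80 * ((1 / ((d : ℝ) * Real.sqrt d)) * (1 / ((u : ℝ) * Real.sqrt u)))) := by
          apply Finset.sum_le_sum
          intro d hd
          apply Finset.sum_le_sum
          intro u hu
          by_cases h : d * u ≤ Q
          · simp only [if_pos h]
            refine (aux_inner γ A B hAB ψ hψ0 hψle hψdec Q d u (Finset.mem_Icc.1 hd).1 (Finset.mem_Icc.1 hu).1).trans (le_of_eq ?_)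
            ring
          · simp only [if_neg h, Finset.sum_const_zero]
            positivity
      _ = ∑ d ∈ Finset.Icc 1 Q, 1472 * (Ψ / d) * ∑ u ∈ Finset.Icc 1 Q, (if d * u ≤ Q then ψ (d * u) else 0) +
          80 * ((∑ d ∈ Finset.Icc 1 Q, (1 / ((d : ℝ) * Real.sqrt d))) * (∑ u ∈ Finset.Icc 1 Q, (1 / ((u : ℝ) * Real.sqrt u)))) := by
          simp only [Finset.sum_add_distrib, ← Finset.mul_sum]
          rw [← Finset.sum_mul]
      _ ≤ ∑ d ∈ Finset.Icc 1 Q, 1472 * Ψ ^ 2 * (1 / (d : ℝ) ^ 2) + 80 * (Z3 * Z3) := by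
          apply add_le_add
          · apply Finset.sum_le_sum
            intro d hd
            have hd1 := (Finset.mem_Icc.1 hd).1
            have := sum_mult_ite_le ψ hψ0 hψdec d hd1 Q
            calc _ ≤ 1472 * (Ψ / d) * (Ψ / d) := by gcongr
              _ = _ := by ring
          · have : 0 ≤ ∑ n ∈ Finset.Icc 1 Q, 1 / ((n : ℝ) * Real.sqrt n) :=
              Finset.sum_nonneg (fun _ _ => by positivity)
            gcongr
      _ ≤ _ := by
          rw [← Finset.mul_sum, ← sq]
          gcongr
  calc _ ≤ _ := Finset.sum_le_sum (fun d _ => Finset.sum_le_sum (fun u _ => Finset.sum_le_sum (fun v _ => split d u v)))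
    _ ≤ Ψ * Z2 + (1472 * Ψ ^ 2 * Z2 + 80 * Z3 ^ 2) := by
      simp only [Finset.sum_add_distrib]
      exact add_le_add part1 part2
    _ ≤ _ := by
      have a1 : 0 ≤ Ψ * Z2 := by positivity
      have a2 : 0 ≤ Z3 ^ 2 * Ψ := by positivity
      have a3 : 0 ≤ Z3 ^ 2 * Ψ ^ 2 := by positivity
      nlinarith

theorem stmt14 (γ : ℝ) (A B : ℕ → ℕ)
    (hAB : ∀ q : ℕ, 1 ≤ q → 0 < A q ∧ 0 < B q ∧ Nat.gcd (A q) (B q) = 1 ∧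
      (B q : ℝ) ≤ Real.sqrt q ∧ |γ - (A q : ℝ) / B q| < 1 / (Real.sqrt q * B q))
    (ψ : ℕ → ℝ) (hψ0 : ∀ q, 0 ≤ ψ q)
    (hψle : ∀ q : ℕ, 1 ≤ q → ψ q ≤ 1 / q)
    (hψdec : ∀ q r : ℕ, 1 ≤ q → q ≤ r → ψ r ≤ ψ q)
    (hdiv : ¬ Summable ψ)
    (A' : ℕ → Set ℝ)
    (hA' : ∀ q, A' q =
      (⋃ a ∈ {a : ℕ | a < q ∧ Nat.gcd (a * B q + A q) q = 1},
        Set.Ioo (((a : ℝ) + γ - ψ q) / q) (((a : ℝ) + γ + ψ q) / q)) ∩ Set.Icc 0 1) :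
    ∃ C > (0:ℝ), ∀ Q : ℕ,
      (∑ q ∈ Finset.Icc 1 Q, ∑ r ∈ Finset.Icc 1 Q, (volume (A' q ∩ A' r)).toReal)
        ≤ C * (∑ q ∈ Finset.Icc 1 Q, ψ q) ^ 2 := by
  classical
  have hψ1 : 0 < ψ 1 := by
    by_contra hcon
    apply hdiv
    apply summable_of_ne_finset_zero (s := {0})
    intro b hb
    have hb' : 1 ≤ b := by
      rw [Finset.mem_singleton] at hb; omega
    have := hψdec 1 b le_rfl hb'
    have := hψ0 b
    linarith
  obtain ⟨C, hC, hCQ⟩ := aux_total γ A B hAB ψ hψ0 hψle hψdec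
  refine ⟨8 + 12 * C * (1 / ψ 1 + 1 + 1 / ψ 1 ^ 2) + 2 / ψ 1, by positivity, ?_⟩
  intro Q
  set G : ℕ × ℕ × ℕ → ℝ := fun x =>
    if x.1 * x.2.1 ≤ Q ∧ x.2.1 < x.2.2 ∧ x.1 * x.2.2 ≤ Q ∧ (x.2.1 = 1 ∨ NearP γ A B ψ x.1 x.2.1 x.2.2)
      then ψ (x.1 * x.2.2) / x.2.2 else 0 with hG
  have hG0 : ∀ x, 0 ≤ G x := by
    intro x
    simp only [hG]
    split_ifs
    · exact div_nonneg (hψ0 _) (Nat.cast_nonneg _)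
    · exact le_rfl
  let f : ℕ × ℕ → ℕ × ℕ × ℕ := fun x => (Nat.gcd x.1 x.2, x.1 / Nat.gcd x.1 x.2, x.2 / Nat.gcd x.1 x.2)
  set Ψ := ∑ m ∈ Finset.Icc 1 Q, ψ m with hΨ
  have hΨ0 : 0 ≤ Ψ := Finset.sum_nonneg (fun _ _ => hψ0 _)
  have hoff : ∀ q r : ℕ, 1 ≤ q → q < r → r ≤ Q →
      (volume (A' q ∩ A' r)).toReal ≤ 8 * (ψ q * ψ r) + 6 * G (f (q, r)) := by
    intro q r hq hqr hrQ
    obtain ⟨d, u, v, hdpos, hcop, hqe, hre⟩ := Nat.exists_coprime' (m := q) (n := r) (Nat.gcd_pos_of_pos_left _ hq)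
    rw [mul_comm] at hqe hre
    subst hqe
    subst hre
    have huv : u < v := lt_of_mul_lt_mul_left hqr (Nat.zero_le d)
    have hu : 1 ≤ u := Nat.pos_of_mul_pos_left hq
    have hf : f (d * u, d * v) = (d, u, v) := by
      have hgcd : Nat.gcd (d * u) (d * v) = d := by
        rw [Nat.gcd_mul_left, hcop.gcd_eq_one, mul_one]
      simp only [f, hgcd, Nat.mul_div_cancel_left _ hdpos]
    obtain ⟨-, hB, -, -, -⟩ := hAB (d * u) hq
    have hm := aux_meas γ d u v hdpos hu huv hcop (ψ (d * u)) (ψ (d * v)) (hψ0 _)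
      (hψdec _ _ hq hqr.le) {a : ℕ | a < d * u ∧ Nat.gcd (a * B (d * u) + A (d * u)) (d * u) = 1}
      {a : ℕ | a < d * v ∧ Nat.gcd (a * B (d * v) + A (d * v)) (d * v) = 1}
      (fun a ha => ha.1) (fun a ha => ha.1) (A' (d * u)) (A' (d * v))
      (by rw [hA']; exact Set.inter_subset_left) (by rw [hA']; exact Set.inter_subset_left)
      (d * u ≤ Q ∧ u < v ∧ d * v ≤ Q ∧ (u = 1 ∨ NearP γ A B ψ d u v)) (by
        intro a ha b hab
        obtain ⟨h1, h2⟩ := aux_cop γ (A (d * u)) (B (d * u)) d u v a b huv hcop hB _ ha.2 hab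
        refine ⟨hqr.le.trans hrQ, huv, hrQ, ?_⟩
        rcases h2 with h2 | h2
        · exact Or.inl h2
        · exact Or.inr ⟨h1, h2⟩)
    refine hm.trans (le_of_eq ?_)
    rw [hf]
    simp only [hG, mul_ite, mul_zero]
  have hdiag : ∀ q : ℕ, 1 ≤ q → (volume (A' q ∩ A' q)).toReal ≤ 2 * ψ q := by
    intro q hq
    have hq' : (0 : ℝ) < q := by exact_mod_cast hq
    let I : ℕ → Set ℝ := fun a => Set.Ioo (((a : ℝ) + γ - ψ q) / q) (((a : ℝ) + γ + ψ q) / q)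
    have hsub : A' q ∩ A' q ⊆ ⋃ a ∈ Finset.range q, I a := by
      rintro x ⟨hx, -⟩
      rw [hA'] at hx
      have := hx.1
      simp only [Set.mem_iUnion] at this ⊢
      obtain ⟨a, ha, hax⟩ := this
      exact ⟨a, Finset.mem_range.2 ha.1, hax⟩
    have hI : ∀ x, volume.real (I x) = 2 * ψ q / q := by
      intro x
      simp only [I]
      rw [Real.volume_real_Ioo_of_le (by gcongr; linarith [hψ0 q])]
      ring
    have h1 : volume.real (A' q ∩ A' q) ≤ volume.real (⋃ x ∈ Finset.range q, I x) := by
      refine measureReal_mono hsub ?_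
      apply ne_of_lt
      refine (measure_biUnion_finset_le _ _).trans_lt ?_
      apply ENNReal.sum_lt_top.2
      intro x _
      simp [I]
    have h2 := measureReal_biUnion_finset_le (μ := volume) (Finset.range q) I
    simp only [hI, Finset.sum_const, nsmul_eq_mul, Finset.card_range] at h2
    refine (h1.trans h2).trans (le_of_eq ?_)
    field_simp
  set h : ℕ → ℕ → ℝ := fun q r => if q < r then G (f (q, r)) else 0 with hh
  have hh0 : ∀ q r, 0 ≤ h q r := by
    intro q r
    simp only [hh]
    split_ifs
    · exact hG0 _
    · exact le_rfl
  have hpt : ∀ q ∈ Finset.Icc 1 Q, ∀ r ∈ Finset.Icc 1 Q, (volume (A' q ∩ A' r)).toReal ≤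
      8 * (ψ q * ψ r) + 6 * h q r + 6 * h r q + (if q = r then 2 * ψ q else 0) := by
    intro q hq r hr
    rw [Finset.mem_Icc] at hq hr
    have e1 := hh0 q r
    have e2 := hh0 r q
    have e3 : 0 ≤ ψ q * ψ r := mul_nonneg (hψ0 _) (hψ0 _)
    rcases lt_trichotomy q r with hlt | heq | hlt
    · have := hoff q r hq.1 hlt hr.2
      have e4 : h q r = G (f (q, r)) := by simp only [hh]; rw [if_pos hlt]
      rw [if_neg hlt.ne, e4]
      linarith
    · subst heq
      have := hdiag q hq.1
      rw [if_pos rfl]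
      linarith
    · have := hoff r q hr.1 hlt hq.2
      have e4 : h r q = G (f (r, q)) := by simp only [hh]; rw [if_pos hlt]
      rw [if_neg hlt.ne', e4, Set.inter_comm]
      rw [mul_comm (ψ q)] at e3 ⊢
      linarith
  have hsumh : ∑ q ∈ Finset.Icc 1 Q, ∑ r ∈ Finset.Icc 1 Q, h q r ≤ C * (Ψ + Ψ ^ 2 + 1) := by
    refine le_trans ?_ (hCQ Q)
    have r1 : ∑ q ∈ Finset.Icc 1 Q, ∑ r ∈ Finset.Icc 1 Q, h q r ≤
        ∑ x ∈ Finset.Icc 1 Q ×ˢ Finset.Icc 1 Q, G (f x) := by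
      rw [Finset.sum_product]
      apply Finset.sum_le_sum; intro q _
      apply Finset.sum_le_sum; intro r _
      simp only [hh]
      split_ifs
      · exact le_rfl
      · exact hG0 _
    have hinj : Set.InjOn f (Finset.Icc 1 Q ×ˢ Finset.Icc 1 Q : Finset (ℕ × ℕ)) := by
      rintro ⟨a, b⟩ _ ⟨a2, b2⟩ _ hab
      simp only [f, Prod.mk.injEq] at hab
      obtain ⟨h1, h2, h3⟩ := hab
      have k1 := Nat.div_mul_cancel (Nat.gcd_dvd_left a b)
      have k2 := Nat.div_mul_cancel (Nat.gcd_dvd_right a b)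
      have k3 := Nat.div_mul_cancel (Nat.gcd_dvd_left a2 b2)
      have k4 := Nat.div_mul_cancel (Nat.gcd_dvd_right a2 b2)
      rw [h2, h1, k3] at k1
      rw [h3, h1, k4] at k2
      rw [k1, k2]
    have r2 : ∑ x ∈ Finset.Icc 1 Q ×ˢ Finset.Icc 1 Q, G (f x) ≤
        ∑ y ∈ Finset.Icc 1 Q ×ˢ Finset.Icc 1 Q ×ˢ Finset.Icc 1 Q, G y := by
      rw [← Finset.sum_image hinj]
      apply Finset.sum_le_sum_of_subset_of_nonneg
      · intro y hy
        obtain ⟨⟨a, b⟩, hx, rfl⟩ := Finset.mem_image.1 hy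
        simp only [Finset.mem_product, Finset.mem_Icc] at hx ⊢
        obtain ⟨⟨a1, a2⟩, b1, b2⟩ := hx
        have hg : 0 < Nat.gcd a b := Nat.gcd_pos_of_pos_left _ a1
        refine ⟨⟨hg, (Nat.gcd_le_left _ a1).trans a2⟩, ⟨?_, (Nat.div_le_self _ _).trans a2⟩, ?_, (Nat.div_le_self _ _).trans b2⟩
        · exact Nat.div_pos (Nat.gcd_le_left _ a1) hg
        · exact Nat.div_pos (Nat.gcd_le_right _ b1) hg
      · intro i _ _; exact hG0 i
    refine (r1.trans r2).trans (le_of_eq ?_)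
    rw [Finset.sum_product]
    apply Finset.sum_congr rfl; intro d _
    rw [Finset.sum_product]
  have hsum : ∑ q ∈ Finset.Icc 1 Q, ∑ r ∈ Finset.Icc 1 Q, (volume (A' q ∩ A' r)).toReal ≤
      8 * Ψ ^ 2 + 12 * (C * (Ψ + Ψ ^ 2 + 1)) + 2 * Ψ := by
    refine (Finset.sum_le_sum (fun q hq => Finset.sum_le_sum (fun r hr => hpt q hq r hr))).trans ?_
    simp only [Finset.sum_add_distrib]
    have s1 : ∑ q ∈ Finset.Icc 1 Q, ∑ r ∈ Finset.Icc 1 Q, 8 * (ψ q * ψ r) = 8 * Ψ ^ 2 := by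
      simp only [← Finset.mul_sum]
      rw [← Finset.sum_mul, sq]
    have s2 : ∑ q ∈ Finset.Icc 1 Q, ∑ r ∈ Finset.Icc 1 Q, 6 * h q r = 6 * ∑ q ∈ Finset.Icc 1 Q, ∑ r ∈ Finset.Icc 1 Q, h q r := by
      simp only [← Finset.mul_sum]
    have s3 : ∑ q ∈ Finset.Icc 1 Q, ∑ r ∈ Finset.Icc 1 Q, 6 * h r q = 6 * ∑ q ∈ Finset.Icc 1 Q, ∑ r ∈ Finset.Icc 1 Q, h q r := by
      rw [Finset.sum_comm, s2]
    have s4 : ∑ q ∈ Finset.Icc 1 Q, ∑ r ∈ Finset.Icc 1 Q, (if q = r then 2 * ψ q else 0) = 2 * Ψ := by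
      rw [hΨ, Finset.mul_sum]
      apply Finset.sum_congr rfl
      intro q hq
      rw [Finset.sum_ite_eq, if_pos hq]
    rw [s1, s2, s3, s4]
    linarith
  rcases Nat.eq_zero_or_pos Q with hQ | hQ
  · subst hQ; simp [hΨ]
  have hle : ψ 1 ≤ Ψ := Finset.single_le_sum (f := ψ) (fun i _ => hψ0 i) (Finset.mem_Icc.2 ⟨le_rfl, hQ⟩)
  have t1 : Ψ ≤ 1 / ψ 1 * Ψ ^ 2 := by
    rw [div_mul_eq_mul_div, le_div_iff₀ hψ1]; nlinarith
  have t2 : 1 ≤ 1 / ψ 1 ^ 2 * Ψ ^ 2 := by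
    rw [div_mul_eq_mul_div, le_div_iff₀ (by positivity)]; nlinarith
  calc _ ≤ _ := hsum
    _ ≤ 8 * Ψ ^ 2 + 12 * (C * (1 / ψ 1 * Ψ ^ 2 + Ψ ^ 2 + 1 / ψ 1 ^ 2 * Ψ ^ 2)) + 2 * (1 / ψ 1 * Ψ ^ 2) := by
      gcongr
    _ = _ := by ring
end

section
/- Let γ∈ℝ and q∈ℕ, and let S(q) be as in the context. Then #S(q) ≥ φ(q), where φ denotes Euler's totient function. -/
theorem stmt15 (γ : ℝ) (q A B : ℕ) (hq : 1 ≤ q) (hA : 0 < A) (hB : 0 < B)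
    (hAB : Nat.gcd A B = 1) (hBq : (B : ℝ) ≤ Real.sqrt q)
    (hγ : |γ - (A : ℝ) / B| < 1 / (Real.sqrt q * B)) :
    Nat.totient q ≤
      ((Finset.range q).filter (fun a => Nat.gcd (a * B + A) q = 1)).card := by
  have : NeZero q := ⟨by omega⟩
  obtain ⟨m, hm⟩ : ∃ m : ℕ, m = ∏ p ∈ q.primeFactors.filter (fun p => ¬ p ∣ B), p := ⟨_, rfl⟩
  have hm1 : ∀ p, p.Prime → p ∣ q → ¬ p ∣ B → p ∣ m := by
    intro p hp hpq hpB
    rw [hm]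
    apply Finset.dvd_prod_of_mem (fun p => p)
    simp [hp, hpq, hpB]
    omega
  have hm2 : ∀ p, p.Prime → p ∣ B → ¬ p ∣ m := by
    intro p hp hpB hpm
    rw [hm, hp.prime.dvd_finsetProd_iff] at hpm
    obtain ⟨r, hr, hpr⟩ := hpm
    simp only [Finset.mem_filter, Nat.mem_primeFactors] at hr
    have := (Nat.prime_dvd_prime_iff_eq hp hr.1.1).1 hpr
    subst this
    exact hr.2 hpB
  have hcop : Nat.Coprime (B + m) q := by
    apply Nat.Coprime.symm
    apply Nat.coprime_of_dvd
    intro p hp hpq hpd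
    by_cases hpB : p ∣ B
    · exact hm2 p hp hpB ((Nat.dvd_add_right hpB).1 hpd)
    · exact hpB ((Nat.dvd_add_left (hm1 p hp hpq hpB)).1 hpd)
  have hinv : ((B + m : ℕ) : ZMod q) * ((B + m : ℕ) : ZMod q)⁻¹ = 1 :=
    ZMod.coe_mul_inv_eq_one _ hcop
  have key : ∀ x : ℕ, ((((((x : ZMod q) - A) * ((B + m : ℕ) : ZMod q)⁻¹).val * (B + m) + A : ℕ)) : ZMod q) = x := by
    intro x
    rw [Nat.cast_add, Nat.cast_mul, ZMod.natCast_val, ZMod.cast_id', id, mul_assoc,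
      mul_comm (((B + m : ℕ) : ZMod q)⁻¹), hinv]
    ring
  rw [Nat.totient_eq_card_coprime]
  apply Finset.card_le_card_of_injOn
    (fun x : ℕ => (((x : ZMod q) - A) * ((B + m : ℕ) : ZMod q)⁻¹).val)
  · intro x hx
    simp only [Finset.coe_filter, Finset.mem_range, Set.mem_setOf_eq] at hx ⊢
    refine ⟨ZMod.val_lt _, ?_⟩
    have h := key x
    generalize (((x : ZMod q) - A) * ((B + m : ℕ) : ZMod q)⁻¹).val = a at h ⊢
    rw [ZMod.natCast_eq_natCast_iff] at h
    have hc : Nat.Coprime q (a * (B + m) + A) := by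
      have := h.gcd_eq
      rw [Nat.coprime_comm, Nat.Coprime, this]
      exact hx.2.symm
    apply Nat.Coprime.symm
    apply Nat.coprime_of_dvd
    intro p hp hpq hpd
    by_cases hpB : p ∣ B
    · have hpA : p ∣ A := (Nat.dvd_add_right (hpB.mul_left a)).1 hpd
      exact hp.one_lt.ne' (Nat.dvd_one.1 (hAB ▸ Nat.dvd_gcd hpA hpB))
    · have h1 : p ∣ a * (B + m) + A := by
        have h2 : a * (B + m) + A = (a * B + A) + a * m := by ring
        rw [h2]
        exact dvd_add hpd ((hm1 p hp hpq hpB).mul_left a)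
      exact hp.one_lt.ne' (Nat.dvd_one.1 (hc ▸ Nat.dvd_gcd hpq h1))
  · intro x hx y hy hxy
    simp only [Finset.coe_filter, Finset.mem_range, Set.mem_setOf_eq] at hx hy hxy
    have h1 := key x
    rw [hxy, key y, ZMod.natCast_eq_natCast_iff] at h1
    exact (Nat.ModEq.eq_of_lt_of_lt h1 hy.1 hx.1).symm
end

section
/- Let γ∈ℝ and for each q∈ℕ let S(q) be as in the context. Then the finite sets (1/q)·S(q) equidistribute in [0,1]: for every nonempty interval I ⊆ [0,1], #{a ∈ S(q) : a/q ∈ I} / #S(q) → meas(I) as q → ∞. -/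
open MeasureTheory Filter

lemma base_count (A B d n : ℕ) (hd : 0 < d) (hB : Nat.Coprime d B) :
    |(((Finset.range n).filter (fun a => d ∣ a * B + A)).card : ℝ) - n / d| ≤ 1 := by
  obtain ⟨v, hv⟩ : ∃ v : ℕ, ∀ a : ℕ, d ∣ a * B + A ↔ a ≡ v [MOD d] := by
    haveI : NeZero d := ⟨hd.ne'⟩
    refine ⟨(-(A : ZMod d) * (B : ZMod d)⁻¹).val, fun a => ?_⟩
    have hu : (B : ZMod d) * (B : ZMod d)⁻¹ = 1 := ZMod.coe_mul_inv_eq_one B hB.symm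
    rw [← ZMod.natCast_eq_zero_iff, ← ZMod.natCast_eq_natCast_iff]
    push_cast
    rw [ZMod.natCast_zmod_val]
    constructor
    · intro h
      linear_combination (B : ZMod d)⁻¹ * h - (a : ZMod d) * hu
    · intro h
      linear_combination (B : ZMod d) * h - (A : ZMod d) * hu
  have h1 : ((Finset.range n).filter (fun a => d ∣ a * B + A)).card
      = n.count (· ≡ v [MOD d]) := by
    rw [Nat.count_eq_card_filter_range]
    simp only [hv]
  rw [h1, Nat.count_modEq_card n hd v]
  have h2 : (n : ℝ) = d * (n / d : ℕ) + (n % d : ℕ) := by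
    exact_mod_cast (Nat.div_add_mod n d).symm
  have hd' : (0 : ℝ) < d := by exact_mod_cast hd
  have h3 : (n : ℝ) / d = (n / d : ℕ) + (n % d : ℕ) / d := by
    rw [h2]
    have h4 : (d * (n / d : ℕ) + (n % d : ℕ) : ℝ) / d = (n / d : ℕ) + (n % d : ℕ) / d := by
      field_simp
    rw [← h2] at h4 ⊢
    exact h4
  have h5 : ((n % d : ℕ) : ℝ) / d ≤ 1 := by
    rw [div_le_one hd']
    exact_mod_cast (Nat.mod_lt n hd).le
  have h6 : (0 : ℝ) ≤ ((n % d : ℕ) : ℝ) / d := by positivity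
  rw [h3, abs_le]
  split_ifs <;> push_cast <;> constructor <;> linarith

lemma sieve (A B n : ℕ) (s : Finset ℕ) :
    ∀ d : ℕ, 0 < d → Nat.Coprime d B → (∀ p ∈ s, p.Prime ∧ Nat.Coprime p B ∧ Nat.Coprime p d) →
    |(((Finset.range n).filter (fun a => d ∣ a * B + A ∧ ∀ p ∈ s, ¬ p ∣ a * B + A)).card : ℝ)
      - n / d * ∏ p ∈ s, (1 - 1 / (p : ℝ))| ≤ 2 ^ s.card := by
  induction s using Finset.induction_on with
  | empty =>
    intro d hd hB _
    simpa using base_count A B d n hd hB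
  | insert p s hp ih =>
    intro d hd hB hs
    obtain ⟨hpp, hpB, hpd⟩ := hs p (Finset.mem_insert_self _ _)
    have e1 := ih d hd hB (fun r hr => hs r (Finset.mem_insert_of_mem hr))
    have e2 := ih (d * p) (Nat.mul_pos hd hpp.pos) (Nat.Coprime.mul_left hB hpB) (by
      intro r hr
      obtain ⟨h1, h2, h3⟩ := hs r (Finset.mem_insert_of_mem hr)
      refine ⟨h1, h2, Nat.Coprime.mul_right h3 ?_⟩
      rw [Nat.coprime_primes h1 hpp]
      rintro rfl
      exact hp hr)
    have key : ((Finset.range n).filter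
          (fun a => d ∣ a * B + A ∧ ∀ r ∈ s, ¬ r ∣ a * B + A)).card
        = ((Finset.range n).filter
          (fun a => d * p ∣ a * B + A ∧ ∀ r ∈ s, ¬ r ∣ a * B + A)).card
        + ((Finset.range n).filter
          (fun a => d ∣ a * B + A ∧ ∀ r ∈ insert p s, ¬ r ∣ a * B + A)).card := by
      rw [← Finset.card_filter_add_card_filter_not (p := fun a => p ∣ a * B + A)]
      rw [Finset.filter_filter, Finset.filter_filter]
      congr 2
      · apply Finset.filter_congr
        intro a _
        constructor
        · rintro ⟨⟨h1, h2⟩, h3⟩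
          exact ⟨Nat.Coprime.mul_dvd_of_dvd_of_dvd hpd.symm h1 h3, h2⟩
        · rintro ⟨h1, h2⟩
          exact ⟨⟨(dvd_mul_right d p).trans h1, h2⟩, (dvd_mul_left p d).trans h1⟩
      · apply Finset.filter_congr
        intro a _
        rw [Finset.forall_mem_insert]
        tauto
    have key' := congrArg (Nat.cast : ℕ → ℝ) key
    push_cast at key'
    rw [Finset.prod_insert hp, Finset.card_insert_of_notMem hp, pow_succ]
    have hp0 : (p : ℝ) ≠ 0 := by exact_mod_cast hpp.ne_zero
    have hd0 : (d : ℝ) ≠ 0 := by exact_mod_cast hd.ne'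
    set Q := ∏ p ∈ s, (1 - 1 / (p : ℝ))
    have e3 : (n : ℝ) / d * ((1 - 1 / p) * Q) = n / d * Q - n / ((d * p : ℕ) : ℝ) * Q := by
      push_cast
      field_simp
    rw [e3]
    rw [abs_le] at *
    constructor <;> linarith [e1.1, e1.2, e2.1, e2.2]

lemma omega_bound (q : ℕ) (hq : 0 < q) : (16 : ℝ) ^ q.primeFactors.card ≤ 16 ^ 16 * q := by
  have h0 : ∏ p ∈ q.primeFactors, p ≤ q := Nat.le_of_dvd hq (Nat.prod_primeFactors_dvd q)
  have h1 : 16 ^ (q.primeFactors.filter (· < 16)).card ≤ 16 ^ 16 := by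
    apply Nat.pow_le_pow_right (by norm_num)
    calc _ ≤ (Finset.range 16).card := Finset.card_le_card (by
            intro x hx; simp at hx ⊢; exact hx.2)
      _ = 16 := by simp
  have h2 : 16 ^ (q.primeFactors.filter (¬ · < 16)).card ≤ ∏ p ∈ q.primeFactors, p := by
    calc 16 ^ (q.primeFactors.filter (¬ · < 16)).card
        ≤ ∏ p ∈ q.primeFactors.filter (¬ · < 16), p := by
          apply Finset.pow_card_le_prod
          intro x hx; simp at hx; exact hx.2
      _ ≤ _ := by
          apply Finset.prod_le_prod_of_subset_of_one_le' (Finset.filter_subset _ _)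
          intro i hi _
          exact (Nat.prime_of_mem_primeFactors hi).one_le
  have h3 : 16 ^ q.primeFactors.card ≤ 16 ^ 16 * q := by
    rw [← Finset.card_filter_add_card_filter_not (s := q.primeFactors) (p := (· < 16)), pow_add]
    exact Nat.mul_le_mul h1 (h2.trans h0)
  exact_mod_cast h3

lemma gcd_iff (A B q a : ℕ) (hq : 0 < q) (h : Nat.gcd A B = 1) :
    Nat.gcd (a * B + A) q = 1 ↔
      ∀ p ∈ q.primeFactors.filter (fun p => ¬ p ∣ B), ¬ p ∣ a * B + A := by
  constructor
  · intro hg p hp hpd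
    simp at hp
    have : p ∣ Nat.gcd (a * B + A) q := Nat.dvd_gcd hpd hp.1.2.1
    rw [hg] at this
    exact hp.1.1.one_lt.ne' (Nat.dvd_one.1 this)
  · intro H
    by_contra hne
    obtain ⟨p, hp, hpd⟩ := Nat.exists_prime_and_dvd hne
    have h1 := hpd.trans (Nat.gcd_dvd_left _ _)
    have h2 := hpd.trans (Nat.gcd_dvd_right _ _)
    by_cases hB : p ∣ B
    · have h3 : p ∣ A := (Nat.dvd_add_right (hB.mul_left a)).1 h1
      have h4 := Nat.dvd_gcd h3 hB
      rw [h] at h4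
      exact hp.one_lt.ne' (Nat.dvd_one.1 h4)
    · exact H p (by simp [hp, h2, hB, hq.ne']) h1

/-- counting function -/
def cnt (A B q n : ℕ) : ℕ :=
  ((Finset.range n).filter (fun a => Nat.gcd (a * B + A) q = 1)).card

lemma cnt_bound (A B q : ℕ) (hq : 0 < q) (h : Nat.gcd A B = 1) :
    ∃ P w : ℝ, P ≤ 1 ∧ 1 ≤ w ∧ 1 / w ≤ P ∧ w ^ 4 ≤ 16 ^ 16 * q ∧
      ∀ n : ℕ, |(cnt A B q n : ℝ) - n * P| ≤ w := by
  set s := q.primeFactors.filter (fun p => ¬ p ∣ B) with hs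
  have hpr : ∀ p ∈ s, p.Prime := fun p hp => by
    simp [hs] at hp; exact hp.1.1
  have hle : s.card ≤ q.primeFactors.card := Finset.card_filter_le _ _
  refine ⟨∏ p ∈ s, (1 - 1 / (p : ℝ)), 2 ^ s.card, ?_, one_le_pow₀ (by norm_num), ?_, ?_, ?_⟩
  · apply Finset.prod_le_one
    · intro p hp
      have : (1 : ℝ) ≤ p := by exact_mod_cast (hpr p hp).one_le
      rw [sub_nonneg, div_le_one (by linarith)]; exact this
    · intro p hp
      have : (0 : ℝ) ≤ 1 / p := by positivity
      linarith
  · rw [← one_div_pow]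
    rw [← Finset.prod_const]
    apply Finset.prod_le_prod
    · intro p _
      norm_num
    · intro p hp
      have h2 : (2 : ℝ) ≤ p := by exact_mod_cast (hpr p hp).two_le
      have : 1 / (p : ℝ) ≤ 1 / 2 := one_div_le_one_div_of_le (by norm_num) h2
      linarith
  · calc ((2 : ℝ) ^ s.card) ^ 4 = 16 ^ s.card := by rw [← pow_mul, mul_comm, pow_mul]; norm_num
      _ ≤ 16 ^ q.primeFactors.card := pow_le_pow_right₀ (by norm_num) hle
      _ ≤ _ := omega_bound q hq
  · intro n
    have := sieve A B n s 1 one_pos (Nat.coprime_one_left B) (by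
      intro p hp
      refine ⟨hpr p hp, ?_, Nat.coprime_one_right p⟩
      rw [(hpr p hp).coprime_iff_not_dvd]
      simp [hs] at hp; exact hp.2)
    simp only [one_dvd, true_and, Nat.cast_one, div_one] at this
    unfold cnt
    simp only [gcd_iff A B q _ hq h]
    exact this

lemma cnt_Ico (A B q m n : ℕ) (hmn : m ≤ n) :
    cnt A B q n = cnt A B q m +
      ((Finset.Ico m n).filter (fun a => Nat.gcd (a * B + A) q = 1)).card := by
  unfold cnt
  rw [← Finset.card_union_of_disjoint, ← Finset.filter_union]
  · congr 2
    ext x; simp; omega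
  · apply Finset.disjoint_filter_filter
    rw [Finset.disjoint_left]; intro x; simp; omega

lemma vol_I (I : Set ℝ) (hIsub : I ⊆ Set.Icc 0 1) (hIconn : I.OrdConnected)
    (hIne : I.Nonempty) : ∃ α β : ℝ, 0 ≤ α ∧ α ≤ β ∧ β ≤ 1 ∧ Set.Ioo α β ⊆ I ∧
      I ⊆ Set.Icc α β ∧ (volume I).toReal = β - α := by
  have hb : BddBelow I := bddBelow_Icc.mono hIsub
  have ha : BddAbove I := bddAbove_Icc.mono hIsub
  have h1 : Set.Ioo (sInf I) (sSup I) ⊆ I := by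
    rintro x ⟨hx1, hx2⟩
    obtain ⟨y, hy, hyx⟩ := (csInf_lt_iff hb hIne).1 hx1
    obtain ⟨z, hz, hxz⟩ := (lt_csSup_iff ha hIne).1 hx2
    exact hIconn.out hy hz ⟨hyx.le, hxz.le⟩
  have h2 : I ⊆ Set.Icc (sInf I) (sSup I) := fun x hx => ⟨csInf_le hb hx, le_csSup ha hx⟩
  have h3 : sInf I ≤ sSup I := Real.sInf_le_sSup I hb ha
  refine ⟨sInf I, sSup I, le_csInf hIne fun x hx => (hIsub hx).1, h3,
    csSup_le hIne fun x hx => (hIsub hx).2, h1, h2, ?_⟩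
  have h4 : volume I = ENNReal.ofReal (sSup I - sInf I) := by
    apply le_antisymm
    · rw [← Real.volume_Icc]; exact measure_mono h2
    · rw [← Real.volume_Ioo]; exact measure_mono h1
  rw [h4, ENNReal.toReal_ofReal (by linarith)]

lemma main_bound (A B q : ℕ) (hq : 0 < q) (P w : ℝ) (hP1 : P ≤ 1) (hP0 : 0 ≤ P)
    (hc : ∀ n : ℕ, |(cnt A B q n : ℝ) - n * P| ≤ w)
    (I : Set ℝ) (α β : ℝ) (hα : 0 ≤ α) (hαβ : α ≤ β) (hβ : β ≤ 1) (h1 : Set.Ioo α β ⊆ I)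
    (h2 : I ⊆ Set.Icc α β) :
    |(Set.ncard {a : ℕ | a < q ∧ Nat.gcd (a * B + A) q = 1 ∧ (a : ℝ) / q ∈ I} : ℝ)
      - q * (β - α) * P| ≤ 1 + 2 * w := by
  have hq' : (0 : ℝ) < q := by exact_mod_cast hq
  set T := {a : ℕ | a < q ∧ Nat.gcd (a * B + A) q = 1 ∧ (a : ℝ) / q ∈ I} with hT
  have hTf : T.Finite := (Set.finite_Iio q).subset (fun a ha => ha.1)
  have hw : 0 ≤ w := (abs_nonneg _).trans (hc 0)
  have hβ0 : 0 ≤ β := hα.trans hαβ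
  have hαq : α * q ≤ β * q := by gcongr
  have hαq0 : 0 ≤ α * q := by positivity
  have hβq0 : 0 ≤ β * q := by positivity
  rw [abs_le]
  constructor
  · -- lower bound
    by_cases hmn : ⌊α * q⌋₊ + 1 ≤ ⌈β * q⌉₊
    · have k := cnt_Ico A B q _ _ hmn
      have hsub : ((((Finset.Ico (⌊α * q⌋₊ + 1) ⌈β * q⌉₊).filter
          (fun a => Nat.gcd (a * B + A) q = 1) : Finset ℕ)) : Set ℕ) ⊆ T := by
        intro a ha
        simp only [Finset.coe_filter, Finset.mem_Ico, Set.mem_setOf_eq] at ha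
        obtain ⟨⟨ha1, ha2⟩, ha3⟩ := ha
        have ha1' : α * q < a := (Nat.floor_lt hαq0).1 ha1
        have ha2' : (a : ℝ) < β * q := Nat.lt_ceil.1 ha2
        refine ⟨?_, ha3, h1 ⟨?_, ?_⟩⟩
        · have : (a : ℝ) < q := by nlinarith
          exact_mod_cast this
        · rwa [lt_div_iff₀ hq']
        · rwa [div_lt_iff₀ hq']
      have hcard := Set.ncard_le_ncard hsub hTf
      rw [Set.ncard_coe_finset] at hcard
      have hcard' : (cnt A B q ⌈β * q⌉₊ : ℝ) ≤ cnt A B q (⌊α * q⌋₊ + 1) + T.ncard := by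
        exact_mod_cast k ▸ Nat.add_le_add_left hcard _
      have c1 := abs_le.1 (hc ⌈β * q⌉₊)
      have c2 := abs_le.1 (hc (⌊α * q⌋₊ + 1))
      push_cast at c1 c2
      have f1 := Nat.floor_le hαq0
      have f2 := Nat.le_ceil (β * q)
      have g1 : (⌊α * q⌋₊ + 1) * P ≤ (α * q + 1) * P := by gcongr
      have g2 : β * q * P ≤ ⌈β * q⌉₊ * P := by gcongr
      nlinarith [c1.1, c2.2]
    · have f1 := Nat.floor_le hαq0
      have f2 := Nat.le_ceil (β * q)
      have f3 : (⌈β * q⌉₊ : ℝ) ≤ ⌊α * q⌋₊ := by exact_mod_cast (by omega)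
      have f4 : (q * (β - α)) * P ≤ 0 * P := by
        apply mul_le_mul_of_nonneg_right _ hP0
        linarith
      have : (0 : ℝ) ≤ T.ncard := by positivity
      linarith
  · -- upper bound
    have hmn : ⌈α * q⌉₊ ≤ ⌊β * q⌋₊ + 1 := by
      apply Nat.ceil_le.2
      push_cast
      linarith [Nat.lt_floor_add_one (β * q)]
    have k := cnt_Ico A B q _ _ hmn
    have hsub : T ⊆ ((((Finset.Ico ⌈α * q⌉₊ (⌊β * q⌋₊ + 1)).filter
          (fun a => Nat.gcd (a * B + A) q = 1) : Finset ℕ)) : Set ℕ) := by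
      rintro a ⟨_, ha3, ha⟩
      simp only [Finset.coe_filter, Finset.mem_Ico, Set.mem_setOf_eq]
      obtain ⟨ha1, ha2⟩ := h2 ha
      rw [le_div_iff₀ hq'] at ha1
      rw [div_le_iff₀ hq'] at ha2
      exact ⟨⟨Nat.ceil_le.2 ha1, Nat.lt_succ_of_le (Nat.le_floor ha2)⟩, ha3⟩
    have hcard := Set.ncard_le_ncard hsub (Finset.finite_toSet _)
    rw [Set.ncard_coe_finset] at hcard
    have hcard' : (cnt A B q ⌈α * q⌉₊ : ℝ) + T.ncard ≤ cnt A B q (⌊β * q⌋₊ + 1) := by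
      exact_mod_cast k ▸ Nat.add_le_add_left hcard _
    have c1 := abs_le.1 (hc ⌈α * q⌉₊)
    have c2 := abs_le.1 (hc (⌊β * q⌋₊ + 1))
    push_cast at c1 c2
    have f1 := Nat.floor_le hβq0
    have f2 := Nat.le_ceil (α * q)
    have g1 : (⌊β * q⌋₊ + 1) * P ≤ (β * q + 1) * P := by gcongr
    have g2 : α * q * P ≤ ⌈α * q⌉₊ * P := by gcongr
    nlinarith [c1.1, c2.2]

theorem stmt16 (γ : ℝ) (A B : ℕ → ℕ)
    (hAB : ∀ q : ℕ, 1 ≤ q → 0 < A q ∧ 0 < B q ∧ Nat.gcd (A q) (B q) = 1 ∧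
      (B q : ℝ) ≤ Real.sqrt q ∧ |γ - (A q : ℝ) / B q| < 1 / (Real.sqrt q * B q))
    (I : Set ℝ) (hIsub : I ⊆ Set.Icc 0 1) (hIconn : I.OrdConnected)
    (hIne : I.Nonempty) :
    Tendsto (fun q : ℕ =>
      (Set.ncard {a : ℕ | a < q ∧ Nat.gcd (a * B q + A q) q = 1 ∧ (a : ℝ) / q ∈ I} : ℝ) /
        (Set.ncard {a : ℕ | a < q ∧ Nat.gcd (a * B q + A q) q = 1} : ℝ))
      atTop (nhds (volume I).toReal) := by
  obtain ⟨α, β, hα, hαβ, hβ, h1, h2, hvol⟩ := vol_I I hIsub hIconn hIne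
  rw [hvol, tendsto_iff_dist_tendsto_zero]
  have hlim : Tendsto (fun q : ℕ => (8 * 2 ^ 32 : ℝ) / Real.sqrt q) atTop (nhds 0) :=
    Tendsto.div_atTop tendsto_const_nhds
      (Real.tendsto_sqrt_atTop.comp tendsto_natCast_atTop_atTop)
  refine squeeze_zero' (Eventually.of_forall fun _ => dist_nonneg) ?_ hlim
  filter_upwards [eventually_ge_atTop (4 * 16 ^ 16)] with q hqC
  have hq : 0 < q := by omega
  obtain ⟨P, w, hP1, hw1, hwP, hw4, hc⟩ := cnt_bound (A q) (B q) q hq (hAB q hq).2.2.1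
  have hw0 : 0 < w := by linarith
  have hP0 : 0 ≤ P := le_trans (by positivity) hwP
  have hm := main_bound (A q) (B q) q hq P w hP1 hP0 hc I α β hα hαβ hβ h1 h2
  have hden : Set.ncard {a : ℕ | a < q ∧ Nat.gcd (a * B q + A q) q = 1} = cnt (A q) (B q) q q := by
    unfold cnt
    rw [← Set.ncard_coe_finset]
    congr 1
    ext a; simp
  rw [hden]
  have hcq := abs_le.1 (hc q)
  set N : ℝ := (cnt (A q) (B q) q q : ℝ)
  set T : ℝ := (Set.ncard {a : ℕ | a < q ∧ Nat.gcd (a * B q + A q) q = 1 ∧ (a : ℝ) / q ∈ I} : ℝ)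
  have hqC' : (4 * 16 ^ 16 : ℝ) ≤ q := by exact_mod_cast hqC
  have hq' : (0 : ℝ) < q := by exact_mod_cast hq
  set r := Real.sqrt q with hr
  have hr2 : r ^ 2 = q := Real.sq_sqrt hq'.le
  have hr0 : 0 < r := Real.sqrt_pos.2 hq'
  have hrC : (2 ^ 33 : ℝ) ≤ r := by
    apply Real.le_sqrt_of_sq_le
    refine le_trans (by norm_num) hqC'
  have hw2 : w ^ 2 ≤ 2 ^ 32 * r := by
    refine (sq_le_sq₀ (by positivity) (by positivity)).1 ?_
    rw [mul_pow, hr2]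
    calc (w ^ 2) ^ 2 = w ^ 4 := by ring
      _ ≤ _ := hw4
      _ = _ := by norm_num
  have hw2' : w ^ 2 ≤ q / 2 := by nlinarith
  have hqP : (q : ℝ) / w ≤ q * P := by
    rw [div_eq_mul_one_div]; gcongr
  have hN : (q : ℝ) / (2 * w) ≤ N := by
    have e : (q : ℝ) / w = q / (2 * w) + q / (2 * w) := by field_simp; ring
    have e2 : w ≤ q / (2 * w) := by
      rw [le_div_iff₀ (by positivity)]; nlinarith
    linarith [hcq.1]
  have hN0 : 0 < N := lt_of_lt_of_le (by positivity) hN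
  rw [Real.dist_eq, div_sub' hN0.ne', abs_div, abs_of_pos hN0, div_le_iff₀ hN0]
  have hT : |T - N * (β - α)| ≤ 4 * w := by
    have hm' := abs_le.1 hm
    have x1 : (N - q * P) * (β - α) ≤ w * 1 := by
      apply mul_le_mul hcq.2 (by linarith) (by linarith) hw0.le
    have x2 : (q * P - N) * (β - α) ≤ w * 1 := by
      apply mul_le_mul (by linarith [hcq.1]) (by linarith) (by linarith) hw0.le
    rw [abs_le]
    constructor <;> nlinarith [hm'.1, hm'.2]
  refine hT.trans ?_
  calc 4 * w = 8 * w ^ 2 / (2 * w) := by field_simp; norm_num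
    _ ≤ 8 * (2 ^ 32 * r) / (2 * w) := by gcongr
    _ = 8 * 2 ^ 32 / r * (q / (2 * w)) := by rw [← hr2]; field_simp
    _ ≤ _ := by gcongr
end

section
/- Let ψ:ℕ→ℝ≥0 be decreasing with ∑_{q=1}^∞ ψ(q) = ∞, and let γ=(γ_q)_{q≥1} be a sequence of real numbers for which there exist γ₀∈ℝ and C>0 such that |γ_q − γ₀| ≤ C·ψ(q) for all q. Then meas(W(ψ,γ)) = 1. -/
open MeasureTheory

/-- Distance from a real number to the nearest integer. -/
noncomputable def distNearestInt (x : ℝ) : ℝ := |x - round x|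

/-- The set of `α ∈ [0,1]` with `‖qα - γ_q‖ < ψ q` for infinitely many `q ≥ 1`. -/
def WSet (ψ : ℕ → ℝ) (γ : ℕ → ℝ) : Set ℝ :=
  {α | α ∈ Set.Icc (0:ℝ) 1 ∧
    {q : ℕ | 1 ≤ q ∧ distNearestInt (q * α - γ q) < ψ q}.Infinite}


lemma aux_pt (α γ : ℝ) (N : ℕ) (hN : 0 < N) (s : ℚ) (hs : |α - s| ≤ 1 / ((N + 1) * s.den))
    (hd : s.den ≤ N) (hd' : N ≤ 8 * s.den) :
    ∃ (n : ℕ) (m : ℤ), N < n ∧ n ≤ 2 * N ∧ |α - (γ + m) / n| ≤ 9 / (N:ℝ)^2 := by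
  have hq : 0 < s.den := s.pos
  set q := s.den with hqdef
  set p := s.num with hpdef
  have hcop : IsCoprime p (q:ℤ) := by
    rw [Int.isCoprime_iff_gcd_eq_one]
    have := s.reduced
    simpa [Int.gcd, Nat.Coprime] using this
  obtain ⟨u, v, huv⟩ := hcop
  set y : ℝ := N * α - γ with hy
  set a : ℤ := ⌊(q:ℝ) * y⌋ with ha
  -- j ≡ -a u mod q, in [1,q]
  set j₀ : ℤ := (-a * u - 1) % q with hj₀
  have hqz : (0:ℤ) < q := by exact_mod_cast hq
  have hj0 : 0 ≤ j₀ := Int.emod_nonneg _ hqz.ne'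
  have hj1 : j₀ < q := Int.emod_lt_of_pos _ hqz
  obtain ⟨j, hj⟩ := Int.eq_ofNat_of_zero_le hj0
  have hdiv := Int.emod_add_mul_ediv (-a * u - 1) q
  rw [← hj₀, hj] at hdiv
  set w := (-a * u - 1) / (q:ℤ)
  have hjq : j < q := by omega
  have hkey : ((j:ℤ) + 1) * p = -a + q * (a * v - w * p) := by
    have : (j:ℤ) + 1 = -a * u - q * w := by linarith
    rw [this]
    linear_combination (-a) * huv
  refine ⟨N + (j + 1), a * v - w * p, by omega, by omega, ?_⟩
  have hsr : (s:ℝ) = p / q := by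
    rw [hqdef, hpdef]; exact Rat.cast_def s
  have hqr : (0:ℝ) < q := by exact_mod_cast hq
  have hNr : (0:ℝ) < N := by exact_mod_cast hN
  have hkr : ((j:ℝ) + 1) * p = -a + q * ((a * v - w * p : ℤ):ℝ) := by exact_mod_cast hkey
  set m : ℤ := a * v - w * p
  set θ := α - s with hθ
  have hnum : ((N + (j+1) : ℕ):ℝ) * α - γ - m = (q * y - a) / q + ((j:ℝ)+1) * θ := by
    have : α = p / q + θ := by rw [hθ, hsr]; ring
    have h1 : ((j:ℝ)+1) * (p / q) = -a / q + m := by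
      field_simp; linarith
    have h2 : ((N + (j+1) : ℕ):ℝ) * α - γ - m = y + (((j:ℝ)+1) * (p/q) + ((j:ℝ)+1)*θ) - m := by
      rw [hy]; push_cast; linear_combination ((j:ℝ)+1) * this
    rw [h2, h1]; field_simp; ring
  have hf1 : |(q * y - a) / q| ≤ 1 / q := by
    rw [abs_div, abs_of_pos hqr]
    gcongr
    have h1 := Int.floor_le ((q:ℝ) * y)
    have h2 := Int.lt_floor_add_one ((q:ℝ) * y)
    rw [abs_le]; constructor <;> linarith
  have hf2 : |((j:ℝ)+1) * θ| ≤ 1 / N := by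
    rw [abs_mul, abs_of_pos (by positivity)]
    have hjr : (j:ℝ) + 1 ≤ q := by exact_mod_cast hjq
    calc ((j:ℝ)+1) * |θ| ≤ q * (1 / ((N+1) * q)) := by gcongr
      _ = 1 / (N + 1) := by field_simp
      _ ≤ 1 / N := by gcongr; linarith
  have hq8 : 1 / (q:ℝ) ≤ 8 / N := by
    rw [div_le_div_iff₀ hqr hNr]
    have : (N:ℝ) ≤ 8 * q := by exact_mod_cast hd'
    linarith
  have hn : (N:ℝ) ≤ ((N + (j+1) : ℕ):ℝ) := by push_cast; linarith [(Nat.cast_nonneg j : (0:ℝ) ≤ j)]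
  set n := N + (j+1)
  have hnp : (0:ℝ) < n := by linarith
  have hlast : |(n:ℝ) * α - γ - m| ≤ 9 / N := by
    rw [hnum]
    have h9 : 8 / (N:ℝ) + 1 / N = 9 / N := by ring
    have habs := abs_add_le ((q * y - a) / q) (((j:ℝ)+1) * θ)
    linarith
  have : α - (γ + m) / n = ((n:ℝ) * α - γ - m) / n := by field_simp; ring
  rw [this, abs_div, abs_of_pos hnp]
  calc _ ≤ (9 / N) / (N:ℝ) := by gcongr
    _ = _ := by field_simp

/-- points well approximated at scale N -/
def GoodS (γ : ℝ) (N : ℕ) : Set ℝ :=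
  {α | ∃ (n : ℕ) (m : ℤ), N < n ∧ n ≤ 2 * N ∧ |α - (γ + m) / n| ≤ 9 / (N:ℝ)^2}

lemma aux_bad (γ x r : ℝ) (hr : 0 < r) :
    ∃ N₁ : ℕ, ∀ N ≥ N₁, volume.real (Metric.closedBall x r \ GoodS γ N) ≤ r := by
  have hces : Filter.Tendsto (fun n : ℕ => (n:ℝ)⁻¹ * ∑ i ∈ Finset.range n, (1:ℝ) / (i + 1))
      Filter.atTop (nhds 0) := by
    have := (tendsto_one_div_add_atTop_nhds_zero_nat (𝕜 := ℝ)).cesaro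
    simpa using this
  have hev := hces.eventually (gt_mem_nhds (show (0:ℝ) < r / 12 by positivity))
  obtain ⟨N₁, hN₁⟩ := Filter.eventually_atTop.1 hev
  refine ⟨max N₁ 1, fun N hN => ?_⟩
  have hN1 : 0 < N := by have := le_of_max_le_right hN; omega
  have hNr : (0:ℝ) < N := by exact_mod_cast hN1
  have hc := hN₁ N (le_of_max_le_left hN)
  set Q := (Finset.range N).filter (fun i => 8 * (i + 1) < N) with hQ
  let P : ℕ → Finset ℤ := fun i =>
    Finset.Icc ⌈((i:ℝ)+1) * (x - r) - 1⌉ ⌊((i:ℝ)+1) * (x + r) + 1⌋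
  have hsub : Metric.closedBall x r \ GoodS γ N ⊆
      ⋃ i ∈ Q, ⋃ p ∈ P i, Metric.closedBall ((p:ℝ) / ((i:ℝ)+1)) (1 / (N * ((i:ℝ)+1))) := by
    rintro α ⟨hα, hg⟩
    obtain ⟨s, hs, hd⟩ := Real.exists_rat_abs_sub_le_and_den_le α hN1
    have hlt : 8 * s.den < N := by
      by_contra hcon
      exact hg (aux_pt α γ N hN1 s hs hd (by omega))
    have hpos := s.pos
    obtain ⟨i, hi⟩ : ∃ i, s.den = i + 1 := ⟨s.den - 1, by omega⟩
    have hsr : (s:ℝ) = s.num / ((i:ℝ)+1) := by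
      have := Rat.cast_def (K := ℝ) s
      rw [this, hi]; push_cast; rfl
    have hir : (0:ℝ) < (i:ℝ) + 1 := by positivity
    have hs' : |α - s.num / ((i:ℝ)+1)| ≤ 1 / (N * ((i:ℝ)+1)) := by
      rw [hi, hsr] at hs
      refine hs.trans ?_
      push_cast
      gcongr
      linarith
    have hs2 : |((i:ℝ)+1) * α - s.num| ≤ 1 := by
      have h1 : ((i:ℝ)+1) * α - s.num = ((i:ℝ)+1) * (α - s.num / ((i:ℝ)+1)) := by field_simp
      rw [h1, abs_mul, abs_of_pos hir]
      calc _ ≤ ((i:ℝ)+1) * (1 / (N * ((i:ℝ)+1))) := by gcongr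
        _ = 1 / N := by field_simp
        _ ≤ 1 := by
          rw [div_le_one hNr]; exact_mod_cast hN1
    rw [Metric.mem_closedBall, Real.dist_eq, abs_le] at hα
    rw [abs_le] at hs2
    simp only [Set.mem_iUnion, exists_prop]
    refine ⟨i, ?_, s.num, ?_, ?_⟩
    · simp only [hQ, Finset.mem_filter, Finset.mem_range]; omega
    · simp only [P, Finset.mem_Icc]
      constructor
      · rw [Int.ceil_le]; nlinarith
      · rw [Int.le_floor]; nlinarith
    · rw [Metric.mem_closedBall, Real.dist_eq]; exact hs'
  have hcard : ∀ i, ((P i).card : ℝ) ≤ 2 * ((i:ℝ)+1) * r + 3 := by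
    intro i
    have hir : (0:ℝ) < (i:ℝ) + 1 := by positivity
    simp only [P, Int.card_Icc]
    have h1 := Int.le_ceil (((i:ℝ)+1) * (x - r) - 1)
    have h2 := Int.floor_le (((i:ℝ)+1) * (x + r) + 1)
    set c := ⌈((i:ℝ)+1) * (x - r) - 1⌉
    set d := ⌊((i:ℝ)+1) * (x + r) + 1⌋
    rcases le_total 0 (d + 1 - c) with h | h
    · have : (((d + 1 - c).toNat : ℕ):ℝ) = ((d + 1 - c : ℤ) : ℝ) := by
        exact_mod_cast congrArg (Int.cast (R := ℝ)) (Int.toNat_of_nonneg h)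
      rw [this]; push_cast; linarith
    · rw [Int.toNat_of_nonpos h]; push_cast; positivity
  have hfin : volume (⋃ i ∈ Q, ⋃ p ∈ P i, Metric.closedBall ((p:ℝ) / ((i:ℝ)+1)) (1 / (N * ((i:ℝ)+1)))) ≠ ⊤ := by
    apply ne_of_lt
    refine (measure_biUnion_lt_top Q.finite_toSet fun i _ => ?_)
    exact measure_biUnion_lt_top (P i).finite_toSet fun p _ => measure_closedBall_lt_top
  calc volume.real (Metric.closedBall x r \ GoodS γ N)
      ≤ volume.real (⋃ i ∈ Q, ⋃ p ∈ P i, Metric.closedBall ((p:ℝ) / ((i:ℝ)+1)) (1 / (N * ((i:ℝ)+1)))) :=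
        measureReal_mono hsub hfin
    _ ≤ ∑ i ∈ Q, volume.real (⋃ p ∈ P i, Metric.closedBall ((p:ℝ) / ((i:ℝ)+1)) (1 / (N * ((i:ℝ)+1)))) :=
        measureReal_biUnion_finset_le _ _
    _ ≤ ∑ i ∈ Q, ∑ p ∈ P i, volume.real (Metric.closedBall ((p:ℝ) / ((i:ℝ)+1)) (1 / (N * ((i:ℝ)+1)))) :=
        Finset.sum_le_sum fun i _ => measureReal_biUnion_finset_le _ _
    _ = ∑ i ∈ Q, (P i).card * (2 * (1 / (N * ((i:ℝ)+1)))) := by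
        refine Finset.sum_congr rfl fun i _ => ?_
        rw [Finset.sum_congr rfl fun p _ => Real.volume_real_closedBall (by positivity)]
        simp
    _ ≤ ∑ i ∈ Q, (2 * ((i:ℝ)+1) * r + 3) * (2 * (1 / (N * ((i:ℝ)+1)))) := by
        refine Finset.sum_le_sum fun i _ => ?_
        gcongr
        exact hcard i
    _ = ∑ i ∈ Q, (4 * r / N) + 6 * ((N:ℝ)⁻¹ * ∑ i ∈ Q, (1:ℝ) / (i+1)) := by
        rw [Finset.mul_sum, Finset.mul_sum, ← Finset.sum_add_distrib]
        refine Finset.sum_congr rfl fun i _ => ?_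
        have hir : (0:ℝ) < (i:ℝ) + 1 := by positivity
        field_simp
        ring
    _ ≤ r / 2 + 6 * (r / 12) := by
        gcongr ?_ + 6 * ?_
        · rw [Finset.sum_const, nsmul_eq_mul]
          have hQc : 8 * Q.card ≤ N := by
            have : Q ⊆ Finset.range (N / 8) := by
              intro i hi
              simp only [hQ, Finset.mem_filter, Finset.mem_range] at hi ⊢
              omega
            have := Finset.card_le_card this
            rw [Finset.card_range] at this
            omega
          have hQr : 8 * (Q.card:ℝ) ≤ N := by exact_mod_cast hQc
          rw [← mul_div_assoc, div_le_div_iff₀ hNr (by norm_num)]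
          nlinarith
        · refine le_trans ?_ hc.le
          gcongr
          exact Finset.filter_subset _ _
    _ = r := by ring

lemma aux_abs (X : ℕ → Finset ℝ) (δ t : ℕ → ℝ) (L : ℝ) (hL : 0 < L) (hδ : ∀ k, 0 < δ k)
    (hδs : ∀ k, δ (k+1) = δ k / 1024) (ht0 : ∀ k, 0 ≤ t k) (ht1 : ∀ k, t k ≤ 1)
    (hdisj : ∀ k, (X k : Set ℝ).PairwiseDisjoint fun y => Metric.closedBall y (δ k))
    (hlo : ∀ k, L / 20 ≤ (X k).card * δ k) (hhi : ∀ k, (X k).card * δ k ≤ L)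
    (hdiv : ¬ Summable t) :
    ∃ n : ℕ, L / 1600 ≤ volume.real
      (⋃ k ∈ Finset.range n, ⋃ y ∈ X k, Metric.closedBall y (t k * δ k)) := by
  set A : ℕ → Set ℝ := fun k => ⋃ y ∈ X k, Metric.closedBall y (t k * δ k) with hA
  have htd : ∀ k, 0 ≤ t k * δ k := fun k => mul_nonneg (ht0 k) (hδ k).le
  have htd' : ∀ k, t k * δ k ≤ δ k := fun k => by nlinarith [hδ k, ht1 k]
  have hAfin : ∀ k, volume (A k) ≠ ⊤ := fun k =>
    (measure_biUnion_lt_top (X k).finite_toSet fun p _ => measure_closedBall_lt_top).ne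
  have hAm : ∀ k, MeasurableSet (A k) := fun k =>
    Finset.measurableSet_biUnion _ fun y _ => measurableSet_closedBall
  have hAvol : ∀ k, volume.real (A k) = 2 * t k * ((X k).card * δ k) := by
    intro k
    rw [hA]
    simp only
    rw [measureReal_biUnion_finset (h := fun y _ => measure_closedBall_lt_top.ne)]
    · rw [Finset.sum_congr rfl fun p _ => Real.volume_real_closedBall (htd k)]
      simp; ring
    · exact (hdisj k).mono fun y => Metric.closedBall_subset_closedBall (htd' k)
    · exact fun y _ => measurableSet_closedBall
  -- overlap of A n with a ball
  have hball : ∀ n (z ρ : ℝ), 0 ≤ ρ → volume.real (A n ∩ Metric.closedBall z ρ) ≤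
      2 * t n * (ρ + 2 * δ n) := by
    intro n z ρ hρ
    classical
    set Y := (X n).filter (fun y => |y - z| ≤ ρ + δ n) with hY
    have hsub : A n ∩ Metric.closedBall z ρ ⊆ ⋃ y ∈ Y, Metric.closedBall y (t n * δ n) := by
      rintro w ⟨hw, hwz⟩
      simp only [hA, Set.mem_iUnion, exists_prop] at hw ⊢
      obtain ⟨y, hy, hwy⟩ := hw
      refine ⟨y, ?_, hwy⟩
      simp only [hY, Finset.mem_filter]
      refine ⟨hy, ?_⟩
      rw [Metric.mem_closedBall, Real.dist_eq] at hwy hwz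
      have h1 := abs_sub_le y w z
      rw [abs_sub_comm y w] at h1
      linarith [htd' n]
    have hYc : (Y.card : ℝ) * (2 * δ n) ≤ 2 * (ρ + 2 * δ n) := by
      have e : volume.real (⋃ y ∈ Y, Metric.closedBall y (δ n)) = Y.card * (2 * δ n) := by
        rw [measureReal_biUnion_finset (h := fun y _ => measure_closedBall_lt_top.ne)]
        · rw [Finset.sum_congr rfl fun p _ => Real.volume_real_closedBall (hδ n).le]
          simp
        · exact (hdisj n).subset (by rw [hY]; exact_mod_cast Finset.filter_subset _ _)
        · exact fun y _ => measurableSet_closedBall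
      rw [← e, ← Real.volume_real_closedBall (a := z) (by linarith [hδ n])]
      refine measureReal_mono ?_ measure_closedBall_lt_top.ne
      refine Set.iUnion₂_subset fun y hy => ?_
      simp only [hY, Finset.mem_filter] at hy
      apply Metric.closedBall_subset_closedBall'
      rw [Real.dist_eq]; linarith
    calc _ ≤ volume.real (⋃ y ∈ Y, Metric.closedBall y (t n * δ n)) :=
          measureReal_mono hsub (measure_biUnion_lt_top Y.finite_toSet fun p _ => measure_closedBall_lt_top).ne
      _ ≤ ∑ y ∈ Y, volume.real (Metric.closedBall y (t n * δ n)) := measureReal_biUnion_finset_le _ _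
      _ = Y.card * (2 * (t n * δ n)) := by
        rw [Finset.sum_congr rfl fun p _ => Real.volume_real_closedBall (htd n)]
        simp
      _ = t n * (Y.card * (2 * δ n)) := by ring
      _ ≤ t n * (2 * (ρ + 2 * δ n)) := mul_le_mul_of_nonneg_left hYc (ht0 n)
      _ = _ := by ring
  have hov : ∀ n k, volume.real (A n ∩ A k) ≤ 2 * t n * L * (t k + 2 * (δ n / δ k)) := by
    intro n k
    have e : A n ∩ A k = ⋃ y ∈ X k, (A n ∩ Metric.closedBall y (t k * δ k)) := by
      conv_lhs => rw [hA]
      simp only [Set.inter_iUnion₂]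
      rfl
    rw [e]
    calc _ ≤ ∑ y ∈ X k, volume.real (A n ∩ Metric.closedBall y (t k * δ k)) :=
          measureReal_biUnion_finset_le _ _
      _ ≤ ∑ y ∈ X k, 2 * t n * (t k * δ k + 2 * δ n) :=
          Finset.sum_le_sum fun y _ => hball n y _ (htd k)
      _ = 2 * t n * ((X k).card * δ k) * (t k + 2 * (δ n / δ k)) := by
        rw [Finset.sum_const, nsmul_eq_mul]
        have := (hδ k).ne'
        field_simp
      _ ≤ _ := by
        have h1 := ht0 n
        have h2 := ht0 k
        have h3 : 0 ≤ δ n / δ k := div_nonneg (hδ n).le (hδ k).le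
        gcongr
        exact hhi k
  have hgeo : ∀ n, ∑ k ∈ Finset.range n, δ n / δ k ≤ 1 / 1023 := by
    intro n
    induction n with
    | zero => simp
    | succ n ih =>
      rw [Finset.sum_range_succ]
      have h1 : ∑ k ∈ Finset.range n, δ (n+1) / δ k = (∑ k ∈ Finset.range n, δ n / δ k) / 1024 := by
        rw [Finset.sum_div]
        refine Finset.sum_congr rfl fun k _ => ?_
        rw [hδs]; ring
      have h2 : δ (n+1) / δ n = 1 / 1024 := by
        rw [hδs]; have := (hδ n).ne'; field_simp
      rw [h1, h2]; linarith
  set U : ℕ → Set ℝ := fun n => ⋃ k ∈ Finset.range n, A k with hU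
  have hUm : ∀ n, MeasurableSet (U n) := fun n =>
    Finset.measurableSet_biUnion _ fun k _ => hAm k
  have hUfin : ∀ n, volume (U n) ≠ ⊤ := fun n =>
    (measure_biUnion_lt_top (Finset.range n).finite_toSet fun k _ => (hAfin k).lt_top).ne
  have hUs : ∀ n, U (n+1) = U n ∪ A n := by
    intro n
    simp only [hU, Finset.range_add_one, Finset.set_biUnion_insert]
    exact Set.union_comm _ _
  have hmain : ∀ n, min (∑ k ∈ Finset.range n, t k) (1/80) * (L / 20) ≤ volume.real (U n) := by
    intro n
    induction n with
    | zero => simp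
    | succ n ih =>
      set T := ∑ k ∈ Finset.range n, t k with hT
      rw [Finset.sum_range_succ, ← hT]
      have hmono : volume.real (U n) ≤ volume.real (U (n+1)) :=
        measureReal_mono (by rw [hUs]; exact Set.subset_union_left) (hUfin _)
      rcases le_total T (1/80) with h | h
      · have hinc : volume.real (U n ∪ A n) + volume.real (A n ∩ U n) =
            volume.real (U n) + volume.real (A n) := by
          rw [Set.inter_comm]
          exact measureReal_union_add_inter (hAm n) (hUfin n) (hAfin n)
        have hint : volume.real (A n ∩ U n) ≤ 2 * t n * L * (T + 2 * (1/1023)) := by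
          have e : A n ∩ U n = ⋃ k ∈ Finset.range n, (A n ∩ A k) := by
            simp only [hU, Set.inter_iUnion₂]
          rw [e]
          calc _ ≤ ∑ k ∈ Finset.range n, volume.real (A n ∩ A k) := measureReal_biUnion_finset_le _ _
            _ ≤ ∑ k ∈ Finset.range n, 2 * t n * L * (t k + 2 * (δ n / δ k)) :=
              Finset.sum_le_sum fun k _ => hov n k
            _ = 2 * t n * L * (T + 2 * ∑ k ∈ Finset.range n, δ n / δ k) := by
              rw [← Finset.mul_sum, Finset.sum_add_distrib, ← Finset.mul_sum]
            _ ≤ _ := by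
              have h1 := ht0 n
              gcongr
              exact hgeo n
        have hv := hAvol n
        have hlo' : 2 * t n * (L/20) ≤ 2 * t n * ((X n).card * δ n) :=
          mul_le_mul_of_nonneg_left (hlo n) (by linarith [ht0 n])
        have htL : 0 ≤ t n * L := mul_nonneg (ht0 n) hL.le
        have hTt : t n * L * T ≤ t n * L * (1/80) := mul_le_mul_of_nonneg_left h htL
        rw [min_eq_left h] at ih
        rw [hUs]
        have : min (T + t n) (1/80) * (L/20) ≤ (T + t n) * (L/20) := by
          gcongr; exact min_le_left _ _
        nlinarith
      · rw [min_eq_right h] at ih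
        refine le_trans ?_ (ih.trans hmono)
        gcongr
        exact min_le_right _ _
  have htend := (not_summable_iff_tendsto_nat_atTop_of_nonneg ht0).1 hdiv
  obtain ⟨n, hn⟩ := (htend.eventually_ge_atTop (1/80)).exists
  refine ⟨n, ?_⟩
  have := hmain n
  rw [min_eq_right hn] at this
  calc L / 1600 = 1/80 * (L/20) := by ring
    _ ≤ _ := this

lemma aux_sep (γ x r : ℝ) (hr : 0 < r) :
    ∃ N₁ : ℕ, ∀ N ≥ N₁, ∃ X : Finset ℝ,
      (∀ y ∈ X, ∃ (n : ℕ) (m : ℤ), N < n ∧ n ≤ 2 * N ∧ y = (γ + m) / n) ∧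
      (∀ y ∈ X, Metric.closedBall y (9 / (N:ℝ)^2) ⊆ Metric.closedBall x (2 * r)) ∧
      ((X : Set ℝ).PairwiseDisjoint fun y => Metric.closedBall y (9 / (N:ℝ)^2)) ∧
      r / 10 ≤ X.card * (9 / (N:ℝ)^2) ∧ X.card * (9 / (N:ℝ)^2) ≤ 2 * r := by
  obtain ⟨N₁, hN₁⟩ := aux_bad γ x r hr
  obtain ⟨N₂, hN₂⟩ := exists_nat_ge (18 / r)
  refine ⟨max N₁ (max N₂ 1), fun N hN => ?_⟩
  have h1 : N₁ ≤ N := le_of_max_le_left hN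
  have h2 : N₂ ≤ N := le_of_max_le_left (le_of_max_le_right hN)
  have h3 : 1 ≤ N := le_of_max_le_right (le_of_max_le_right hN)
  have h3r : (1:ℝ) ≤ N := by exact_mod_cast h3
  have hNr : (0:ℝ) < N := by linarith
  set δ : ℝ := 9 / (N:ℝ)^2 with hδ
  have hδ0 : 0 < δ := by positivity
  have hδr : 2 * δ ≤ r := by
    have : 18 / r ≤ N := hN₂.trans (by exact_mod_cast h2)
    rw [div_le_iff₀ hr] at this
    rw [hδ, ← mul_div_assoc, div_le_iff₀ (by positivity)]
    nlinarith
  set t : Set ℝ := {y | |y - x| ≤ r + δ ∧ ∃ (n : ℕ) (m : ℤ), N < n ∧ n ≤ 2 * N ∧ y = (γ + m) / n}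
    with ht
  have htfin : t.Finite := by
    obtain ⟨b, hb⟩ := exists_nat_ge (2 * N * (|x| + r + δ) + |γ|)
    refine Set.Finite.subset (((Finset.Icc 1 (2 * N)) ×ˢ (Finset.Icc (-(b:ℤ)) b)).finite_toSet.image
      (fun z : ℕ × ℤ => (γ + z.2) / (z.1:ℝ))) ?_
    rintro y ⟨hy, n, m, hn, hn', rfl⟩
    refine ⟨(n, m), ?_, rfl⟩
    have hnr : (0:ℝ) < n := by exact_mod_cast (by omega : 0 < n)
    have hnr2 : (n:ℝ) ≤ 2 * N := by exact_mod_cast hn'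
    have hm : |(m:ℝ)| ≤ b := by
      refine le_trans ?_ hb
      have e : (m:ℝ) = n * ((γ + m) / n) - γ := by field_simp; ring
      have e2 : |(γ + m) / (n:ℝ)| ≤ |x| + r + δ := by
        have := abs_sub_abs_le_abs_sub ((γ + m) / (n:ℝ)) x
        linarith
      calc |(m:ℝ)| = |n * ((γ + m) / n) - γ| := by rw [← e]
        _ ≤ |n * ((γ + m) / n)| + |γ| := abs_sub _ _
        _ = n * |(γ + m) / (n:ℝ)| + |γ| := by rw [abs_mul, abs_of_pos hnr]
        _ ≤ 2 * N * (|x| + r + δ) + |γ| := by gcongr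
    rw [abs_le] at hm
    simp only [Finset.coe_product, Finset.coe_Icc, Set.mem_prod, Set.mem_Icc]
    exact ⟨⟨by omega, hn'⟩, by exact_mod_cast hm.1, by exact_mod_cast hm.2⟩
  obtain ⟨u, hut, hdisj, hcov⟩ := Vitali.exists_disjoint_subfamily_covering_enlargement_closedBall
    t (fun y => y) (fun _ => δ) δ (fun _ _ => le_rfl) 5 (by norm_num)
  lift u to Finset ℝ using htfin.subset hut
  have hcont : ∀ y ∈ u, Metric.closedBall y δ ⊆ Metric.closedBall x (2 * r) := by
    intro y hy
    have := (hut hy).1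
    apply Metric.closedBall_subset_closedBall'
    rw [Real.dist_eq]; linarith
  refine ⟨u, fun y hy => (hut hy).2, hcont, hdisj, ?_, ?_⟩
  · have hsub : Metric.closedBall x r ⊆ (Metric.closedBall x r \ GoodS γ N) ∪
        ⋃ y ∈ u, Metric.closedBall y (5 * δ) := by
      intro α hα
      by_cases hg : α ∈ GoodS γ N
      · right
        obtain ⟨n, m, hn, hn', hnm⟩ := hg
        rw [Metric.mem_closedBall, Real.dist_eq] at hα
        have hyt : (γ + m) / (n:ℝ) ∈ t := by
          refine ⟨?_, n, m, hn, hn', rfl⟩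
          have := abs_sub_le ((γ + m) / (n:ℝ)) α x
          rw [abs_sub_comm _ α] at this
          linarith
        obtain ⟨y, hy, hsub⟩ := hcov _ hyt
        simp only [Set.mem_iUnion, exists_prop]
        exact ⟨y, hy, hsub (by rw [Metric.mem_closedBall, Real.dist_eq]; exact hnm)⟩
      · left; exact ⟨hα, hg⟩
    have hb := hN₁ N h1
    have hfin : volume (⋃ y ∈ u, Metric.closedBall y (5 * δ)) ≠ ⊤ :=
      (measure_biUnion_lt_top u.finite_toSet fun p _ => measure_closedBall_lt_top).ne
    have hfin2 : volume (Metric.closedBall x r \ GoodS γ N) ≠ ⊤ :=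
      ((measure_mono Set.sdiff_subset).trans_lt measure_closedBall_lt_top).ne
    have : 2 * r ≤ r + u.card * (2 * (5 * δ)) := by
      calc 2 * r = volume.real (Metric.closedBall x r) := (Real.volume_real_closedBall hr.le).symm
        _ ≤ _ := measureReal_mono hsub (by
            exact (measure_union_lt_top hfin2.lt_top hfin.lt_top).ne)
        _ ≤ _ := measureReal_union_le _ _
        _ ≤ r + ∑ y ∈ u, volume.real (Metric.closedBall y (5 * δ)) :=
          add_le_add hb (measureReal_biUnion_finset_le _ _)
        _ = _ := by
          rw [Finset.sum_congr rfl fun p _ => Real.volume_real_closedBall (by positivity)]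
          simp
    linarith
  · have e : volume.real (⋃ y ∈ u, Metric.closedBall y δ) = u.card * (2 * δ) := by
      rw [measureReal_biUnion_finset (h := fun y _ => measure_closedBall_lt_top.ne)]
      · rw [Finset.sum_congr rfl fun p _ => Real.volume_real_closedBall hδ0.le]
        simp
      · exact hdisj
      · exact fun y _ => measurableSet_closedBall
    have h4 : volume.real (⋃ y ∈ u, Metric.closedBall y δ) ≤ 2 * (2 * r) := by
      rw [← Real.volume_real_closedBall (a := x) (by linarith)]
      exact measureReal_mono (Set.iUnion₂_subset hcont) measure_closedBall_lt_top.ne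
    linarith

lemma aux_div (ψ : ℕ → ℝ) (hψ0 : ∀ q, 0 ≤ ψ q)
    (hψdec : ∀ q r : ℕ, 1 ≤ q → q ≤ r → ψ r ≤ ψ q) (hdiv : ¬ Summable ψ) (k₀ : ℕ) :
    ¬ Summable (fun k : ℕ => min 1 (((32:ℝ)^(k + k₀)) * ψ (2 * 32^(k + k₀)) / 18)) := by
  intro h
  apply hdiv
  have hlt := h.tendsto_atTop_zero.eventually (gt_mem_nhds one_pos)
  have h2 : Summable (fun k : ℕ => (((32:ℝ)^(k + k₀)) * ψ (2 * 32^(k + k₀)) / 18)) := by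
    refine h.congr_atTop ?_
    filter_upwards [hlt] with k hk
    rcases min_lt_iff.1 hk with h | h
    · exact absurd h (lt_irrefl _)
    · exact min_eq_right h.le
  have h3 : Summable (fun k : ℕ => (((32:ℝ)^k) * ψ (2 * 32^k) / 18)) :=
    (summable_nat_add_iff (f := fun k : ℕ => (((32:ℝ)^k) * ψ (2 * 32^k) / 18)) k₀).1 h2
  have hu : StrictMono (fun k : ℕ => 2 * 32^k) := by
    apply strictMono_nat_of_lt_succ
    intro k
    have : 0 < 32^k := by positivity
    rw [pow_succ]; omega
  rw [← summable_schlomilch_iff_of_nonneg (C := 32) (u := fun k : ℕ => 2 * 32^k) hψ0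
    (fun m n hm hmn => hψdec m n hm hmn) (fun n => by positivity) hu (by norm_num) ?_]
  · refine (h3.mul_left (62 * 18)).congr fun k => ?_
    push_cast
    ring
  · intro n
    simp only [smul_eq_mul, pow_succ]
    omega

lemma aux_local (ψ : ℕ → ℝ) (hψ0 : ∀ q, 0 ≤ ψ q)
    (hψdec : ∀ q r : ℕ, 1 ≤ q → q ≤ r → ψ r ≤ ψ q) (hdiv : ¬ Summable ψ)
    (γ x r : ℝ) (hr : 0 < r) (N₀ : ℕ) :
    ∃ U : Set ℝ, MeasurableSet U ∧ U ⊆ Metric.closedBall x (2 * r) ∧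
      (∀ α ∈ U, ∃ n ≥ N₀, 0 < n ∧ ∃ m : ℤ, |α - (γ + m) / n| ≤ ψ n / n) ∧
      r / 800 ≤ volume.real U := by
  obtain ⟨N₁, hN₁⟩ := aux_sep γ x r hr
  set k₀ := max N₀ N₁ with hk₀
  let Nf : ℕ → ℕ := fun k => 32^(k + k₀)
  have hNf : ∀ k, k₀ ≤ Nf k := by
    intro k
    have : k + k₀ < 32^(k + k₀) := Nat.lt_pow_self (by norm_num)
    simp only [Nf]; omega
  have hNp : ∀ k, (0:ℝ) < Nf k := fun k => by simp only [Nf]; positivity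
  choose X hX1 hX2 hX3 hX4 hX5 using fun k => hN₁ (Nf k) ((le_max_right _ _).trans (hNf k))
  set t : ℕ → ℝ := fun k => min 1 (((32:ℝ)^(k + k₀)) * ψ (2 * 32^(k + k₀)) / 18) with ht
  have ht0 : ∀ k, 0 ≤ t k := fun k => le_min zero_le_one (by have := hψ0 (2 * 32^(k + k₀)); positivity)
  have htρ : ∀ k, t k * (9 / (Nf k:ℝ)^2) ≤ ψ (2 * Nf k) / (2 * Nf k) := by
    intro k
    have h1 : t k ≤ Nf k * ψ (2 * Nf k) / 18 := by
      refine (min_le_right _ _).trans (le_of_eq ?_)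
      simp [Nf]
    have := hNp k
    calc _ ≤ Nf k * ψ (2 * Nf k) / 18 * (9 / (Nf k:ℝ)^2) := by gcongr
      _ = _ := by field_simp; ring
  obtain ⟨n, hn⟩ := aux_abs X (fun k => 9 / (Nf k:ℝ)^2) t (2 * r) (by positivity)
    (fun k => by have := hNp k; positivity)
    (fun k => by simp only [Nf]; push_cast; field_simp; ring)
    ht0 (fun k => min_le_left _ _) hX3
    (fun k => by have := hX4 k; linarith) hX5 (aux_div ψ hψ0 hψdec hdiv k₀)
  refine ⟨⋃ k ∈ Finset.range n, ⋃ y ∈ X k, Metric.closedBall y (t k * (9 / (Nf k:ℝ)^2)), ?_, ?_, ?_, ?_⟩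
  rotate_left 3
  · exact le_trans (by linarith) hn
  · exact Finset.measurableSet_biUnion _ fun k _ =>
      Finset.measurableSet_biUnion _ fun y _ => measurableSet_closedBall
  · refine Set.iUnion₂_subset fun k _ => Set.iUnion₂_subset fun y hy => ?_
    refine (Metric.closedBall_subset_closedBall ?_).trans (hX2 k y hy)
    have : 0 ≤ 9 / (Nf k:ℝ)^2 := by positivity
    have h1 : t k ≤ 1 := min_le_left _ _
    nlinarith
  · intro α hα
    simp only [Set.mem_iUnion, exists_prop] at hα
    obtain ⟨k, _, y, hy, hαy⟩ := hα
    obtain ⟨n, m, hn1, hn2, rfl⟩ := hX1 k y hy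
    have hk := hNf k
    have hN0 : N₀ ≤ k₀ := le_max_left _ _
    have hn0 : 0 < n := by omega
    refine ⟨n, by omega, hn0, m, ?_⟩
    rw [Metric.mem_closedBall, Real.dist_eq] at hαy
    refine hαy.trans ((htρ k).trans ?_)
    have hnr : (0:ℝ) < n := by exact_mod_cast hn0
    have h1 := hψdec n (2 * Nf k) hn0 hn2
    have h2 : (n:ℝ) ≤ 2 * Nf k := by exact_mod_cast hn2
    have := hψ0 n
    gcongr

lemma aux_ae (ψ : ℕ → ℝ) (hψ0 : ∀ q, 0 ≤ ψ q)
    (hψdec : ∀ q r : ℕ, 1 ≤ q → q ≤ r → ψ r ≤ ψ q) (hdiv : ¬ Summable ψ) (γ : ℝ) :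
    ∀ᵐ α : ℝ, ∀ N₀ : ℕ, ∃ n ≥ N₀, 0 < n ∧ ∃ m : ℤ, |α - (γ + m) / n| ≤ ψ n / n := by
  rw [ae_all_iff]
  intro N₀
  rw [ae_iff]
  set E : Set ℝ := {α | ¬ ∃ n ≥ N₀, 0 < n ∧ ∃ m : ℤ, |α - (γ + m) / n| ≤ ψ n / n} with hE
  by_contra hne
  have hden := Besicovitch.ae_tendsto_measure_inter_div (volume : Measure ℝ) E
  have : (ae ((volume : Measure ℝ).restrict E)).NeBot := ae_restrict_neBot.2 hne
  obtain ⟨x, hx⟩ := hden.exists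
  have hlt : ENNReal.ofReal (1 - 1/3200) < 1 := by
    rw [ENNReal.ofReal_lt_one]; norm_num
  have hev := hx.eventually (lt_mem_nhds hlt)
  obtain ⟨R, hR, hR0⟩ := (hev.and self_mem_nhdsWithin).exists
  have hR0 : 0 < R := hR0
  obtain ⟨U, hUm, hUs, hUE, hUv⟩ := aux_local ψ hψ0 hψdec hdiv γ x (R/2) (by positivity) N₀
  rw [show 2 * (R/2) = R by ring] at hUs
  have hsub : E ∩ Metric.closedBall x R ⊆ Metric.closedBall x R \ U :=
    fun α hα => ⟨hα.2, fun hU => hα.1 (hUE α hU)⟩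
  have hfin : volume (Metric.closedBall x R) ≠ ⊤ := measure_closedBall_lt_top.ne
  have h1 : volume.real (E ∩ Metric.closedBall x R) ≤ 2 * R * (1 - 1/3200) := by
    have h2 := measureReal_mono (μ := volume) hsub ((measure_mono Set.sdiff_subset).trans_lt hfin.lt_top).ne
    rw [measureReal_sdiff hUs hUm, Real.volume_real_closedBall hR0.le] at h2
    linarith
  have h3 : volume (E ∩ Metric.closedBall x R) ≤ ENNReal.ofReal (2 * R * (1 - 1/3200)) := by
    rw [← ENNReal.ofReal_toReal (a := volume (E ∩ Metric.closedBall x R))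
      ((measure_mono Set.inter_subset_right).trans_lt hfin.lt_top).ne]
    exact ENNReal.ofReal_le_ofReal h1
  apply absurd hR
  rw [not_lt, Real.volume_closedBall]
  refine ENNReal.div_le_of_le_mul ?_
  rw [← ENNReal.ofReal_mul (by norm_num)]
  refine h3.trans (le_of_eq ?_)
  congr 1
  ring

lemma aux_mem_blimsup (s : ℕ → Set ℝ) (p : ℕ → Prop) (α : ℝ) :
    α ∈ Filter.blimsup s Filter.atTop p ↔ ∃ᶠ n in Filter.atTop, p n ∧ α ∈ s n := by
  rw [← Nat.cofinite_eq_atTop, Filter.cofinite.blimsup_set_eq,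
    Filter.frequently_cofinite_iff_infinite]
  rfl

theorem stmt17 (ψ : ℕ → ℝ) (hψ0 : ∀ q, 0 ≤ ψ q)
    (hψdec : ∀ q r : ℕ, 1 ≤ q → q ≤ r → ψ r ≤ ψ q)
    (hdiv : ¬ Summable ψ)
    (γ : ℕ → ℝ) (γ₀ : ℝ) (C : ℝ) (hC : 0 < C)
    (hγ : ∀ q : ℕ, 1 ≤ q → |γ q - γ₀| ≤ C * ψ q) :
    volume (WSet ψ γ) = 1 := by
  have hpos : ∀ q : ℕ, 1 ≤ q → 0 < ψ q := by
    intro q hq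
    by_contra hcon
    apply hdiv
    refine summable_of_ne_finset_zero (s := Finset.range q) fun n hn => ?_
    rw [Finset.mem_range, not_lt] at hn
    have := hψdec q n hq hn
    have := hψ0 n
    linarith
  let S : ℕ → Set ℝ := fun q => Set.range fun m : ℤ => (γ q + m) / (q:ℝ)
  let r : ℕ → ℝ := fun q => ψ q / q
  have hr : Filter.Tendsto r Filter.atTop (nhds 0) := by
    refine squeeze_zero' (Filter.Eventually.of_forall fun q => div_nonneg (hψ0 q) q.cast_nonneg) ?_
      (tendsto_const_div_atTop_nhds_zero_nat (ψ 1))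
    filter_upwards [Filter.eventually_ge_atTop 1] with q hq
    have := hψdec 1 q le_rfl hq
    simp only [r]
    gcongr
  have hrp : ∀ᶠ i in Filter.atTop, (1 ≤ i) → 0 < r i :=
    Filter.Eventually.of_forall fun i hi => div_pos (hpos i hi) (by exact_mod_cast hi)
  have e1 := blimsup_cthickening_mul_ae_eq (volume : Measure ℝ) (fun q => 1 ≤ q) S
    (show 0 < C + 1 by positivity) r hr
  have e2 := blimsup_cthickening_ae_eq_blimsup_thickening (volume : Measure ℝ) (s := S) hr hrp
  have e3 := e1.trans e2
  have hae := aux_ae ψ hψ0 hψdec hdiv γ₀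
  have hW : ∀ᵐ α : ℝ, α ∈ Set.Icc (0:ℝ) 1 → α ∈ WSet ψ γ := by
    filter_upwards [hae, e3.mem_iff] with α hα hmem hIcc
    have hin : α ∈ Filter.blimsup (fun i => Metric.cthickening ((C+1) * r i) (S i)) Filter.atTop
        (fun q => 1 ≤ q) := by
      rw [aux_mem_blimsup, Filter.frequently_atTop]
      intro N₀
      obtain ⟨n, hn, hn0, m, hm⟩ := hα N₀
      refine ⟨n, hn, ?_⟩
      have hnr : (0:ℝ) < n := by exact_mod_cast hn0
      have : α ∈ Metric.cthickening ((C+1) * r n) (S n) := by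
        refine Metric.mem_cthickening_of_dist_le α ((γ n + m) / n) _ _ ⟨m, rfl⟩ ?_
        rw [Real.dist_eq]
        have h1 : α - (γ n + m) / n = (α - (γ₀ + m) / n) - (γ n - γ₀) / n := by ring
        have h2 : |(γ n - γ₀) / n| ≤ C * ψ n / n := by
          rw [abs_div, abs_of_pos hnr]
          gcongr
          exact hγ n hn0
        rw [h1]
        refine (abs_sub _ _).trans ?_
        have h3 : (C + 1) * r n = ψ n / n + C * ψ n / n := by simp only [r]; ring
        linarith
      exact ⟨hn0, this⟩
    have hin2 := hmem.1 hin
    rw [aux_mem_blimsup] at hin2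
    refine ⟨hIcc, Nat.frequently_atTop_iff_infinite.1 (hin2.mono ?_)⟩
    rintro q ⟨hq, hq2⟩
    refine ⟨hq, ?_⟩
    obtain ⟨z, ⟨m, rfl⟩, hz⟩ := Metric.mem_thickening_iff.1 hq2
    have hqr : (0:ℝ) < q := by exact_mod_cast hq
    rw [Real.dist_eq] at hz
    refine (round_le _ m).trans_lt ?_
    have : (q:ℝ) * α - γ q - m = q * (α - (γ q + m) / q) := by field_simp; ring
    rw [this, abs_mul, abs_of_pos hqr]
    calc _ < q * r q := by gcongr
      _ = ψ q := by simp only [r]; field_simp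
  have hle : volume (WSet ψ γ) ≤ 1 := by
    calc _ ≤ volume (Set.Icc (0:ℝ) 1) := measure_mono fun α hα => hα.1
      _ = 1 := by simp
  refine le_antisymm hle ?_
  calc (1:ENNReal) = volume (Set.Icc (0:ℝ) 1) := by simp
    _ ≤ _ := measure_mono_ae hW
end

section
/- Let ψ:ℕ→ℝ≥0 be decreasing with ∑_{q=1}^∞ ψ(q) = ∞, and let γ=(γ_q)_{q≥1} be a sequence of real numbers for which there exists γ₀∈ℝ with ∑_{q=1}^∞ |γ_q − γ₀| < ∞. Then meas(W(ψ,γ)) = 1. -/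
open MeasureTheory

lemma second_moment {ι : Type*} (s : Finset ι) (A : ι → Set ℝ) (hm : ∀ i, MeasurableSet (A i))
    (hf : ∀ i, volume (A i) ≠ ⊤) (t : ℝ) :
    2 * t * ∑ i ∈ s, volume.real (A i)
      - t ^ 2 * ∑ i ∈ s, ∑ j ∈ s, volume.real (A i ∩ A j) ≤ volume.real (⋃ i ∈ s, A i) := by
  classical
  have hint : ∀ B : Set ℝ, MeasurableSet B → volume B ≠ ⊤ →
      Integrable (B.indicator (fun _ => (1:ℝ))) := by
    intro B hB hB'
    exact (integrable_indicator_iff hB).2 (integrableOn_const hB')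
  have hval : ∀ B : Set ℝ, MeasurableSet B → ∫ x, B.indicator (fun _ => (1:ℝ)) x = volume.real B := by
    intro B hB
    rw [integral_indicator hB]; simp
  have hmU : MeasurableSet (⋃ i ∈ s, A i) := Finset.measurableSet_biUnion s fun i _ => hm i
  have hfU : volume (⋃ i ∈ s, A i) ≠ ⊤ := by
    refine ne_of_lt ((measure_biUnion_finset_le s A).trans_lt ?_)
    exact ENNReal.sum_lt_top.2 fun i _ => lt_top_iff_ne_top.2 (hf i)
  have hfI : ∀ i j, volume (A i ∩ A j) ≠ ⊤ := fun i j =>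
    ne_top_of_le_ne_top (hf i) (measure_mono Set.inter_subset_left)
  have e1 : ∑ i ∈ s, volume.real (A i) = ∫ x, ∑ i ∈ s, (A i).indicator (fun _ => (1:ℝ)) x := by
    rw [integral_finsetSum s fun i _ => hint _ (hm i) (hf i)]
    exact Finset.sum_congr rfl fun i _ => (hval _ (hm i)).symm
  have e2 : ∑ i ∈ s, ∑ j ∈ s, volume.real (A i ∩ A j)
      = ∫ x, ∑ i ∈ s, ∑ j ∈ s, (A i ∩ A j).indicator (fun _ => (1:ℝ)) x := by
    rw [integral_finsetSum s fun i _ => integrable_finsetSum s fun j _ =>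
      hint _ ((hm i).inter (hm j)) (hfI i j)]
    refine Finset.sum_congr rfl fun i _ => ?_
    rw [integral_finsetSum s fun j _ => hint _ ((hm i).inter (hm j)) (hfI i j)]
    exact Finset.sum_congr rfl fun j _ => (hval _ ((hm i).inter (hm j))).symm
  have i1 : Integrable fun x => ∑ i ∈ s, (A i).indicator (fun _ => (1:ℝ)) x :=
    integrable_finsetSum s fun i _ => hint _ (hm i) (hf i)
  have i2 : Integrable fun x => ∑ i ∈ s, ∑ j ∈ s, (A i ∩ A j).indicator (fun _ => (1:ℝ)) x :=
    integrable_finsetSum s fun i _ => integrable_finsetSum s fun j _ =>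
      hint _ ((hm i).inter (hm j)) (hfI i j)
  rw [e1, e2, ← hval _ hmU, ← integral_const_mul, ← integral_const_mul,
    ← integral_sub (i1.const_mul _) (i2.const_mul _)]
  refine integral_mono ((i1.const_mul _).sub (i2.const_mul _)) (hint _ hmU hfU) ?_
  intro x
  have hsq : ∑ i ∈ s, ∑ j ∈ s, (A i ∩ A j).indicator (fun _ => (1:ℝ)) x
      = (∑ i ∈ s, (A i).indicator (fun _ => (1:ℝ)) x) ^ 2 := by
    rw [sq, Finset.sum_mul_sum]
    refine Finset.sum_congr rfl fun i _ => Finset.sum_congr rfl fun j _ => ?_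
    by_cases h1 : x ∈ A i <;> by_cases h2 : x ∈ A j <;> simp [h1, h2]
  simp only [hsq]
  by_cases hx : x ∈ ⋃ i ∈ s, A i
  · rw [Set.indicator_of_mem hx]
    nlinarith [sq_nonneg (1 - t * ∑ i ∈ s, (A i).indicator (fun _ => (1:ℝ)) x)]
  · rw [Set.indicator_of_notMem hx]
    have : ∑ i ∈ s, (A i).indicator (fun _ => (1:ℝ)) x = 0 := by
      refine Finset.sum_eq_zero fun i hi => Set.indicator_of_notMem (fun h => hx ?_) _
      exact Set.mem_biUnion hi h
    simp [this]

lemma approx_of_den (γ α : ℝ) (N : ℕ) (hN : 1 ≤ N) (p : ℚ)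
    (hp : |α - p| ≤ 1 / ((N + 1) * p.den)) (hd : p.den ≤ N) (hd8 : N < 8 * p.den) :
    ∃ q : ℕ, N ≤ q ∧ q < 2 * N ∧ ∃ a : ℤ, |α - (a + γ) / q| ≤ 20 / (N:ℝ) ^ 2 := by
  set d := p.den with hdd
  have hd0 : 0 < d := p.den_pos
  set s : ℤ := round (d * γ) with hs
  have hcop : IsCoprime p.num (d : ℤ) := by
    rw [Int.isCoprime_iff_gcd_eq_one]; exact p.reduced
  obtain ⟨u, v, huv⟩ := hcop
  -- u * num + v * d = 1
  set z : ℤ := (u * s - N) % d with hz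
  have hz0 : 0 ≤ z := Int.emod_nonneg _ (by positivity)
  have hz1 : z < d := Int.emod_lt_of_pos _ (by positivity)
  have hz2 : (u * s - N) = d * ((u * s - N) / d) + z := (Int.mul_ediv_add_emod _ _).symm
  set w := (u * s - N) / (d:ℤ) with hw
  refine ⟨N + z.toNat, by omega, by omega, ?_⟩
  have hq : ((N + z.toNat : ℕ) : ℤ) = u * s - d * w := by push_cast; omega
  -- q * num = s (1 - v d) - d w num
  refine ⟨- s * v - w * p.num, ?_⟩
  set q : ℕ := N + z.toNat with hqd
  have hqN : N ≤ q := by omega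
  have hq2 : q ≤ 2 * N := by omega
  have hqn : (q : ℤ) * p.num = s + d * (- s * v - w * p.num) := by
    rw [hq]; linear_combination s * huv
  have hqnR : (q : ℝ) * p.num = s + d * ((- s * v - w * p.num : ℤ) : ℝ) := by exact_mod_cast hqn
  set a : ℤ := - s * v - w * p.num with ha
  have hdR : (0:ℝ) < d := by exact_mod_cast hd0
  have hNR : (1:ℝ) ≤ N := by exact_mod_cast hN
  have hqR : (N:ℝ) ≤ q := by exact_mod_cast hqN
  have hqR2 : (q:ℝ) ≤ 2 * N := by exact_mod_cast hq2
  have hd8R : (N:ℝ) < 8 * d := by exact_mod_cast hd8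
  have hpd : (p:ℝ) = p.num / d := by exact_mod_cast (Rat.num_div_den p).symm
  have hsr : |d * γ - s| ≤ 1 / 2 := abs_sub_round _
  have key : d * (q * α - γ - a) = q * (d * (α - p)) + (s - d * γ) := by
    rw [hpd]; field_simp; linear_combination hqnR
  have h1 : |d * (α - p)| ≤ 1 / (N + 1) := by
    rw [abs_mul, abs_of_pos hdR]
    calc (d:ℝ) * |α - p| ≤ d * (1 / ((N + 1) * d)) := by gcongr
      _ = 1 / (N + 1) := by field_simp
  have h2 : |(d:ℝ) * (q * α - γ - a)| ≤ 5 / 2 := by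
    rw [key]
    refine (abs_add_le _ _).trans ?_
    rw [abs_mul, abs_sub_comm (s:ℝ), Nat.abs_cast]
    have : (q:ℝ) * |d * (α - p)| ≤ 2 * N * (1 / (N + 1)) := by gcongr
    have h3 : 2 * (N:ℝ) * (1 / (N + 1)) ≤ 2 := by
      rw [mul_one_div, div_le_iff₀ (by positivity)]; linarith
    linarith
  rw [abs_mul, abs_of_pos hdR] at h2
  have hq0 : (0:ℝ) < q := by linarith
  have h4 : α - (a + γ) / q = (q * α - γ - a) / q := by field_simp; ring
  rw [h4, abs_div, abs_of_pos hq0, div_le_div_iff₀ hq0 (by positivity)]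
  have h5 : |(q:ℝ) * α - γ - a| * N ≤ 20 := by
    have := abs_nonneg ((q:ℝ) * α - γ - a)
    nlinarith
  nlinarith

lemma card_Icc_floor_le (u v : ℝ) (huv : u ≤ v) :
    ((Finset.Icc ⌊u⌋ ⌊v⌋).card : ℝ) ≤ v - u + 2 := by
  have h1 : ⌊u⌋ ≤ ⌊v⌋ := Int.floor_le_floor huv
  have h2 : ((Finset.Icc ⌊u⌋ ⌊v⌋).card : ℤ) = ⌊v⌋ + 1 - ⌊u⌋ := by
    rw [Int.card_Icc]; omega
  have h3 : ((Finset.Icc ⌊u⌋ ⌊v⌋).card : ℝ) = ⌊v⌋ + 1 - ⌊u⌋ := by exact_mod_cast h2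
  rw [h3]
  have := Int.floor_le v
  have := Int.lt_floor_add_one u
  linarith

lemma bad_measure (x r : ℝ) (hr : 0 < r) (N : ℕ) (hN : 1 ≤ N) :
    volume.real (⋃ d ∈ Finset.range (N / 8), ⋃ k ∈ Finset.Icc ⌊((d:ℝ) + 1) * (x - r) - 1⌋
      ⌊((d:ℝ) + 1) * (x + r) + 1⌋, Metric.closedBall ((k:ℝ) / (d + 1)) (1 / ((d + 1) * N)))
    ≤ r / 2 + 8 * ((N:ℝ)⁻¹ * ∑ d ∈ Finset.range N, 1 / ((d:ℝ) + 1)) := by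
  have hNR : (1:ℝ) ≤ N := by exact_mod_cast hN
  refine (measureReal_biUnion_finset_le _ _).trans ?_
  have h1 : ∀ d ∈ Finset.range (N / 8), volume.real (⋃ k ∈ Finset.Icc ⌊((d:ℝ) + 1) * (x - r) - 1⌋
      ⌊((d:ℝ) + 1) * (x + r) + 1⌋, Metric.closedBall ((k:ℝ) / (d + 1)) (1 / ((d + 1) * N)))
      ≤ 4 * r / N + 8 * ((N:ℝ)⁻¹ * (1 / ((d:ℝ) + 1))) := by
    intro d _
    refine (measureReal_biUnion_finset_le _ _).trans ?_
    rw [Finset.sum_congr rfl fun k _ => Real.volume_real_closedBall (by positivity),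
      Finset.sum_const, nsmul_eq_mul]
    have := card_Icc_floor_le (((d:ℝ) + 1) * (x - r) - 1) (((d:ℝ) + 1) * (x + r) + 1)
      (by nlinarith)
    calc _ ≤ (((d:ℝ) + 1) * (x + r) + 1 - (((d:ℝ) + 1) * (x - r) - 1) + 2)
        * (2 * (1 / (((d:ℝ) + 1) * N))) := by gcongr
      _ = _ := by field_simp; ring
  refine (Finset.sum_le_sum h1).trans ?_
  rw [Finset.sum_add_distrib, Finset.sum_const, nsmul_eq_mul, Finset.card_range,
    ← Finset.mul_sum, ← Finset.mul_sum]
  have h8 : ((N / 8 : ℕ) : ℝ) ≤ N / 8 := Nat.cast_div_le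
  have h2 : ((N / 8 : ℕ) : ℝ) * (4 * r / N) ≤ r / 2 := by
    calc _ ≤ (N:ℝ) / 8 * (4 * r / N) := by gcongr
      _ = r / 2 := by field_simp; ring
  have h3 : ∑ d ∈ Finset.range (N / 8), 1 / ((d:ℝ) + 1) ≤ ∑ d ∈ Finset.range N, 1 / ((d:ℝ) + 1) :=
    Finset.sum_le_sum_of_subset_of_nonneg
      (Finset.range_subset_range.2 (Nat.div_le_self _ _)) (fun _ _ _ => by positivity)
  have h4 : (N:ℝ)⁻¹ * ∑ d ∈ Finset.range (N / 8), 1 / ((d:ℝ) + 1)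
      ≤ (N:ℝ)⁻¹ * ∑ d ∈ Finset.range N, 1 / ((d:ℝ) + 1) := by gcongr
  linarith

lemma cells (γ x r : ℝ) (hr : 0 < r) : ∃ N0 : ℕ, ∀ N : ℕ, N0 ≤ N →
    ∃ (J : Finset ℤ) (pt : ℤ → ℝ),
      (∀ j ∈ J, ⌊pt j * (N:ℝ) ^ 2⌋ = j ∧ |pt j - x| ≤ r + 20 / (N:ℝ) ^ 2 ∧
        ∃ q : ℕ, N ≤ q ∧ q < 2 * N ∧ ∃ a : ℤ, pt j = (a + γ) / q) ∧
      r * (N:ℝ) ^ 2 ≤ 42 * J.card ∧ (J.card : ℝ) ≤ 3 * r * (N:ℝ) ^ 2 := by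
  classical
  have hces := (tendsto_one_div_add_atTop_nhds_zero_nat (𝕜 := ℝ)).cesaro
  have hev : ∀ᶠ N : ℕ in Filter.atTop,
      ((N:ℝ)⁻¹ * ∑ d ∈ Finset.range N, 1 / ((d:ℝ) + 1)) < r / 16 :=
    hces.eventually (gt_mem_nhds (by positivity))
  have hev2 : ∀ᶠ N : ℕ in Filter.atTop, 42 / r ≤ (N:ℝ) :=
    tendsto_natCast_atTop_atTop.eventually_ge_atTop _
  obtain ⟨N0, hN0⟩ := Filter.eventually_atTop.1 (hev.and (hev2.and (Filter.eventually_ge_atTop 1)))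
  refine ⟨N0, fun N hN => ?_⟩
  obtain ⟨hh, h42, hN1⟩ := hN0 N hN
  have hNR : (1:ℝ) ≤ N := by exact_mod_cast hN1
  have h42' : 42 ≤ r * (N:ℝ) ^ 2 := by
    rw [div_le_iff₀ hr] at h42; nlinarith
  have hN2 : (0:ℝ) < (N:ℝ) ^ 2 := by positivity
  set P : ℤ → ℝ → Prop := fun j y => ⌊y * (N:ℝ) ^ 2⌋ = j ∧ |y - x| ≤ r + 20 / (N:ℝ) ^ 2 ∧
        ∃ q : ℕ, N ≤ q ∧ q < 2 * N ∧ ∃ a : ℤ, y = (a + γ) / q with hP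
  set J : Finset ℤ := (Finset.Icc ⌊(x - r) * (N:ℝ)^2 - 20⌋ ⌊(x + r) * (N:ℝ)^2 + 20⌋).filter
    (fun j => ∃ y, P j y) with hJ
  have hch : ∀ j : ℤ, ∃ y, j ∈ J → P j y := by
    intro j
    by_cases h : j ∈ J
    · obtain ⟨y, hy⟩ := (Finset.mem_filter.1 h).2
      exact ⟨y, fun _ => hy⟩
    · exact ⟨0, fun h' => absurd h' h⟩
  choose pt hpt using hch
  refine ⟨J, pt, hpt, ?_, ?_⟩
  · have hcov : Metric.closedBall x r ⊆
        (⋃ j ∈ J, Metric.closedBall ((j:ℝ) / (N:ℝ)^2) (21 / (N:ℝ)^2)) ∪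
        (⋃ d ∈ Finset.range (N / 8), ⋃ k ∈ Finset.Icc ⌊((d:ℝ) + 1) * (x - r) - 1⌋
          ⌊((d:ℝ) + 1) * (x + r) + 1⌋,
          Metric.closedBall ((k:ℝ) / (d + 1)) (1 / ((d + 1) * N))) := by
      intro α hα
      rw [Metric.mem_closedBall, Real.dist_eq] at hα
      obtain ⟨hα1, hα2⟩ := abs_le.1 hα
      obtain ⟨p, hp, hpd⟩ := Real.exists_rat_abs_sub_le_and_den_le α hN1
      by_cases h8 : N < 8 * p.den
      · left
        obtain ⟨q, hq1, hq2, a, ha⟩ := approx_of_den γ α N hN1 p hp hpd h8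
        set y : ℝ := (a + γ) / q with hy
        have hyx : |y - x| ≤ r + 20 / (N:ℝ)^2 := by
          have : |y - x| ≤ |y - α| + |α - x| := abs_sub_le _ _ _
          rw [abs_sub_comm y α] at this
          linarith
        have hPy : P ⌊y * (N:ℝ)^2⌋ y := ⟨rfl, hyx, q, hq1, hq2, a, hy⟩
        have hfl := Int.floor_le (y * (N:ℝ)^2)
        have hfl2 := Int.lt_floor_add_one (y * (N:ℝ)^2)
        have hc : 20 / (N:ℝ)^2 * (N:ℝ)^2 = 20 := by field_simp
        obtain ⟨g1, g2⟩ := abs_le.1 hyx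
        refine Set.mem_biUnion (x := ⌊y * (N:ℝ)^2⌋) ?_ ?_
        · refine Finset.mem_coe.2 (Finset.mem_filter.2 ⟨Finset.mem_Icc.2 ⟨?_, ?_⟩, y, hPy⟩)
          · apply Int.floor_le_floor; nlinarith
          · apply Int.floor_le_floor; nlinarith
        · rw [Metric.mem_closedBall, Real.dist_eq]
          have e : |y - (⌊y * (N:ℝ)^2⌋:ℝ) / (N:ℝ)^2| ≤ 1 / (N:ℝ)^2 := by
            have : y - (⌊y * (N:ℝ)^2⌋:ℝ) / (N:ℝ)^2
              = (y * (N:ℝ)^2 - ⌊y * (N:ℝ)^2⌋) / (N:ℝ)^2 := by field_simp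
            rw [this, abs_div, abs_of_pos hN2]
            gcongr
            rw [abs_le]; constructor <;> linarith
          refine (abs_sub_le α y _).trans ?_
          have : 21 / (N:ℝ)^2 = 20 / (N:ℝ)^2 + 1 / (N:ℝ)^2 := by ring
          linarith
      · right
        have hd0 := p.den_pos
        have hdR : (0:ℝ) < p.den := by exact_mod_cast hd0
        have hcast : ((p.den - 1 : ℕ) : ℝ) + 1 = p.den := by
          have : (p.den - 1) + 1 = p.den := by omega
          exact_mod_cast this
        have hpd' : (p:ℝ) = p.num / p.den := by exact_mod_cast (Rat.num_div_den p).symm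
        refine Set.mem_biUnion (x := p.den - 1) (by
          rw [Finset.mem_coe, Finset.mem_range]; omega) ?_
        rw [hcast]
        have hb : |α - p| ≤ 1 / (p.den * N) := by
          refine hp.trans ?_
          gcongr 1 / ?_
          nlinarith
        have hb1 : |p.den * α - p.num| ≤ 1 := by
          have : (p.den:ℝ) * α - p.num = p.den * (α - p) := by rw [hpd']; field_simp
          rw [this, abs_mul, abs_of_pos hdR]
          calc (p.den:ℝ) * |α - p| ≤ p.den * (1 / (p.den * N)) := by gcongr
            _ = 1 / N := by field_simp
            _ ≤ 1 := by rw [div_le_one (by linarith)]; exact hNR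
        obtain ⟨g1, g2⟩ := abs_le.1 hb1
        refine Set.mem_biUnion (x := p.num) ?_ ?_
        · refine Finset.mem_coe.2 (Finset.mem_Icc.2 ⟨?_, ?_⟩)
          · rw [← Int.floor_intCast (R := ℝ) p.num]
            apply Int.floor_le_floor; nlinarith
          · rw [Int.le_floor]; nlinarith
        · rw [Metric.mem_closedBall, Real.dist_eq, ← hpd']; exact hb
    have hle := (measureReal_mono (μ := volume) hcov (by
      refine ne_of_lt (Bornology.IsBounded.measure_lt_top ?_)
      refine Bornology.IsBounded.union ?_ ?_
      · exact (Bornology.isBounded_biUnion_finset J).2 fun _ _ => Metric.isBounded_closedBall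
      · exact (Bornology.isBounded_biUnion_finset _).2 fun _ _ =>
          (Bornology.isBounded_biUnion_finset _).2 fun _ _ => Metric.isBounded_closedBall)).trans
      (measureReal_union_le _ _)
    rw [Real.volume_real_closedBall hr.le] at hle
    have hbad := bad_measure x r hr N hN1
    have hg : volume.real (⋃ j ∈ J, Metric.closedBall ((j:ℝ) / (N:ℝ)^2) (21 / (N:ℝ)^2))
        ≤ J.card * (2 * (21 / (N:ℝ)^2)) := by
      refine (measureReal_biUnion_finset_le _ _).trans ?_
      rw [Finset.sum_congr rfl fun k _ => Real.volume_real_closedBall (by positivity),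
        Finset.sum_const, nsmul_eq_mul]
    have hfin : r ≤ J.card * (2 * (21 / (N:ℝ)^2)) := by linarith
    calc r * (N:ℝ)^2 ≤ (J.card:ℝ) * (2 * (21 / (N:ℝ)^2)) * (N:ℝ)^2 := by gcongr
      _ = 42 * (J.card:ℝ) := by field_simp; ring
  · have h1 : (J.card : ℝ) ≤ (x + r) * (N:ℝ)^2 + 20 - ((x - r) * (N:ℝ)^2 - 20) + 2 := by
      refine le_trans ?_ (card_Icc_floor_le ((x - r) * (N:ℝ)^2 - 20) ((x + r) * (N:ℝ)^2 + 20)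
        (by nlinarith))
      exact Nat.cast_le.2 (Finset.card_filter_le _ _)
    nlinarith

lemma inter_sum (J : Finset ℤ) (pt : ℤ → ℝ) (K : ℝ) (hK : 0 < K)
    (hfl : ∀ j ∈ J, ⌊pt j * K⌋ = j) (ρ : ℝ) (hρ : 0 ≤ ρ) (y R : ℝ) (hR : 0 ≤ R) :
    ∑ j ∈ J, volume.real (Metric.ball (pt j) ρ ∩ Metric.ball y R)
      ≤ 2 * ρ * (2 * (ρ + R) * K + 2) := by
  classical
  set I := Finset.Icc ⌊(y - (ρ + R)) * K⌋ ⌊(y + (ρ + R)) * K⌋ with hI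
  have h1 : ∀ j ∈ J, volume.real (Metric.ball (pt j) ρ ∩ Metric.ball y R)
      ≤ if j ∈ I then 2 * ρ else 0 := by
    intro j hj
    split_ifs with h
    · rw [← Real.volume_real_ball (a := pt j) hρ]
      exact measureReal_mono Set.inter_subset_left measure_ball_lt_top.ne
    · have : Metric.ball (pt j) ρ ∩ Metric.ball y R = ∅ := by
        by_contra hne
        obtain ⟨z, hz1, hz2⟩ := Set.nonempty_iff_ne_empty.2 hne
        rw [Metric.mem_ball, Real.dist_eq, abs_lt] at hz1 hz2
        apply h
        rw [← hfl j hj]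
        refine Finset.mem_Icc.2 ⟨Int.floor_le_floor ?_, Int.floor_le_floor ?_⟩
        · gcongr; linarith
        · gcongr; linarith
      rw [this]; simp
  refine (Finset.sum_le_sum h1).trans ?_
  rw [← Finset.sum_filter, Finset.sum_const, nsmul_eq_mul]
  have h2 : ((J.filter (· ∈ I)).card : ℝ) ≤ I.card := by
    exact_mod_cast Finset.card_le_card fun j hj => (Finset.mem_filter.1 hj).2
  have h3 := card_Icc_floor_le ((y - (ρ + R)) * K) ((y + (ρ + R)) * K) (by gcongr; linarith)
  calc _ ≤ ((y + (ρ + R)) * K - (y - (ρ + R)) * K + 2) * (2 * ρ) := by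
        gcongr; exact h2.trans h3
    _ = _ := by ring

lemma geom4 (n : ℕ) : ∑ i ∈ Finset.range (n + 1), (4:ℝ) ^ i ≤ 2 * 4 ^ n := by
  induction n with
  | zero => norm_num
  | succ n ih =>
    rw [Finset.sum_range_succ, pow_succ]
    have : (0:ℝ) < 4 ^ n := by positivity
    linarith

lemma combine (n0 M : ℕ) (J : ℕ → Finset ℤ) (pt : ℕ → ℤ → ℝ) (ρ : ℕ → ℝ) (r : ℝ) (hr : 0 < r)
    (hρ0 : ∀ n, 0 ≤ ρ n) (hρ1 : ∀ n, 4 ^ n * ρ n ≤ 1)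
    (hfl : ∀ n, n0 ≤ n → ∀ j ∈ J n, ⌊pt n j * 4 ^ n⌋ = j)
    (hlo : ∀ n, n0 ≤ n → r * 4 ^ n ≤ 42 * (J n).card)
    (hhi : ∀ n, n0 ≤ n → ((J n).card : ℝ) ≤ 3 * r * 4 ^ n)
    (hT : 1 ≤ ∑ n ∈ Finset.Ico n0 M, 4 ^ n * ρ n) :
    r / 52920 ≤ volume.real (⋃ i ∈ (Finset.Ico n0 M).sigma J,
      Metric.ball (pt i.1 i.2) (ρ i.1)) := by
  classical
  set s := Finset.Ico n0 M with hs
  set T := ∑ n ∈ s, 4 ^ n * ρ n with hTd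
  have hsn : ∀ n ∈ s, n0 ≤ n := fun n hn => (Finset.mem_Ico.1 hn).1
  have hmain := second_moment (s.sigma J) (fun i => Metric.ball (pt i.1 i.2) (ρ i.1))
    (fun i => measurableSet_ball) (fun i => measure_ball_lt_top.ne) (1 / (2520 * T))
  refine le_trans ?_ hmain
  have hS : r * T / 21 ≤ ∑ i ∈ s.sigma J, volume.real (Metric.ball (pt i.1 i.2) (ρ i.1)) := by
    rw [Finset.sum_sigma, hTd, Finset.mul_sum, Finset.sum_div]
    refine Finset.sum_le_sum fun n hn => ?_
    rw [Finset.sum_congr rfl fun k _ => Real.volume_real_ball (hρ0 n),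
        Finset.sum_const, nsmul_eq_mul]
    have := mul_le_mul_of_nonneg_right (hlo n (hsn n hn)) (hρ0 n)
    nlinarith
  set g : ℕ → ℕ → ℝ := fun n n' => ∑ j ∈ J n, ∑ j' ∈ J n',
    volume.real (Metric.ball (pt n j) (ρ n) ∩ Metric.ball (pt n' j') (ρ n')) with hg
  have hg0 : ∀ n n', 0 ≤ g n n' := fun n n' =>
    Finset.sum_nonneg fun _ _ => Finset.sum_nonneg fun _ _ => measureReal_nonneg
  have hgs : ∀ n n', g n n' = g n' n := by
    intro n n'
    simp only [hg]
    rw [Finset.sum_comm]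
    refine Finset.sum_congr rfl fun j _ => Finset.sum_congr rfl fun j' _ => ?_
    rw [Set.inter_comm]
  have hgb : ∀ n ∈ s, ∀ n' ∈ s, n' ≤ n → g n n' ≤
      24 * r * ρ n * 4 ^ n' + 12 * r * (4 ^ n * ρ n) * (4 ^ n' * ρ n') := by
    intro n hn n' hn' hle
    rw [hgs]
    have h1 : g n' n ≤ ∑ j' ∈ J n', 2 * ρ n * (2 * (ρ n + ρ n') * 4 ^ n + 2) := by
      refine Finset.sum_le_sum fun j' _ => ?_
      refine le_trans (le_of_eq ?_) (inter_sum (J n) (pt n) (4 ^ n) (by positivity)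
        (hfl n (hsn n hn)) (ρ n) (hρ0 n) (pt n' j') (ρ n') (hρ0 n'))
      exact Finset.sum_congr rfl fun j _ => by rw [Set.inter_comm]
    refine h1.trans ?_
    rw [Finset.sum_const, nsmul_eq_mul]
    have a0 := hρ0 n
    have a1 := hρ0 n'
    have a2 := hρ1 n
    have h2 : 2 * ρ n * (2 * (ρ n + ρ n') * 4 ^ n + 2) ≤ 8 * ρ n + 4 * ρ n * (4 ^ n * ρ n') := by
      nlinarith
    have h3 : 0 ≤ 8 * ρ n + 4 * ρ n * (4 ^ n * ρ n') := by positivity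
    calc _ ≤ (3 * r * 4 ^ n') * (8 * ρ n + 4 * ρ n * (4 ^ n * ρ n')) := by
          gcongr
          exact hhi n' (hsn n' hn')
      _ = _ := by ring
  have hQ : ∑ i ∈ s.sigma J, ∑ j ∈ s.sigma J,
      volume.real (Metric.ball (pt i.1 i.2) (ρ i.1) ∩ Metric.ball (pt j.1 j.2) (ρ j.1))
      ≤ 120 * r * T ^ 2 := by
    have e : ∑ i ∈ s.sigma J, ∑ j ∈ s.sigma J,
      volume.real (Metric.ball (pt i.1 i.2) (ρ i.1) ∩ Metric.ball (pt j.1 j.2) (ρ j.1))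
      = ∑ n ∈ s, ∑ n' ∈ s, g n n' := by
      rw [Finset.sum_sigma]
      refine Finset.sum_congr rfl fun n _ => ?_
      simp only [hg]
      rw [Finset.sum_comm (s := s)]
      refine Finset.sum_congr rfl fun j _ => ?_
      rw [Finset.sum_sigma]
    rw [e]
    have h1 : ∑ n ∈ s, ∑ n' ∈ s, g n n' ≤
        2 * ∑ n ∈ s, ∑ n' ∈ s, (if n' ≤ n then g n n' else 0) := by
      have h2 : ∑ n ∈ s, ∑ n' ∈ s, (if n' ≤ n then g n n' else 0)
          = ∑ n ∈ s, ∑ n' ∈ s, (if n ≤ n' then g n n' else 0) := by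
        rw [Finset.sum_comm]
        refine Finset.sum_congr rfl fun n _ => Finset.sum_congr rfl fun n' _ => ?_
        rw [hgs]
      rw [two_mul]
      nth_rewrite 2 [h2]
      rw [← Finset.sum_add_distrib]
      refine Finset.sum_le_sum fun n _ => ?_
      rw [← Finset.sum_add_distrib]
      refine Finset.sum_le_sum fun n' _ => ?_
      have := hg0 n n'
      rcases le_total n n' with h | h <;> simp only [h, if_true] <;> split_ifs <;> linarith
    have h3 : ∀ n ∈ s, ∑ n' ∈ s, (if n' ≤ n then g n n' else 0) ≤
        48 * r * (4 ^ n * ρ n) + 12 * r * (4 ^ n * ρ n) * T := by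
      intro n hn
      have a0 := hρ0 n
      calc ∑ n' ∈ s, (if n' ≤ n then g n n' else 0)
          ≤ ∑ n' ∈ s, ((if n' ≤ n then 24 * r * ρ n * 4 ^ n' else 0)
            + 12 * r * (4 ^ n * ρ n) * (4 ^ n' * ρ n')) := by
            refine Finset.sum_le_sum fun n' hn' => ?_
            have a1 := hρ0 n'
            split_ifs with h
            · exact hgb n hn n' hn' h
            · positivity
        _ = 24 * r * ρ n * ∑ n' ∈ s.filter (· ≤ n), 4 ^ n' + 12 * r * (4 ^ n * ρ n) * T := by
            rw [Finset.sum_add_distrib, ← Finset.mul_sum, ← Finset.sum_filter, ← Finset.mul_sum]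
        _ ≤ 24 * r * ρ n * (2 * 4 ^ n) + 12 * r * (4 ^ n * ρ n) * T := by
            gcongr
            refine le_trans ?_ (geom4 n)
            refine Finset.sum_le_sum_of_subset_of_nonneg ?_ fun _ _ _ => by positivity
            intro k hk
            have := (Finset.mem_filter.1 hk).2
            simp; omega
        _ = _ := by ring
    have h4 := Finset.sum_le_sum h3
    rw [Finset.sum_add_distrib, ← Finset.mul_sum, ← Finset.sum_mul, ← Finset.mul_sum, ← hTd] at h4
    have h5 : r * T ≤ r * T ^ 2 := by
      have : T ≤ T ^ 2 := by nlinarith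
      gcongr
    nlinarith
  have hT0 : 0 < T := by linarith
  calc r / 52920 = 2 * (1 / (2520 * T)) * (r * T / 21) - (1 / (2520 * T)) ^ 2 * (120 * r * T ^ 2) := by
        field_simp; ring
    _ ≤ _ := by gcongr

/-- The tail set. -/
def tailSet (ψ : ℕ → ℝ) (γ : ℝ) (m : ℕ) : Set ℝ :=
  {α | ∃ q : ℕ, m ≤ q ∧ 1 ≤ q ∧ ∃ a : ℤ, |q * α - γ - a| < ψ q}

lemma not_summable_min {f : ℕ → ℝ} (h0 : ∀ n, 0 ≤ f n) (hf : ¬ Summable f) :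
    ¬ Summable fun n => min (f n) 1 := by
  intro h
  apply hf
  refine Summable.of_norm_bounded_eventually_nat h ?_
  have := h.tendsto_atTop_zero.eventually (gt_mem_nhds (zero_lt_one))
  filter_upwards [this] with n hn
  rw [Real.norm_of_nonneg (h0 n)]
  rcases min_lt_iff.1 hn with h | h
  · exact le_min le_rfl h.le
  · exact absurd h (lt_irrefl _)

lemma local_lower (ψ : ℕ → ℝ) (hψ0 : ∀ q, 0 ≤ ψ q)
    (hψdec : ∀ q r : ℕ, 1 ≤ q → q ≤ r → ψ r ≤ ψ q)
    (hdiv : ¬ Summable ψ) (γ x r : ℝ) (hr : 0 < r) (m : ℕ) :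
    r / 52920 ≤ volume.real (tailSet ψ γ m ∩ Metric.closedBall x (2 * r)) := by
  obtain ⟨N0, hN0⟩ := cells γ x r hr
  have hpow : Filter.Tendsto (fun n : ℕ => (2:ℕ) ^ n) Filter.atTop Filter.atTop :=
    tendsto_pow_atTop_atTop_of_one_lt (by norm_num)
  have hpow4 : Filter.Tendsto (fun n : ℕ => (4:ℝ) ^ n) Filter.atTop Filter.atTop :=
    tendsto_pow_atTop_atTop_of_one_lt (by norm_num)
  obtain ⟨n0, hn0⟩ := Filter.eventually_atTop.1 ((hpow.eventually_ge_atTop N0).and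
    ((hpow.eventually_ge_atTop m).and (hpow4.eventually_ge_atTop (21 / r))))
  have h24 : ∀ n : ℕ, (((2:ℕ) ^ n : ℕ) : ℝ) ^ 2 = 4 ^ n := by
    intro n; push_cast; rw [← pow_mul, mul_comm, pow_mul]; norm_num
  have hex : ∀ n : ℕ, ∃ (J : Finset ℤ) (pt : ℤ → ℝ), n0 ≤ n →
      (∀ j ∈ J, ⌊pt j * 4 ^ n⌋ = j ∧ |pt j - x| ≤ r + 20 / 4 ^ n ∧
        ∃ q : ℕ, 2 ^ n ≤ q ∧ q < 2 * 2 ^ n ∧ ∃ a : ℤ, pt j = (a + γ) / q) ∧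
      r * 4 ^ n ≤ 42 * J.card ∧ (J.card : ℝ) ≤ 3 * r * 4 ^ n := by
    intro n
    by_cases h : n0 ≤ n
    · obtain ⟨J, pt, h1⟩ := hN0 (2 ^ n) (hn0 n h).1
      rw [h24] at h1
      exact ⟨J, pt, fun _ => h1⟩
    · exact ⟨∅, fun _ => 0, fun h' => absurd h' h⟩
  choose J pt hJ using hex
  set ρ : ℕ → ℝ := fun n => min (ψ (2 ^ (n + 1)) / 2 ^ (n + 1)) (1 / 4 ^ n) with hρ
  have hρ0 : ∀ n, 0 ≤ ρ n := fun n => le_min (div_nonneg (hψ0 _) (by positivity)) (by positivity)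
  have hρle : ∀ n, ρ n ≤ 1 / 4 ^ n := fun n => min_le_right _ _
  have hρ1 : ∀ n, 4 ^ n * ρ n ≤ 1 := by
    intro n
    calc 4 ^ n * ρ n ≤ 4 ^ n * (1 / 4 ^ n) := by gcongr; exact hρle n
      _ = 1 := by field_simp
  have hns : ¬ Summable fun n => 4 ^ n * ρ n := by
    have e : (fun n => 4 ^ n * ρ n) =
        fun n => min ((1 / 4 : ℝ) * (2 ^ (n + 1) * ψ (2 ^ (n + 1)))) 1 := by
      funext n
      simp only [hρ]
      rw [mul_min_of_nonneg _ _ (by positivity)]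
      congr 1
      · have : (4:ℝ) ^ n = 2 ^ n * 2 ^ n := by rw [← mul_pow]; norm_num
        rw [this, pow_succ (2:ℝ)]; field_simp; norm_num
      · field_simp
    rw [e]
    refine not_summable_min (fun n => mul_nonneg (by norm_num)
      (mul_nonneg (by positivity) (hψ0 _))) ?_
    rw [summable_mul_left_iff (by norm_num),
      summable_nat_add_iff (f := fun n => (2:ℝ) ^ n * ψ (2 ^ n)) 1,
      summable_condensed_iff_of_nonneg hψ0 (fun a b ha hab => hψdec a b ha hab)]
    exact hdiv
  have hns2 : ¬ Summable fun n => 4 ^ (n + n0) * ρ (n + n0) := by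
    rwa [summable_nat_add_iff (f := fun n => 4 ^ n * ρ n) n0]
  rw [not_summable_iff_tendsto_nat_atTop_of_nonneg
    (fun n => mul_nonneg (by positivity) (hρ0 _))] at hns2
  obtain ⟨M, hM⟩ := (hns2.eventually_ge_atTop 1).exists
  have hT : 1 ≤ ∑ n ∈ Finset.Ico n0 (n0 + M), 4 ^ n * ρ n := by
    rw [Finset.sum_Ico_eq_sum_range]
    simpa [add_comm] using hM
  refine (combine n0 (n0 + M) J pt ρ r hr hρ0 hρ1 (fun n hn j hj => ((hJ n hn).1 j hj).1)
    (fun n hn => (hJ n hn).2.1) (fun n hn => (hJ n hn).2.2) hT).trans ?_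
  refine measureReal_mono ?_ (ne_of_lt ((measure_mono Set.inter_subset_right).trans_lt
    measure_closedBall_lt_top))
  refine Set.iUnion₂_subset fun i hi => ?_
  obtain ⟨hi1, hi2⟩ := Finset.mem_sigma.1 hi
  have hn := (Finset.mem_Ico.1 hi1).1
  obtain ⟨-, hx, q, hq1, hq2, a, ha⟩ := (hJ i.1 hn).1 i.2 hi2
  intro α hα
  rw [Metric.mem_ball, Real.dist_eq] at hα
  obtain ⟨-, hm, h21⟩ := hn0 i.1 hn
  have hq0 : 1 ≤ q := le_trans Nat.one_le_two_pow hq1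
  have hqR : (0:ℝ) < q := by exact_mod_cast hq0
  refine ⟨⟨q, hm.trans hq1, hq0, a, ?_⟩, ?_⟩
  · have hlt : |α - pt i.1 i.2| < ψ (2 ^ (i.1 + 1)) / 2 ^ (i.1 + 1) :=
      hα.trans_le (min_le_left _ _)
    have e : (q:ℝ) * α - γ - a = q * (α - pt i.1 i.2) := by rw [ha]; field_simp; ring
    rw [e, abs_mul, abs_of_pos hqR]
    have hq3 : q ≤ 2 ^ (i.1 + 1) := by rw [pow_succ]; omega
    have hq3R : (q:ℝ) ≤ 2 ^ (i.1 + 1) := by exact_mod_cast hq3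
    calc (q:ℝ) * |α - pt i.1 i.2| < q * (ψ (2 ^ (i.1 + 1)) / 2 ^ (i.1 + 1)) := by gcongr
      _ ≤ 2 ^ (i.1 + 1) * (ψ (2 ^ (i.1 + 1)) / 2 ^ (i.1 + 1)) := by
          have := div_nonneg (hψ0 (2 ^ (i.1 + 1))) (by positivity : (0:ℝ) ≤ 2 ^ (i.1 + 1))
          gcongr
      _ = ψ (2 ^ (i.1 + 1)) := by field_simp
      _ ≤ ψ q := hψdec _ _ hq0 hq3
  · rw [Metric.mem_closedBall, Real.dist_eq]
    have h1 := hα.le.trans (hρle i.1)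
    have h2 : 21 / (4:ℝ) ^ i.1 ≤ r := by
      rw [div_le_iff₀ hr] at h21
      rw [div_le_iff₀ (by positivity)]; linarith
    have h3 : 21 / (4:ℝ) ^ i.1 = 20 / 4 ^ i.1 + 1 / 4 ^ i.1 := by ring
    have := abs_sub_le α (pt i.1 i.2) x
    linarith

lemma tailSet_compl_null (ψ : ℕ → ℝ) (hψ0 : ∀ q, 0 ≤ ψ q)
    (hψdec : ∀ q r : ℕ, 1 ≤ q → q ≤ r → ψ r ≤ ψ q)
    (hdiv : ¬ Summable ψ) (γ : ℝ) (m : ℕ) :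
    volume (tailSet ψ γ m)ᶜ = 0 := by
  have hopen : IsOpen (tailSet ψ γ m) := by
    have : tailSet ψ γ m = ⋃ q : ℕ, ⋃ (_ : m ≤ q), ⋃ (_ : 1 ≤ q), ⋃ a : ℤ,
        {α : ℝ | |q * α - γ - a| < ψ q} := by
      ext α; simp only [tailSet, Set.mem_ofPred_eq, Set.mem_iUnion, exists_prop]
    rw [this]
    refine isOpen_iUnion fun q => isOpen_iUnion fun _ => isOpen_iUnion fun _ =>
      isOpen_iUnion fun a => isOpen_lt (by fun_prop) continuous_const
  have hden := Besicovitch.ae_tendsto_measure_inter_div (volume : Measure ℝ) (tailSet ψ γ m)ᶜ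
  by_contra hne
  have : (volume.restrict (tailSet ψ γ m)ᶜ) ≠ 0 := by
    rwa [Ne, Measure.restrict_eq_zero]
  have : (ae (volume.restrict (tailSet ψ γ m)ᶜ)).NeBot := ae_neBot.2 this
  obtain ⟨x, hx⟩ := hden.exists
  have hlt : ENNReal.ofReal (1 - 1 / 300000) < 1 := by
    rw [ENNReal.ofReal_lt_one]; norm_num
  have hev := (hx.eventually (lt_mem_nhds hlt)).and self_mem_nhdsWithin
  obtain ⟨R, hR1, hR0⟩ := hev.exists
  have hR : 0 < R := hR0
  have hll := local_lower ψ hψ0 hψdec hdiv γ x (R / 2) (by linarith) m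
  rw [show 2 * (R / 2) = R by ring] at hll
  have hadd := measureReal_inter_add_sdiff (μ := volume) (s := Metric.closedBall x R)
    hopen.measurableSet measure_closedBall_lt_top.ne
  rw [Real.volume_real_closedBall hR.le, Set.inter_comm, Set.sdiff_eq, Set.inter_comm _ (_)ᶜ] at hadd
  have hvol : volume (Metric.closedBall x R) = ENNReal.ofReal (2 * R) := Real.volume_closedBall x R
  have hfin : volume ((tailSet ψ γ m)ᶜ ∩ Metric.closedBall x R) ≠ ⊤ :=
    ne_of_lt ((measure_mono Set.inter_subset_right).trans_lt measure_closedBall_lt_top)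
  rw [hvol, ENNReal.lt_div_iff_mul_lt (Or.inl (by simp [hR])) (Or.inl ENNReal.ofReal_ne_top),
    ← ENNReal.ofReal_mul (by norm_num), ENNReal.ofReal_lt_iff_lt_toReal (by positivity) hfin] at hR1
  rw [Measure.real, Measure.real] at hadd
  rw [Measure.real] at hll
  nlinarith

/-- Points whose inhomogeneous distance is within `ε` below the threshold `ψ`. -/
def shellSet (γ p ε : ℝ) (q : ℕ) : Set ℝ :=
  {α | α ∈ Set.Icc (0:ℝ) 1 ∧ 1 ≤ q ∧
    ∃ a : ℤ, |q * α - γ - a| ≤ 1 / 2 ∧ p - ε ≤ |q * α - γ - a| ∧ |q * α - γ - a| < p}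

lemma shell_measure (γ p ε : ℝ) (hε : 0 ≤ ε) (q : ℕ) :
    volume (shellSet γ p ε q) ≤ ENNReal.ofReal (8 * ε) := by
  rcases Nat.eq_zero_or_pos q with h0 | hq
  · have : shellSet γ p ε q = ∅ := by
      ext α; simp [shellSet, h0]
    rw [this]; simp
  have hqR : (1:ℝ) ≤ q := by exact_mod_cast hq
  have hq0 : (0:ℝ) < q := by linarith
  set I := Finset.Icc ⌊-γ - 1 / 2⌋ ⌊(q:ℝ) - γ + 1 / 2⌋ with hI
  set F : ℤ → Set ℝ := fun a => Set.Icc ((γ + a + p - ε) / q) ((γ + a + p) / q) ∪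
    Set.Icc ((γ + a - p) / q) ((γ + a - p + ε) / q) with hF
  have hcov : shellSet γ p ε q ⊆ ⋃ a ∈ I, F a := by
    rintro α ⟨⟨h0, h1⟩, -, a, ha1, ha2, ha3⟩
    obtain ⟨b1, b2⟩ := abs_le.1 ha1
    refine Set.mem_biUnion (x := a) ?_ ?_
    · refine Finset.mem_coe.2 (Finset.mem_Icc.2 ⟨?_, ?_⟩)
      · rw [← Int.floor_intCast (R := ℝ) a]
        apply Int.floor_le_floor; nlinarith
      · rw [Int.le_floor]; nlinarith
    · rcases le_total 0 ((q:ℝ) * α - γ - a) with h | h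
      · left
        rw [abs_of_nonneg h] at ha2 ha3
        constructor
        · rw [div_le_iff₀ hq0]; linarith
        · rw [le_div_iff₀ hq0]; linarith
      · right
        rw [abs_of_nonpos h] at ha2 ha3
        constructor
        · rw [div_le_iff₀ hq0]; linarith
        · rw [le_div_iff₀ hq0]; linarith
  have hFv : ∀ a, volume (F a) ≤ ENNReal.ofReal (2 * (ε / q)) := by
    intro a
    refine (measure_union_le _ _).trans ?_
    rw [Real.volume_Icc, Real.volume_Icc, two_mul, ENNReal.ofReal_add (by positivity) (by positivity)]
    gcongr <;> apply le_of_eq <;> ring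
  have hcard : (I.card : ℝ) ≤ 4 * q := by
    have := card_Icc_floor_le (-γ - 1 / 2) ((q:ℝ) - γ + 1 / 2) (by linarith)
    linarith
  calc volume (shellSet γ p ε q) ≤ ∑ a ∈ I, volume (F a) :=
        (measure_mono hcov).trans (measure_biUnion_finset_le _ _)
    _ ≤ ∑ a ∈ I, ENNReal.ofReal (2 * (ε / q)) := Finset.sum_le_sum fun a _ => hFv a
    _ = ENNReal.ofReal (I.card * (2 * (ε / q))) := by
        rw [Finset.sum_const, nsmul_eq_mul, ENNReal.ofReal_mul (p := (I.card : ℝ)) (by positivity),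
          ENNReal.ofReal_natCast]
    _ ≤ ENNReal.ofReal (4 * q * (2 * (ε / q))) := by gcongr
    _ = ENNReal.ofReal (8 * ε) := by congr 1; field_simp; ring

theorem stmt18 (ψ : ℕ → ℝ) (hψ0 : ∀ q, 0 ≤ ψ q)
    (hψdec : ∀ q r : ℕ, 1 ≤ q → q ≤ r → ψ r ≤ ψ q)
    (hdiv : ¬ Summable ψ)
    (γ : ℕ → ℝ) (γ₀ : ℝ)
    (hγ : Summable (fun q : ℕ => |γ q - γ₀|)) :
    volume (WSet ψ γ) = 1 := by
  have h1 : ∀ᵐ α : ℝ, ∀ m, α ∈ tailSet ψ γ₀ m := by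
    rw [ae_all_iff]
    intro m
    exact mem_ae_iff.2 (tailSet_compl_null ψ hψ0 hψdec hdiv γ₀ m)
  have h2 : ∀ᵐ α : ℝ, ∀ᶠ q in Filter.atTop, α ∉ shellSet γ₀ (ψ q) |γ q - γ₀| q := by
    refine ae_eventually_notMem (ne_top_of_le_ne_top ?_
      (ENNReal.tsum_le_tsum fun q => shell_measure γ₀ (ψ q) _ (abs_nonneg _) q))
    exact (hγ.mul_left 8).tsum_ofReal_ne_top
  have h3 : WSet ψ γ =ᵐ[volume] Set.Icc (0:ℝ) 1 := by
    filter_upwards [h1, h2] with α ha hb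
    refine propext ⟨fun h => h.1, fun hα => ⟨hα, ?_⟩⟩
    rw [← Nat.frequently_atTop_iff_infinite]
    have hfr : ∃ᶠ q : ℕ in Filter.atTop, 1 ≤ q ∧ ∃ a : ℤ, |q * α - γ₀ - a| < ψ q := by
      rw [Filter.frequently_atTop]
      intro m
      obtain ⟨q, hq, hq1, hh⟩ := ha m
      exact ⟨q, hq, hq1, hh⟩
    refine (hfr.and_eventually hb).mono ?_
    rintro q ⟨⟨hq1, a, hqa⟩, hns⟩
    refine ⟨hq1, ?_⟩
    have hr : |(q * α - γ₀) - round (q * α - γ₀)| < ψ q := (round_le _ a).trans_lt hqa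
    have hlt : |(q * α - γ₀) - round (q * α - γ₀)| < ψ q - |γ q - γ₀| := by
      by_contra hcon
      exact hns ⟨hα, hq1, round (q * α - γ₀), abs_sub_round _, not_lt.1 hcon, hr⟩
    unfold distNearestInt
    refine (round_le _ (round (q * α - γ₀))).trans_lt ?_
    have e : q * α - γ q - round (q * α - γ₀)
      = (q * α - γ₀ - round (q * α - γ₀)) - (γ q - γ₀) := by ring
    rw [e]
    refine (abs_sub _ _).trans_lt ?_
    linarith
  rw [measure_congr h3, Real.volume_Icc]
  simp
end

section
/- Suppose 𝒬 ⊆ ℝ is a dense set with the property that for every sequence σ=(σ_q)_{q≥1} with all σ_q ∈ 𝒬 and every decreasing ψ:ℕ→ℝ≥0 with ∑_{q=1}^∞ ψ(q) = ∞ one has meas(W(ψ,σ)) = 1. Then for every sequence γ=(γ_q)_{q≥1} of real numbers and every decreasing ψ:ℕ→ℝ≥0 with ∑_{q=1}^∞ ψ(q) = ∞, one has meas(W(ψ,γ)) = 1. -/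
open MeasureTheory

theorem stmt19 (𝒬 : Set ℝ) (hdense : Dense 𝒬)
    (h𝒬 : ∀ σ : ℕ → ℝ, (∀ q : ℕ, 1 ≤ q → σ q ∈ 𝒬) →
      ∀ ψ : ℕ → ℝ, (∀ q, 0 ≤ ψ q) → (∀ q r : ℕ, 1 ≤ q → q ≤ r → ψ r ≤ ψ q) →
        ¬ Summable ψ → volume (WSet ψ σ) = 1)
    (γ : ℕ → ℝ) (ψ : ℕ → ℝ) (hψ0 : ∀ q, 0 ≤ ψ q)
    (hψdec : ∀ q r : ℕ, 1 ≤ q → q ≤ r → ψ r ≤ ψ q)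
    (hdiv : ¬ Summable ψ) :
    volume (WSet ψ γ) = 1 := by
  have hpos : ∀ q : ℕ, 1 ≤ q → 0 < ψ q := by
    intro q hq
    by_contra hn
    apply hdiv
    have hz : ψ q = 0 := le_antisymm (not_lt.mp hn) (hψ0 q)
    apply summable_of_ne_finset_zero (s := Finset.range q)
    intro r hr
    have hqr : q ≤ r := by simpa using hr
    exact le_antisymm (hz ▸ hψdec q r hq hqr) (hψ0 r)
  have hex : ∀ q : ℕ, ∃ s : ℝ, 1 ≤ q → s ∈ 𝒬 ∧ |γ q - s| < ψ q / 2 := by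
    intro q
    by_cases hq : 1 ≤ q
    · obtain ⟨s, hs, hd⟩ := hdense.exists_dist_lt (γ q) (half_pos (hpos q hq))
      exact ⟨s, fun _ => ⟨hs, by rwa [Real.dist_eq] at hd⟩⟩
    · exact ⟨0, fun h => absurd h hq⟩
  choose σ hσ using hex
  have hW := h𝒬 σ (fun q hq => (hσ q hq).1) (fun q => ψ q / 2)
    (fun q => div_nonneg (hψ0 q) (by norm_num))
    (fun q r hq hqr => by have := hψdec q r hq hqr; linarith)
    (fun hs => hdiv (by simpa using hs.mul_right 2))
  apply le_antisymm
  · calc volume (WSet ψ γ) ≤ volume (Set.Icc (0:ℝ) 1) := measure_mono (fun x hx => hx.1)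
      _ = 1 := by simp
  · rw [← hW]
    apply measure_mono
    rintro α ⟨hα, hinf⟩
    refine ⟨hα, hinf.mono ?_⟩
    rintro q ⟨hq, hlt⟩
    refine ⟨hq, ?_⟩
    have h1 := (hσ q hq).2
    unfold distNearestInt at *
    have h2 := round_le ((q:ℝ) * α - γ q) (round ((q:ℝ) * α - σ q))
    have h3 := abs_sub ((q:ℝ) * α - σ q - round ((q:ℝ) * α - σ q)) (γ q - σ q)
    have h4 : (q:ℝ) * α - σ q - round ((q:ℝ) * α - σ q) - (γ q - σ q)
      = (q:ℝ) * α - γ q - round ((q:ℝ) * α - σ q) := by ring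
    rw [h4] at h3
    dsimp only at hlt
    linarith
end
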